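/- Let F ⊆ (0, ∞) be a non-empty bounded set with dim_H F > 0. Then dim_A (F^F + F) ≥ min{2 · dim_A F, 1}, where F^F + F = {x^y + z : x, y, z ∈ F}. -/

import Mathlib

open Metric MeasureTheory Filter Set
open scoped ENNReal NNReal Pointwise Topology

noncomputable section

/-- The Assouad dimension of a subset of a (pseudo)metric space: the infimum of all
`α ≥ 0` for which there is `C > 0` such that for every `x ∈ E` and all scales `0 < r < R`,
the set `E ∩ B(x,R)` can be covered by at most `C (R/r)^α` sets of diameter at most `r`. -/
def assouadDim {X : Type*} [PseudoMetricSpace X] (E : Set X) : ℝ :=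
  sInf {α : ℝ | 0 ≤ α ∧ ∃ C : ℝ, 0 < C ∧ ∀ x ∈ E, ∀ r R : ℝ, 0 < r → r < R →
    ∃ 𝒰 : Finset (Set X), (E ∩ closedBall x R ⊆ ⋃ U ∈ 𝒰, U) ∧
      (∀ U ∈ 𝒰, EMetric.diam U ≤ ENNReal.ofReal r) ∧
      ((𝒰.card : ℝ) ≤ C * (R / r) ^ α)}

/-!
Let `x ∈ F` and let `A` be a piece of `F` rescaled by a small `ρ`. To first order in `ρ`,
`x ^ (p + ρ b) + (p + ρ a)` equals `x ^ p + p + ρ (a + t b)` with `t = x ^ p * log x`, so that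
`F^F + F` contains, up to rescaling and a small error, the projections `A + t A` of `A × A`. Since
`dim_A F > s`, the set `A` can be chosen with `2 ^ (s n)` elements at some scale `2 ^ (-n)`, and
since `dim_H F > 0`, the slopes `t` have positive Hausdorff content in some positive dimension.

It remains to show that these projections cannot all obey the packing bound of an exponent
`u < min (2 s, 1)`. Suppose they do. Then conditioning on the second coordinate loses entropy of the
projection at a positive proportion of scales. A telescoping sum over dyadic scales makes the
conditional mutual information between the second coordinate and the projection negligible at some
scale, for a set of slopes which still branches there. A Cauchy-Schwarz count then shows that many
alternating walks, moving between two fibres along level sets of the projections, exist with slopes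
read off a tree of this branching set. The endpoints of these walks produce many signed sums of
slopes inside a single projection. Sums over such a tree contain long chains with comparable gaps,
and `K` equally spaced points violate a packing bound with exponent `u < 1`.
-/

section Entropy

open scoped Classical in
/-- The class of the index `p` for the partition of the index set into level sets of the
label `f`. -/
def labelClass {ι α : Type*} [Fintype ι] (f : ι → α) (p : ι) : Finset ι :=
  Finset.univ.filter fun q => f q = f p

/-- The number of indices carrying the same label as `p`, as a real number. -/
def classCard {ι α : Type*} [Fintype ι] (f : ι → α) (p : ι) : ℝ :=
  (labelClass f p).card

/-- The conditional entropy of the uniform measure on `ι` given the label `f`, multiplied by the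
number of indices. It is large when `f` is coarse. -/
def labelEntropy {ι α : Type*} [Fintype ι] (f : ι → α) : ℝ :=
  ∑ p, Real.log (classCard f p)

variable {ι α β γ : Type*} [Fintype ι]

@[simp]
lemma mem_labelClass {f : ι → α} {p q : ι} : q ∈ labelClass f p ↔ f q = f p := by
  simp [labelClass]

lemma labelClass_congr {f : ι → α} {p q : ι} (h : f p = f q) :
    labelClass f p = labelClass f q := by
  ext; simp [h]

lemma classCard_congr {f : ι → α} {p q : ι} (h : f p = f q) : classCard f p = classCard f q := by
  rw [classCard, classCard, labelClass_congr h]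

lemma classCard_pos (f : ι → α) (p : ι) : 0 < classCard f p :=
  Nat.cast_pos.2 (Finset.card_pos.2 ⟨p, mem_labelClass.2 rfl⟩)

lemma classCard_mono {f : ι → α} {g : ι → β} (h : ∀ p q, f p = f q → g p = g q) (p : ι) :
    classCard f p ≤ classCard g p :=
  Nat.cast_le.2 <| Finset.card_le_card fun q hq =>
    mem_labelClass.2 (h q p (mem_labelClass.1 hq))

lemma labelEntropy_mono {f : ι → α} {g : ι → β} (h : ∀ p q, f p = f q → g p = g q) :
    labelEntropy f ≤ labelEntropy g :=
  Finset.sum_le_sum fun p _ => Real.log_le_log (classCard_pos f p) (classCard_mono h p)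

lemma sum_sum_labelClass_comm (f : ι → α) (M : ι → ι → ℝ) :
    ∑ p, ∑ q ∈ labelClass f p, M p q = ∑ q, ∑ p ∈ labelClass f q, M p q :=
  Finset.sum_comm' fun p q => by simp [eq_comm]

lemma sum_inv_classCard (f : ι → α) (p : ι) :
    ∑ q ∈ labelClass f p, (classCard f q)⁻¹ = 1 := by
  rw [Finset.sum_congr rfl fun q hq => by rw [classCard_congr (mem_labelClass.1 hq)],
    Finset.sum_const, nsmul_eq_mul]
  exact mul_inv_cancel₀ (classCard_pos f p).ne'

lemma sum_inv_classCard_le (f : ι → α) {s : Finset ι} {v : Finset α} (hv : ∀ p ∈ s, f p ∈ v) :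
    ∑ p ∈ s, (classCard f p)⁻¹ ≤ (v.card : ℝ) := by
  classical
  calc ∑ p ∈ s, (classCard f p)⁻¹
      = ∑ y ∈ s.image f, ∑ p ∈ s with f p = y, (classCard f p)⁻¹ :=
        (Finset.sum_fiberwise_of_maps_to (fun _ => Finset.mem_image_of_mem f) _).symm
    _ ≤ ∑ _y ∈ s.image f, (1 : ℝ) := by
        refine Finset.sum_le_sum fun _ hy => ?_
        obtain ⟨p₀, -, rfl⟩ := Finset.mem_image.1 hy
        rw [← sum_inv_classCard f p₀]
        refine Finset.sum_le_sum_of_subset_of_nonneg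
          (fun q hq => mem_labelClass.2 (Finset.mem_filter.1 hq).2)
          fun q _ _ => inv_nonneg.2 (classCard_pos f q).le
    _ = ((s.image f).card : ℝ) := by simp
    _ ≤ v.card := Nat.cast_le.2 (Finset.card_le_card (Finset.image_subset_iff.2 hv))

lemma sum_classCard_div_le (f : ι → α) (g : ι → β) {m : ℝ}
    (hm : ∀ p, ∃ v : Finset β, (v.card : ℝ) ≤ m ∧ ∀ q, f q = f p → g q ∈ v) :
    ∑ p, classCard f p / classCard g p ≤ m * Fintype.card ι := by
  calc ∑ p, classCard f p / classCard g p
      = ∑ p, ∑ _q ∈ labelClass f p, (classCard g p)⁻¹ := by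
        simp only [Finset.sum_const, nsmul_eq_mul, div_eq_mul_inv, classCard]
    _ = ∑ q, ∑ p ∈ labelClass f q, (classCard g p)⁻¹ := sum_sum_labelClass_comm f _
    _ ≤ ∑ _q : ι, m := by
        refine Finset.sum_le_sum fun q _ => ?_
        obtain ⟨v, hcard, hv⟩ := hm q
        exact (sum_inv_classCard_le g fun p hp => hv p (mem_labelClass.1 hp)).trans hcard
    _ = m * Fintype.card ι := by simp [mul_comm]

lemma log_le_div_add_log {y m : ℝ} (hy : 0 < y) (hm : 0 < m) :
    Real.log y ≤ y / m - 1 + Real.log m := by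
  have := Real.log_le_sub_one_of_pos (div_pos hy hm)
  rw [Real.log_div hy.ne' hm.ne'] at this
  linarith

lemma labelEntropy_le_add_log (f : ι → α) (g : ι → β) {m : ℝ} (hm0 : 0 < m)
    (hm : ∀ p, ∃ v : Finset β, (v.card : ℝ) ≤ m ∧ ∀ q, f q = f p → g q ∈ v) :
    labelEntropy f ≤ labelEntropy g + Fintype.card ι * Real.log m := by
  have hlog (p : ι) : Real.log (classCard f p) - Real.log (classCard g p) ≤
      classCard f p / classCard g p / m - 1 + Real.log m := by
    rw [← Real.log_div (classCard_pos f p).ne' (classCard_pos g p).ne']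
    exact log_le_div_add_log (div_pos (classCard_pos f p) (classCard_pos g p)) hm0
  have hsum := Finset.sum_le_sum fun p (_ : p ∈ Finset.univ) => hlog p
  have hratio : (∑ p, classCard f p / classCard g p) / m ≤ Fintype.card ι := by
    rw [div_le_iff₀' hm0]
    exact sum_classCard_div_le f g hm
  simp only [Finset.sum_add_distrib, Finset.sum_sub_distrib, ← Finset.sum_div, Finset.sum_const,
    Finset.card_univ, nsmul_eq_mul, mul_one] at hsum
  unfold labelEntropy
  linarith

/-- The likelihood ratio at `p` between the joint law of the labels `x`, `y` given `z` and the
product of their conditional laws, when `z` is a function of `x` and a function of `y`. -/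
def likelihood (x : ι → α) (y : ι → β) (z : ι → γ) (p : ι) : ℝ :=
  classCard (fun q => (x q, y q)) p * classCard z p / (classCard x p * classCard y p)

lemma likelihood_pos (x : ι → α) (y : ι → β) (z : ι → γ) (p : ι) : 0 < likelihood x y z p :=
  div_pos (mul_pos (classCard_pos _ _) (classCard_pos _ _))
    (mul_pos (classCard_pos _ _) (classCard_pos _ _))

lemma sum_classCard_div_classCard_prod_le {x : ι → α} {y : ι → β} {z : ι → γ}
    (hx : ∀ p q, x p = x q → z p = z q) (hy : ∀ p q, y p = y q → z p = z q) (q : ι) :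
    ∑ p ∈ labelClass y q, classCard x p / classCard (fun r => (x r, y r)) p ≤ classCard z q := by
  classical
  calc ∑ p ∈ labelClass y q, classCard x p / classCard (fun r => (x r, y r)) p
      = ∑ p ∈ labelClass y q, ∑ _r ∈ labelClass x p, (classCard (fun r => (x r, y r)) p)⁻¹ := by
        simp only [Finset.sum_const, nsmul_eq_mul, div_eq_mul_inv, classCard]
    _ = ∑ r ∈ labelClass z q, ∑ p ∈ labelClass y q with x p = x r,
          (classCard (fun r => (x r, y r)) p)⁻¹ := by
        refine Finset.sum_comm' fun p r => ?_
        simp only [mem_labelClass, Finset.mem_filter]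
        exact ⟨fun ⟨hp, hr⟩ => ⟨⟨hp, hr.symm⟩, (hx _ _ hr).trans (hy _ _ hp)⟩,
          fun ⟨⟨hp, hr⟩, _⟩ => ⟨hp, hr.symm⟩⟩
    _ ≤ ∑ _r ∈ labelClass z q, (1 : ℝ) := by
        refine Finset.sum_le_sum fun r _ => ?_
        refine (sum_inv_classCard_le _ (v := {(x r, y q)}) fun p hp => ?_).trans (by simp)
        simp only [Finset.mem_filter, mem_labelClass] at hp
        simp [hp.1, hp.2]
    _ = classCard z q := by simp [classCard]

lemma sum_inv_likelihood_le {x : ι → α} {y : ι → β} {z : ι → γ}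
    (hx : ∀ p q, x p = x q → z p = z q) (hy : ∀ p q, y p = y q → z p = z q) :
    ∑ p, (likelihood x y z p)⁻¹ ≤ Fintype.card ι := by
  have hterm (p : ι) : (likelihood x y z p)⁻¹ = ∑ _q ∈ labelClass y p,
      classCard x p / classCard (fun r => (x r, y r)) p * (classCard z p)⁻¹ := by
    rw [Finset.sum_const, nsmul_eq_mul, likelihood, inv_div]
    change _ = classCard y p * _
    have := (classCard_pos z p).ne'
    have := (classCard_pos (fun r => (x r, y r)) p).ne'
    field_simp
  calc ∑ p, (likelihood x y z p)⁻¹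
      = ∑ q, ∑ p ∈ labelClass y q,
          classCard x p / classCard (fun r => (x r, y r)) p * (classCard z p)⁻¹ := by
        simp_rw [hterm]
        exact sum_sum_labelClass_comm y _
    _ = ∑ q, (∑ p ∈ labelClass y q, classCard x p / classCard (fun r => (x r, y r)) p) *
          (classCard z q)⁻¹ := by
        refine Finset.sum_congr rfl fun q _ => ?_
        rw [Finset.sum_mul]
        refine Finset.sum_congr rfl fun p hp => ?_
        rw [classCard_congr (hy _ _ (mem_labelClass.1 hp))]
    _ ≤ ∑ _q : ι, (1 : ℝ) := by
        refine Finset.sum_le_sum fun q _ => ?_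
        rw [← div_eq_mul_inv, div_le_one (classCard_pos z q)]
        exact sum_classCard_div_classCard_prod_le hx hy q
    _ = Fintype.card ι := by simp

lemma sum_log_likelihood (x : ι → α) (y : ι → β) (z : ι → γ) :
    ∑ p, Real.log (likelihood x y z p) =
      labelEntropy (fun q => (x q, y q)) + labelEntropy z - labelEntropy x - labelEntropy y := by
  unfold labelEntropy
  rw [← Finset.sum_add_distrib, ← Finset.sum_sub_distrib, ← Finset.sum_sub_distrib]
  refine Finset.sum_congr rfl fun p _ => ?_
  have hxy := (classCard_pos (fun q => (x q, y q)) p).ne'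
  have hz := (classCard_pos z p).ne'
  have hx := (classCard_pos x p).ne'
  have hy := (classCard_pos y p).ne'
  rw [likelihood, Real.log_div (mul_ne_zero hxy hz) (mul_ne_zero hx hy), Real.log_mul hxy hz,
    Real.log_mul hx hy]
  ring

lemma one_sub_inv_likelihood_le_log (x : ι → α) (y : ι → β) (z : ι → γ) (p : ι) :
    1 - (likelihood x y z p)⁻¹ ≤ Real.log (likelihood x y z p) :=
  Real.one_sub_inv_le_log_of_pos (likelihood_pos x y z p)

lemma labelEntropy_supermodular {x : ι → α} {y : ι → β} {z : ι → γ}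
    (hx : ∀ p q, x p = x q → z p = z q) (hy : ∀ p q, y p = y q → z p = z q) :
    labelEntropy x + labelEntropy y ≤ labelEntropy (fun q => (x q, y q)) + labelEntropy z := by
  have hlog := Finset.sum_le_sum (s := Finset.univ)
    fun p _ => one_sub_inv_likelihood_le_log x y z p
  rw [sum_log_likelihood, Finset.sum_sub_distrib] at hlog
  simp only [Finset.sum_const, Finset.card_univ, nsmul_eq_mul, mul_one] at hlog
  linarith [sum_inv_likelihood_le hx hy]

lemma mul_card_filter_lt_log_likelihood_le {x : ι → α} {y : ι → β} {z : ι → γ}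
    (hx : ∀ p q, x p = x q → z p = z q) (hy : ∀ p q, y p = y q → z p = z q) (lam : ℝ) :
    lam * ((Finset.univ.filter fun p => lam < Real.log (likelihood x y z p)).card : ℝ) ≤
      labelEntropy (fun q => (x q, y q)) + labelEntropy z - labelEntropy x - labelEntropy y
        + Fintype.card ι := by
  rw [← sum_log_likelihood]
  calc lam * ((Finset.univ.filter fun p => lam < Real.log (likelihood x y z p)).card : ℝ)
      = ∑ p, (if lam < Real.log (likelihood x y z p) then lam else 0) := by
        rw [← Finset.sum_filter, Finset.sum_const, nsmul_eq_mul, mul_comm]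
    _ ≤ ∑ p, (Real.log (likelihood x y z p) + (likelihood x y z p)⁻¹) := by
        refine Finset.sum_le_sum fun p _ => ?_
        have := one_sub_inv_likelihood_le_log x y z p
        have := inv_pos.2 (likelihood_pos x y z p)
        split_ifs <;> linarith
    _ ≤ ∑ p, Real.log (likelihood x y z p) + Fintype.card ι := by
        rw [Finset.sum_add_distrib]
        gcongr
        exact sum_inv_likelihood_le hx hy

/-- The proportion of the `x`-class of `p` on which the integer label `b` differs from `b p` by at
least `2`. The margin `2` makes the underlying real numbers far apart when `b` is obtained by
rounding. -/
def farFraction (x : ι → α) (b : ι → ℤ) (p : ι) : ℝ :=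
  ((labelClass x p).filter fun q => 2 ≤ |b q - b p|).card / classCard x p

lemma card_filter_abs_sub_le_one (x : ι → α) (b : ι → ℤ) (p : ι) :
    (((labelClass x p).filter fun q => |b q - b p| ≤ 1).card : ℝ) =
      classCard x p * (1 - farFraction x b p) := by
  have hsplit := Finset.card_filter_add_card_filter_not (s := labelClass x p)
    fun q => |b q - b p| ≤ 1
  simp only [not_le, ← Int.add_one_le_iff, one_add_one_eq_two] at hsplit
  have hcard : classCard x p = (((labelClass x p).filter fun q => |b q - b p| ≤ 1).card : ℝ) +
      ((labelClass x p).filter fun q => 2 ≤ |b q - b p|).card := by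
    rw [classCard]
    exact_mod_cast hsplit.symm
  rw [farFraction, mul_sub, mul_div_cancel₀ _ (classCard_pos x p).ne']
  linarith

lemma farFraction_nonneg (x : ι → α) (b : ι → ℤ) (p : ι) : 0 ≤ farFraction x b p :=
  div_nonneg (Nat.cast_nonneg _) (classCard_pos x p).le

lemma farFraction_lt_one (x : ι → α) (b : ι → ℤ) (p : ι) : farFraction x b p < 1 := by
  have hnear : (0 : ℝ) < ((labelClass x p).filter fun q => |b q - b p| ≤ 1).card :=
    Nat.cast_pos.2 (Finset.card_pos.2 ⟨p, by simp⟩)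
  rw [card_filter_abs_sub_le_one] at hnear
  linarith [(mul_pos_iff_of_pos_left (classCard_pos x p)).1 hnear]

lemma neg_log_add_inv_le {ν G : ℝ} (hν0 : 0 < ν) (hν1 : ν ≤ 1) (hG : 1 ≤ G) :
    -Real.log (ν + 1 / G) ≤ (2 * Real.log G + 2) * (1 - ν) := by
  have hlogG : 0 ≤ Real.log G := Real.log_nonneg hG
  have hG0 : 0 < 1 / G := by positivity
  rcases le_or_gt (1 / 2) ν with h | h
  · have hmono : Real.log ν ≤ Real.log (ν + 1 / G) := Real.log_le_log hν0 (by linarith)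
    have hlog := Real.one_sub_inv_le_log_of_pos hν0
    have hinv : ν⁻¹ - 1 ≤ 2 * (1 - ν) := by
      have hν2 : ν⁻¹ ≤ 2 := by
        rw [inv_le_comm₀ hν0 two_pos]
        linarith
      calc ν⁻¹ - 1 = ν⁻¹ * (1 - ν) := by field_simp
        _ ≤ 2 * (1 - ν) := by gcongr
    nlinarith [mul_nonneg hlogG (sub_nonneg.2 hν1)]
  · have hmono : Real.log (1 / G) ≤ Real.log (ν + 1 / G) := Real.log_le_log hG0 (by linarith)
    rw [one_div, Real.log_inv, ← one_div] at hmono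
    nlinarith

lemma sum_near_div_le (x : ι → α) (b : ι → ℤ) :
    ∑ p, classCard x p * (1 - farFraction x b p) / classCard (fun q => (x q, b q)) p ≤
      3 * Fintype.card ι := by
  classical
  calc ∑ p, classCard x p * (1 - farFraction x b p) / classCard (fun q => (x q, b q)) p
      = ∑ p, ∑ q ∈ labelClass x p with |b q - b p| ≤ 1,
          (classCard (fun q => (x q, b q)) p)⁻¹ := by
        refine Finset.sum_congr rfl fun p _ => ?_
        rw [← card_filter_abs_sub_le_one, div_eq_mul_inv, Finset.sum_const, nsmul_eq_mul]
    _ = ∑ q, ∑ p ∈ labelClass x q with |b p - b q| ≤ 1,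
          (classCard (fun q => (x q, b q)) p)⁻¹ :=
        Finset.sum_comm' fun p q => by simp [eq_comm, abs_sub_comm]
    _ ≤ ∑ _q : ι, (3 : ℝ) := by
        refine Finset.sum_le_sum fun q _ => (sum_inv_classCard_le _
          (v := {(x q, b q - 1), (x q, b q), (x q, b q + 1)}) fun p hp => ?_).trans ?_
        · obtain ⟨hxp, hbp⟩ := Finset.mem_filter.1 hp
          rw [abs_le] at hbp
          simp only [Finset.mem_insert, Finset.mem_singleton, Prod.mk.injEq,
            mem_labelClass.1 hxp, true_and]
          omega
        · exact_mod_cast Finset.card_le_three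
    _ = 3 * Fintype.card ι := by simp [mul_comm]

lemma log_classCard_sub_le (x : ι → α) (b : ι → ℤ) {G : ℝ} (hG : 1 ≤ G) (p : ι) :
    Real.log (classCard x p) - Real.log (classCard (fun q => (x q, b q)) p) ≤
      (classCard x p * (1 - farFraction x b p) / classCard (fun q => (x q, b q)) p +
        classCard x p / classCard (fun q => (x q, b q)) p / G) / 4 - 1 + Real.log 4 +
        (2 * Real.log G + 2) * farFraction x b p := by
  have hx := classCard_pos x p
  have hxb := classCard_pos (fun q => (x q, b q)) p
  have hfar0 := farFraction_nonneg x b p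
  have hfar1 := farFraction_lt_one x b p
  have hnear : 0 < (1 - farFraction x b p) + 1 / G :=
    add_pos (by linarith) (by positivity)
  have hpenalty := neg_log_add_inv_le (ν := 1 - farFraction x b p) (by linarith) (by linarith) hG
  have hlog := log_le_div_add_log (y := classCard x p * ((1 - farFraction x b p) + 1 / G) /
    classCard (fun q => (x q, b q)) p) (m := 4) (by positivity) (by norm_num)
  rw [Real.log_div (by positivity) hxb.ne', Real.log_mul hx.ne' hnear.ne'] at hlog
  have hexpand : classCard x p * (1 - farFraction x b p + 1 / G) /
      classCard (fun q => (x q, b q)) p =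
      classCard x p * (1 - farFraction x b p) / classCard (fun q => (x q, b q)) p +
      classCard x p / classCard (fun q => (x q, b q)) p / G := by
    field_simp
  rw [hexpand] at hlog
  rw [sub_sub_cancel] at hpenalty
  linarith

lemma labelEntropy_sub_le_sum_farFraction (x : ι → α) (b : ι → ℤ) {G : ℝ} (hG : 1 ≤ G)
    (hm : ∀ p, ∃ v : Finset ℤ, (v.card : ℝ) ≤ G ∧ ∀ q, x q = x p → b q ∈ v) :
    labelEntropy x - labelEntropy (fun q => (x q, b q)) ≤
      Fintype.card ι * Real.log 4 + (2 * Real.log G + 2) * ∑ p, farFraction x b p := by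
  have hsum := Finset.sum_le_sum fun p (_ : p ∈ Finset.univ) => log_classCard_sub_le x b hG p
  have hnear := sum_near_div_le x b
  have hratio : (∑ p, classCard x p / classCard (fun q => (x q, b q)) p) / G ≤
      Fintype.card ι := by
    rw [div_le_iff₀' (by linarith)]
    refine sum_classCard_div_le x (fun q => (x q, b q)) fun p => ?_
    obtain ⟨v, hcard, hv⟩ := hm p
    exact ⟨({x p} : Finset α) ×ˢ v, by simpa using hcard, fun q hq => by simp [hq, hv q hq]⟩
  simp only [Finset.sum_add_distrib, Finset.sum_sub_distrib, ← Finset.sum_div, ← Finset.mul_sum,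
    Finset.sum_const, Finset.card_univ, nsmul_eq_mul, mul_one] at hsum
  unfold labelEntropy
  linarith

end Entropy

section Walk

/-- `Reach r r' B k p s t`: some alternating walk `p → q' → q → ⋯` of `2 * k` steps between
`r ∋ p` and `r'` has its `i`-th forward step in the support of `B (s i)` and its `i`-th backward
step in the reversed support of `B (t i)`. -/
def Reach {ι D : Type*} (r r' : Finset ι) (B : D → ι → ι → ℝ) :
    (k : ℕ) → ι → (Fin k → D) → (Fin k → D) → Prop
  | 0, p, _, _ => p ∈ r
  | k + 1, p, s, t => p ∈ r ∧ ∃ q' ∈ r', ∃ q ∈ r, 0 < B (s 0) p q' ∧ 0 < B (t 0) q q' ∧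
      Reach r r' B k q (Fin.tail s) (Fin.tail t)

open scoped Classical in
/-- The pairs of label sequences followed by some alternating walk from `p`. -/
def reachSet {ι D : Type*} [Fintype D] (r r' : Finset ι) (B : D → ι → ι → ℝ) (k : ℕ) (p : ι) :
    Finset ((Fin k → D) × (Fin k → D)) :=
  Finset.univ.filter fun st => Reach r r' B k p st.1 st.2

/-- Total weight of the alternating walks from a point: iterates of the kernel `M Mᵀ` on `r`
applied to the constant function `1`. -/
def walkMass {ι : Type*} (r r' : Finset ι) (M : ι → ι → ℝ) : ℕ → ι → ℝ
  | 0, _ => 1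
  | k + 1, p => ∑ q ∈ r, (∑ q' ∈ r', M p q' * M q q') * walkMass r r' M k q

variable {ι D : Type*} (r r' : Finset ι)

@[simp]
lemma mem_reachSet [Fintype D] {B : D → ι → ι → ℝ} {k : ℕ} {p : ι}
    {st : (Fin k → D) × (Fin k → D)} :
    st ∈ reachSet r r' B k p ↔ Reach r r' B k p st.1 st.2 := by
  simp [reachSet]

lemma sum_walkMass_succ_mul (M : ι → ι → ℝ) (j l : ℕ) :
    ∑ p ∈ r, walkMass r r' M (j + 1) p * walkMass r r' M l p =
      ∑ p ∈ r, walkMass r r' M j p * walkMass r r' M (l + 1) p := by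
  simp only [walkMass, Finset.sum_mul, Finset.mul_sum]
  rw [Finset.sum_comm]
  exact Finset.sum_congr rfl fun p _ => Finset.sum_congr rfl fun q _ =>
    Finset.sum_congr rfl fun q' _ => by ring

lemma sum_walkMass_mul (M : ι → ι → ℝ) (j l : ℕ) :
    ∑ p ∈ r, walkMass r r' M j p * walkMass r r' M l p =
      ∑ p ∈ r, walkMass r r' M (j + l) p := by
  induction j generalizing l with
  | zero => simp [walkMass]
  | succ j ih => rw [sum_walkMass_succ_mul, ih, Nat.add_right_comm, Nat.add_assoc]

lemma sum_walkMass_one (M : ι → ι → ℝ) :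
    ∑ p ∈ r, walkMass r r' M 1 p = ∑ q' ∈ r', (∑ p ∈ r, M p q') ^ 2 := by
  simp only [walkMass, mul_one, sq, Finset.sum_mul_sum]
  rw [Finset.sum_congr rfl fun p _ => Finset.sum_comm, Finset.sum_comm]

variable {r r'}

lemma le_sum_walkMass_one (hr' : r'.Nonempty) {M : ι → ι → ℝ} {m : ℝ} (hm : 0 ≤ m)
    (hlow : m ≤ ∑ p ∈ r, ∑ q ∈ r', M p q) :
    m ^ 2 / r'.card ≤ ∑ p ∈ r, walkMass r r' M 1 p := by
  rw [div_le_iff₀' (Nat.cast_pos.2 hr'.card_pos), sum_walkMass_one]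
  rw [Finset.sum_comm] at hlow
  exact (pow_le_pow_left₀ hm hlow 2).trans sq_sum_le_card_mul_sum_sq

/- By symmetry of `M Mᵀ` and Cauchy-Schwarz, doubling the length at least squares the average
mass. -/
lemma le_sum_walkMass (hr : r.Nonempty) {M : ι → ι → ℝ} {ρ : ℝ} (hρ : 0 ≤ ρ)
    (hone : r.card * ρ ≤ ∑ p ∈ r, walkMass r r' M 1 p) (a : ℕ) :
    r.card * ρ ^ 2 ^ a ≤ ∑ p ∈ r, walkMass r r' M (2 ^ a) p := by
  induction a with
  | zero => simpa using hone
  | succ a ih =>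
    refine le_of_mul_le_mul_left ?_ (Nat.cast_pos.2 hr.card_pos : (0 : ℝ) < r.card)
    calc (r.card : ℝ) * (r.card * ρ ^ 2 ^ (a + 1)) = (r.card * ρ ^ 2 ^ a) ^ 2 := by ring
      _ ≤ (∑ p ∈ r, walkMass r r' M (2 ^ a) p) ^ 2 := by gcongr
      _ ≤ r.card * ∑ p ∈ r, walkMass r r' M (2 ^ a) p ^ 2 := sq_sum_le_card_mul_sum_sq
      _ = r.card * ∑ p ∈ r, walkMass r r' M (2 ^ (a + 1)) p := by
        simp_rw [sq, sum_walkMass_mul, ← two_mul, ← pow_succ']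

open scoped Classical in
lemma sum_sum_mul_reach_le {B : D → ι → ι → ℝ} (hB : ∀ t p q, 0 ≤ B t p q) {x x' : ℝ}
    (hx : 0 ≤ x) {t₀ t₁ : D} {p : ι} (hp : p ∈ r)
    (hrow : ∑ q' ∈ r', B t₀ p q' ≤ x') (hcol : ∀ q' ∈ r', ∑ q ∈ r, B t₁ q q' ≤ x)
    {k : ℕ} (s t : Fin k → D) :
    ∑ q ∈ r, ∑ q' ∈ r', B t₀ p q' * B t₁ q q' * (if Reach r r' B k q s t then 1 else 0) ≤
      x * x' * if Reach r r' B (k + 1) p (Fin.cons t₀ s) (Fin.cons t₁ t) then 1 else 0 := by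
  split_ifs with hreach
  · calc ∑ q ∈ r, ∑ q' ∈ r', B t₀ p q' * B t₁ q q' * (if Reach r r' B k q s t then 1 else 0)
        ≤ ∑ q ∈ r, ∑ q' ∈ r', B t₀ p q' * B t₁ q q' := by
          refine Finset.sum_le_sum fun q _ => Finset.sum_le_sum fun q' _ => ?_
          refine mul_le_of_le_one_right (mul_nonneg (hB _ _ _) (hB _ _ _)) ?_
          split_ifs <;> norm_num
      _ = ∑ q' ∈ r', B t₀ p q' * ∑ q ∈ r, B t₁ q q' := by
          rw [Finset.sum_comm]
          simp_rw [Finset.mul_sum]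
      _ ≤ ∑ q' ∈ r', B t₀ p q' * x :=
          Finset.sum_le_sum fun q' hq' => mul_le_mul_of_nonneg_left (hcol q' hq') (hB _ _ _)
      _ ≤ x' * x := by
          rw [← Finset.sum_mul]
          exact mul_le_mul_of_nonneg_right hrow hx
      _ = x * x' * 1 := by ring
  · rw [mul_zero]
    refine Finset.sum_nonpos fun q hq => Finset.sum_nonpos fun q' hq' => ?_
    split_ifs with htail
    · by_contra! hpos
      have hfwd : B t₀ p q' ≠ 0 := fun h => by simp [h] at hpos
      have hbwd : B t₁ q q' ≠ 0 := fun h => by simp [h] at hpos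
      exact hreach ⟨hp, q', hq', q, hq, (hB _ _ _).lt_of_ne' hfwd, (hB _ _ _).lt_of_ne' hbwd,
        htail⟩
    · rw [mul_zero]

variable [Fintype D]

open scoped Classical in
lemma card_reachSet_succ (B : D → ι → ι → ℝ) (k : ℕ) (p : ι) :
    ((reachSet r r' B (k + 1) p).card : ℝ) =
      ∑ ω : (D × D) × ((Fin k → D) × (Fin k → D)),
        if Reach r r' B (k + 1) p (Fin.cons ω.1.1 ω.2.1) (Fin.cons ω.1.2 ω.2.2) then 1 else 0 := by
  rw [reachSet, Finset.card_filter, Nat.cast_sum, ← (Equiv.prodProdProdComm D D _ _ |>.trans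
    ((Fin.consEquiv fun _ => D).prodCongr (Fin.consEquiv fun _ => D))).sum_comp]
  simp [Fin.consEquiv]

lemma sum_mul_card_reachSet_le {B : D → ι → ι → ℝ} (hB : ∀ t p q, 0 ≤ B t p q) {x x' : ℝ}
    (hx : 0 ≤ x) (hrow : ∀ t, ∀ p ∈ r, ∑ q' ∈ r', B t p q' ≤ x')
    (hcol : ∀ t, ∀ q' ∈ r', ∑ q ∈ r, B t q q' ≤ x) (k : ℕ) {p : ι} (hp : p ∈ r) :
    ∑ q ∈ r, (∑ q' ∈ r', (∑ t, B t p q') * ∑ t, B t q q') * (reachSet r r' B k q).card ≤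
      x * x' * (reachSet r r' B (k + 1) p).card := by
  classical
  calc ∑ q ∈ r, (∑ q' ∈ r', (∑ t, B t p q') * ∑ t, B t q q') * (reachSet r r' B k q).card
      = ∑ q ∈ r, ∑ q' ∈ r', ∑ ω : (D × D) × ((Fin k → D) × (Fin k → D)),
          B ω.1.1 p q' * B ω.1.2 q q' * (if Reach r r' B k q ω.2.1 ω.2.2 then 1 else 0) := by
        refine Finset.sum_congr rfl fun q _ => ?_
        rw [Finset.sum_mul]
        refine Finset.sum_congr rfl fun q' _ => ?_
        rw [reachSet, Finset.card_filter, Nat.cast_sum, Fintype.sum_mul_sum,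
          ← Fintype.sum_prod_type', Fintype.sum_mul_sum, ← Fintype.sum_prod_type']
        simp
    _ = ∑ ω : (D × D) × ((Fin k → D) × (Fin k → D)), ∑ q ∈ r, ∑ q' ∈ r',
          B ω.1.1 p q' * B ω.1.2 q q' * (if Reach r r' B k q ω.2.1 ω.2.2 then 1 else 0) := by
        rw [Finset.sum_comm]
        simp_rw [Finset.sum_comm (s := r')]
        rw [Finset.sum_comm]
    _ ≤ ∑ ω : (D × D) × ((Fin k → D) × (Fin k → D)), x * x' *
          if Reach r r' B (k + 1) p (Fin.cons ω.1.1 ω.2.1) (Fin.cons ω.1.2 ω.2.2) then 1 else 0 :=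
        Finset.sum_le_sum fun ω _ =>
          sum_sum_mul_reach_le hB hx hp (hrow _ p hp) (hcol _) ω.2.1 ω.2.2
    _ = x * x' * (reachSet r r' B (k + 1) p).card := by
        rw [← Finset.mul_sum, card_reachSet_succ]

lemma walkMass_average_le [Nonempty D] {B : D → ι → ι → ℝ} (hB : ∀ t p q, 0 ≤ B t p q)
    {x x' : ℝ} (hx : 0 ≤ x) (hx' : 0 ≤ x') (hrow : ∀ t, ∀ p ∈ r, ∑ q' ∈ r', B t p q' ≤ x')
    (hcol : ∀ t, ∀ q' ∈ r', ∑ q ∈ r, B t q q' ≤ x) (k : ℕ) {p : ι} (hp : p ∈ r) :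
    walkMass r r' (fun p q => (∑ t, B t p q) / Fintype.card D) k p *
        (Fintype.card D : ℝ) ^ (2 * k) ≤
      (x * x') ^ k * (reachSet r r' B k p).card := by
  induction k generalizing p with
  | zero => simp [walkMass, reachSet, Reach, hp]
  | succ k ih =>
    set N : ℝ := (Fintype.card D : ℝ)
    have hN0 : N ≠ 0 := Nat.cast_ne_zero.2 Fintype.card_ne_zero
    set M : ι → ι → ℝ := fun p q => (∑ t, B t p q) / N with hM
    have hscale (q : ι) : ∑ q' ∈ r', (∑ t, B t p q') * ∑ t, B t q q' =
        (∑ q' ∈ r', M p q' * M q q') * N ^ 2 := by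
      rw [Finset.sum_mul]
      refine Finset.sum_congr rfl fun q' _ => ?_
      simp only [hM]
      field_simp
    have hnonneg (q : ι) : 0 ≤ ∑ q' ∈ r', (∑ t, B t p q') * ∑ t, B t q q' :=
      Finset.sum_nonneg fun q' _ => mul_nonneg
        (Finset.sum_nonneg fun t _ => hB _ _ _) (Finset.sum_nonneg fun t _ => hB _ _ _)
    calc walkMass r r' M (k + 1) p * N ^ (2 * (k + 1))
        = ∑ q ∈ r, (∑ q' ∈ r', (∑ t, B t p q') * ∑ t, B t q q') *
            (walkMass r r' M k q * N ^ (2 * k)) := by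
          rw [walkMass, Finset.sum_mul]
          exact Finset.sum_congr rfl fun q _ => by rw [hscale]; ring
      _ ≤ ∑ q ∈ r, (∑ q' ∈ r', (∑ t, B t p q') * ∑ t, B t q q') *
            ((x * x') ^ k * (reachSet r r' B k q).card) :=
          Finset.sum_le_sum fun q hq => mul_le_mul_of_nonneg_left (ih hq) (hnonneg q)
      _ = (x * x') ^ k * ∑ q ∈ r, (∑ q' ∈ r', (∑ t, B t p q') * ∑ t, B t q q') *
            (reachSet r r' B k q).card := by
          rw [Finset.mul_sum]
          exact Finset.sum_congr rfl fun q _ => by ring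
      _ ≤ (x * x') ^ k * (x * x' * (reachSet r r' B (k + 1) p).card) := by
          gcongr
          exact sum_mul_card_reachSet_le hB hx hrow hcol k hp
      _ = (x * x') ^ (k + 1) * (reachSet r r' B (k + 1) p).card := by ring

lemma exists_le_card_reachSet [Nonempty D] (hr : r.Nonempty) (hr' : r'.Nonempty)
    {B : D → ι → ι → ℝ} (hB : ∀ t p q, 0 ≤ B t p q) {φ c Λ : ℝ} (hφ : 0 < φ) (hc : 0 ≤ c)
    (hΛ : 0 < Λ) (hrow : ∀ t, ∀ p ∈ r, ∑ q' ∈ r', B t p q' ≤ Λ * r'.card / φ)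
    (hcol : ∀ t, ∀ q' ∈ r', ∑ q ∈ r, B t q q' ≤ Λ * r.card / φ)
    (hlow : c * r.card * r'.card / φ ≤ ∑ p ∈ r, ∑ q ∈ r', (∑ t, B t p q) / Fintype.card D)
    (a : ℕ) :
    ∃ p ∈ r, (c / Λ) ^ (2 * 2 ^ a) * (Fintype.card D : ℝ) ^ (2 * 2 ^ a) ≤
      (reachSet r r' B (2 ^ a) p).card := by
  have : (0 : ℝ) < r.card := Nat.cast_pos.2 hr.card_pos
  have : (0 : ℝ) < r'.card := Nat.cast_pos.2 hr'.card_pos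
  set θ : ℝ := r.card * r'.card / φ ^ 2 with hθ
  set N : ℝ := (Fintype.card D : ℝ)
  have hmass : r.card * (c ^ 2 * θ) ^ 2 ^ a ≤
      ∑ p ∈ r, walkMass r r' (fun p q => (∑ t, B t p q) / N) (2 ^ a) p := by
    refine le_sum_walkMass hr (by positivity) (le_of_eq_of_le ?_
      (le_sum_walkMass_one hr' (by positivity) hlow)) a
    rw [hθ]
    field_simp
  obtain ⟨p, hp, hlarge⟩ : ∃ p ∈ r, (c ^ 2 * θ) ^ 2 ^ a ≤
      walkMass r r' (fun p q => (∑ t, B t p q) / N) (2 ^ a) p :=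
    Finset.exists_le_of_sum_le hr (by simpa using hmass)
  refine ⟨p, hp, le_of_mul_le_mul_left ?_ (by positivity : 0 < (Λ ^ 2 * θ) ^ 2 ^ a)⟩
  calc (Λ ^ 2 * θ) ^ 2 ^ a * ((c / Λ) ^ (2 * 2 ^ a) * N ^ (2 * 2 ^ a))
      = (c ^ 2 * θ) ^ 2 ^ a * N ^ (2 * 2 ^ a) := by
        rw [pow_mul (c / Λ), ← mul_assoc, ← mul_pow]
        congr 2
        field_simp
    _ ≤ walkMass r r' (fun p q => (∑ t, B t p q) / N) (2 ^ a) p * N ^ (2 * 2 ^ a) := by gcongr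
    _ ≤ (Λ * r.card / φ * (Λ * r'.card / φ)) ^ 2 ^ a * (reachSet r r' B (2 ^ a) p).card :=
        walkMass_average_le hB (by positivity) (by positivity) hrow hcol _ hp
    _ = (Λ ^ 2 * θ) ^ 2 ^ a * (reachSet r r' B (2 ^ a) p).card := by
        congr 2
        rw [hθ]
        field_simp

end Walk

section Kernel

variable {ι α β γ : Type*} [Fintype ι]

open scoped Classical in
/-- The transition kernel joining far-apart points of a common class of `x`, restricted to points
whose log-likelihood is at most `lam`. -/
def farKernel (x : ι → α) (y : ι → β) (z : ι → γ) (b : ι → ℤ) (lam : ℝ) (p q : ι) : ℝ :=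
  if x q = x p ∧ 2 ≤ |b q - b p| ∧ Real.log (likelihood x y z p) ≤ lam ∧
    Real.log (likelihood x y z q) ≤ lam then (classCard x p)⁻¹ else 0

lemma farKernel_nonneg (x : ι → α) (y : ι → β) (z : ι → γ) (b : ι → ℤ) (lam : ℝ) (p q : ι) :
    0 ≤ farKernel x y z b lam p q := by
  unfold farKernel
  split_ifs
  · exact inv_nonneg.2 (classCard_pos x p).le
  · exact le_rfl

lemma farKernel_symm (x : ι → α) (y : ι → β) (z : ι → γ) (b : ι → ℤ) (lam : ℝ) (p q : ι) :
    farKernel x y z b lam p q = farKernel x y z b lam q p := by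
  unfold farKernel
  by_cases h : x q = x p
  · rw [classCard_congr h, abs_sub_comm]
    simp only [h, true_and]
    congr 2
    exact propext (by tauto)
  · rw [if_neg (by tauto), if_neg (by intro h'; exact h h'.1.symm)]

lemma of_farKernel_ne_zero {x : ι → α} {y : ι → β} {z : ι → γ} {b : ι → ℤ} {lam : ℝ} {p q : ι}
    (h : farKernel x y z b lam p q ≠ 0) :
    x q = x p ∧ 2 ≤ |b q - b p| ∧ Real.log (likelihood x y z p) ≤ lam ∧
      Real.log (likelihood x y z q) ≤ lam := by
  by_contra hcon
  exact h (if_neg hcon)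

lemma farKernel_le_inv_classCard (x : ι → α) (y : ι → β) (z : ι → γ) (b : ι → ℤ) (lam : ℝ)
    (p q : ι) : farKernel x y z b lam p q ≤ (classCard x p)⁻¹ := by
  unfold farKernel
  split_ifs
  · exact le_rfl
  · exact inv_nonneg.2 (classCard_pos x p).le

open scoped Classical in
lemma farFraction_sub_le_sum_farKernel (x : ι → α) (y : ι → β) (z : ι → γ) (b : ι → ℤ) (lam : ℝ)
    (p : ι) :
    farFraction x b p - (if lam < Real.log (likelihood x y z p) then 1 else 0) -
        ∑ q ∈ labelClass x p,
          (classCard x q)⁻¹ * (if lam < Real.log (likelihood x y z q) then 1 else 0) ≤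
      ∑ q, farKernel x y z b lam p q := by
  have hfar : farFraction x b p =
      ∑ q ∈ labelClass x p, (classCard x p)⁻¹ * (if 2 ≤ |b q - b p| then 1 else 0) := by
    rw [farFraction, ← Finset.mul_sum, Finset.sum_boole, div_eq_inv_mul]
  have hbad : (if lam < Real.log (likelihood x y z p) then (1 : ℝ) else 0) =
      ∑ q ∈ labelClass x p,
        (classCard x q)⁻¹ * (if lam < Real.log (likelihood x y z p) then 1 else 0) := by
    rw [← Finset.sum_mul, sum_inv_classCard, one_mul]
  rw [hfar, hbad, ← Finset.sum_sub_distrib, ← Finset.sum_sub_distrib]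
  refine (Finset.sum_le_sum fun q hq => ?_).trans (Finset.sum_le_sum_of_subset_of_nonneg
    (Finset.subset_univ _) fun q _ _ => farKernel_nonneg x y z b lam p q)
  have hxq : x q = x p := mem_labelClass.1 hq
  rw [classCard_congr hxq, ← mul_sub, ← mul_sub]
  have hc : 0 ≤ (classCard x p)⁻¹ := inv_nonneg.2 (classCard_pos x p).le
  by_cases h : 2 ≤ |b q - b p| ∧ Real.log (likelihood x y z p) ≤ lam ∧
      Real.log (likelihood x y z q) ≤ lam
  · have hK : farKernel x y z b lam p q = (classCard x p)⁻¹ := if_pos ⟨hxq, h⟩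
    simp [hK, h.1, not_lt.2 h.2.1, not_lt.2 h.2.2]
  · refine (mul_nonpos_of_nonneg_of_nonpos hc ?_).trans (farKernel_nonneg x y z b lam p q)
    simp only [not_and_or, not_le] at h
    split_ifs <;> grind

open scoped Classical in
lemma sum_farKernel_ge (x : ι → α) (y : ι → β) (z : ι → γ) (b : ι → ℤ) (lam : ℝ) :
    ∑ p, farFraction x b p -
      2 * ((Finset.univ.filter fun p => lam < Real.log (likelihood x y z p)).card : ℝ) ≤
      ∑ p, ∑ q, farKernel x y z b lam p q := by
  have hsum := Finset.sum_le_sum fun p (_ : p ∈ Finset.univ) =>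
    farFraction_sub_le_sum_farKernel x y z b lam p
  have hswap : ∑ p, ∑ q ∈ labelClass x p,
      (classCard x q)⁻¹ * (if lam < Real.log (likelihood x y z q) then 1 else 0) =
      ∑ q, if lam < Real.log (likelihood x y z q) then (1 : ℝ) else 0 := by
    rw [sum_sum_labelClass_comm]
    refine Finset.sum_congr rfl fun q _ => ?_
    rw [Finset.sum_const, nsmul_eq_mul, ← mul_assoc]
    exact (congrArg (· * _) (mul_inv_cancel₀ (classCard_pos x q).ne')).trans (one_mul _)
  rw [Finset.sum_sub_distrib, Finset.sum_sub_distrib, hswap, Finset.sum_boole] at hsum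
  linarith

lemma sum_farKernel_row_le {x : ι → α} {y : ι → β} {z : ι → γ} (b : ι → ℤ) (lam : ℝ)
    (hx : ∀ p q, x p = x q → z p = z q) (p p' : ι) :
    ∑ q ∈ labelClass y p', farKernel x y z b lam p q ≤
      Real.exp lam * classCard y p' / classCard z p := by
  classical
  by_cases hzero : ∀ q ∈ labelClass y p', farKernel x y z b lam p q = 0
  · rw [Finset.sum_eq_zero hzero]
    exact div_nonneg (mul_nonneg (Real.exp_pos _).le (classCard_pos y p').le)
      (classCard_pos z p).le
  push Not at hzero
  obtain ⟨q₀, hq₀, hK⟩ := hzero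
  rw [mem_labelClass] at hq₀
  obtain ⟨hxq, -, -, hlog⟩ := of_farKernel_ne_zero hK
  have hlik : likelihood x y z q₀ ≤ Real.exp lam :=
    (Real.log_le_iff_le_exp (likelihood_pos x y z q₀)).1 hlog
  have hxpos := classCard_pos x q₀
  have hypos := classCard_pos y q₀
  have hzpos := classCard_pos z q₀
  calc ∑ q ∈ labelClass y p', farKernel x y z b lam p q
      ≤ ∑ q ∈ labelClass (fun q => (x q, y q)) q₀, farKernel x y z b lam p q := by
        refine (Finset.sum_subset_zero_on_sdiff (Finset.filter_subset (fun q => x q = x p) _)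
          (fun q hq => ?_) fun _ _ => rfl).ge.trans
          (Finset.sum_le_sum_of_subset_of_nonneg (fun q hq => ?_)
            fun q _ _ => farKernel_nonneg x y z b lam p q)
        · by_contra hne
          simp only [Finset.mem_sdiff, Finset.mem_filter, not_and] at hq
          exact hq.2 hq.1 (of_farKernel_ne_zero hne).1
        · obtain ⟨hyq, hxq'⟩ := Finset.mem_filter.1 hq
          exact mem_labelClass.2 (Prod.ext (hxq'.trans hxq.symm)
            ((mem_labelClass.1 hyq).trans hq₀.symm))
    _ ≤ ∑ _q ∈ labelClass (fun q => (x q, y q)) q₀, (classCard x p)⁻¹ :=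
        Finset.sum_le_sum fun q _ => farKernel_le_inv_classCard x y z b lam p q
    _ = likelihood x y z q₀ * classCard y q₀ / classCard z q₀ := by
        rw [Finset.sum_const, nsmul_eq_mul, ← classCard_congr hxq, likelihood]
        unfold classCard at *
        field_simp
    _ ≤ Real.exp lam * classCard y q₀ / classCard z q₀ := by gcongr
    _ = Real.exp lam * classCard y p' / classCard z p := by
        rw [classCard_congr hq₀, classCard_congr (hx _ _ hxq)]

lemma sum_inv_classCard_mul_sum (y : ι → β) (f : ι → ℝ) :
    ∑ p, (classCard y p)⁻¹ * ∑ q ∈ labelClass y p, f q = ∑ q, f q := by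
  simp only [Finset.mul_sum]
  rw [sum_sum_labelClass_comm]
  simp only [← Finset.sum_mul, sum_inv_classCard, one_mul]

lemma exists_block_mass [Nonempty ι] {y : ι → β} {z : ι → γ} {M : ι → ι → ℝ}
    (hy : ∀ p q, y p = y q → z p = z q) (hM : ∀ p q, z p ≠ z q → M p q = 0) {c : ℝ}
    (hsum : c * Fintype.card ι ≤ ∑ p, ∑ q, M p q) :
    ∃ p p', z p = z p' ∧ c * classCard y p * classCard y p' / classCard z p ≤
      ∑ q ∈ labelClass y p, ∑ q' ∈ labelClass y p', M q q' := by
  set block : ι → ι → ℝ := fun p p' => ∑ q ∈ labelClass y p, ∑ q' ∈ labelClass y p', M q q'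
  obtain ⟨p, -, hp⟩ : ∃ p ∈ Finset.univ, c ≤
      (classCard y p)⁻¹ * ∑ p', (classCard y p')⁻¹ * block p p' := by
    refine Finset.exists_le_of_sum_le Finset.univ_nonempty ?_
    calc ∑ _p : ι, c = c * Fintype.card ι := by simp [mul_comm]
      _ ≤ ∑ q, ∑ q', M q q' := hsum
      _ = ∑ p, (classCard y p)⁻¹ * ∑ q ∈ labelClass y p, ∑ q', M q q' :=
          (sum_inv_classCard_mul_sum y _).symm
      _ = _ := by
          refine Finset.sum_congr rfl fun p _ => ?_
          rw [Finset.sum_comm, ← sum_inv_classCard_mul_sum y]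
          simp only [block, Finset.sum_comm (s := labelClass y p)]
  have hvanish : ∀ p' ∉ labelClass z p, block p p' = 0 := fun p' hp' =>
    Finset.sum_eq_zero fun q hq => Finset.sum_eq_zero fun q' hq' => hM _ _ fun h =>
      hp' <| mem_labelClass.2 <| by
        rw [← hy _ _ (mem_labelClass.1 hq), h, hy _ _ (mem_labelClass.1 hq')]
  obtain ⟨p', hp', hle⟩ : ∃ p' ∈ labelClass z p, c / classCard z p ≤
      (classCard y p)⁻¹ * ((classCard y p')⁻¹ * block p p') := by
    refine Finset.exists_le_of_sum_le ⟨p, mem_labelClass.2 rfl⟩ ?_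
    rw [Finset.sum_const, nsmul_eq_mul, ← Finset.mul_sum,
      Finset.sum_subset (Finset.subset_univ _) fun p' _ hp' => by rw [hvanish p' hp', mul_zero]]
    exact (mul_div_cancel₀ c (classCard_pos z p).ne').trans_le hp
  refine ⟨p, p', (mem_labelClass.1 hp').symm, ?_⟩
  have hyp := classCard_pos y p
  have hyp' := classCard_pos y p'
  calc c * classCard y p * classCard y p' / classCard z p
      = c / classCard z p * (classCard y p * classCard y p') := by ring
    _ ≤ (classCard y p)⁻¹ * ((classCard y p')⁻¹ * block p p') *
          (classCard y p * classCard y p') := by gcongr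
    _ = block p p' := by field_simp

variable {D : Type*} [Fintype D] {x : D → ι → α} {y : ι → β} {z : ι → γ} {b : ι → ℤ}

lemma le_sum_sum_farKernel (hx : ∀ t p q, x t p = x t q → z p = z q)
    (hy : ∀ p q, y p = y q → z p = z q) {c I lam : ℝ} (hlam : 0 < lam)
    (hIlam : 8 * (I + 1) ≤ c * lam)
    (hfar : c / 2 * Fintype.card ι * Fintype.card D ≤ ∑ t, ∑ p, farFraction (x t) b p)
    (hdef : ∑ t, (labelEntropy (fun q => (x t q, y q)) + labelEntropy z - labelEntropy (x t) -
      labelEntropy y) ≤ I * Fintype.card ι * Fintype.card D) :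
    c / 4 * Fintype.card ι * Fintype.card D ≤
      ∑ t, ∑ p, ∑ q, farKernel (x t) y z b lam p q := by
  classical
  have hbad : lam * ∑ t, ((Finset.univ.filter fun p =>
      lam < Real.log (likelihood (x t) y z p)).card : ℝ) ≤
      (I + 1) * (Fintype.card ι * Fintype.card D) := by
    rw [Finset.mul_sum]
    refine (Finset.sum_le_sum fun t _ =>
      mul_card_filter_lt_log_likelihood_le (hx t) hy lam).trans ?_
    rw [Finset.sum_add_distrib, Finset.sum_const, Finset.card_univ, nsmul_eq_mul]
    linarith
  have hbad' : 2 * ∑ t, ((Finset.univ.filter fun p =>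
      lam < Real.log (likelihood (x t) y z p)).card : ℝ) ≤
      c / 4 * Fintype.card ι * Fintype.card D := by
    refine le_of_mul_le_mul_left ?_ hlam
    have := mul_le_mul_of_nonneg_right hIlam
      (by positivity : (0 : ℝ) ≤ Fintype.card ι * Fintype.card D)
    linarith
  have hkernel := Finset.sum_le_sum fun t (_ : t ∈ Finset.univ) =>
    sum_farKernel_ge (x t) y z b lam
  rw [Finset.sum_sub_distrib, ← Finset.mul_sum] at hkernel
  linarith

lemma exists_classes_many_reach [Nonempty ι] [Nonempty D]
    (hx : ∀ t p q, x t p = x t q → z p = z q) (hy : ∀ p q, y p = y q → z p = z q)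
    {c I lam : ℝ} (hc : 0 < c) (hlam : 0 < lam) (hIlam : 8 * (I + 1) ≤ c * lam)
    (hfar : c / 2 * Fintype.card ι * Fintype.card D ≤ ∑ t, ∑ p, farFraction (x t) b p)
    (hdef : ∑ t, (labelEntropy (fun q => (x t q, y q)) + labelEntropy z - labelEntropy (x t) -
      labelEntropy y) ≤ I * Fintype.card ι * Fintype.card D) (a : ℕ) :
    ∃ p₀ p₁, 2 ≤ |b p₁ - b p₀| ∧ ∃ p, y p = y p₀ ∧
      (c / 4 / Real.exp lam) ^ (2 * 2 ^ a) * (Fintype.card D : ℝ) ^ (2 * 2 ^ a) ≤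
      (reachSet (labelClass y p₀) (labelClass y p₁)
        (fun t => farKernel (x t) y z b lam) (2 ^ a) p).card := by
  have hD : (0 : ℝ) < Fintype.card D := Nat.cast_pos.2 Fintype.card_pos
  obtain ⟨p, p', hzz, hblock⟩ := exists_block_mass
    (M := fun p q => (∑ t, farKernel (x t) y z b lam p q) / Fintype.card D) hy (c := c / 4)
    (fun p q hpq => by
      have hzero (t : D) : farKernel (x t) y z b lam p q = 0 :=
        if_neg fun h => hpq (hx t _ _ h.1).symm
      simp only [hzero, Finset.sum_const_zero, zero_div])
    (by
      simp only [← Finset.sum_div]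
      rw [le_div_iff₀ hD]
      refine (le_sum_sum_farKernel hx hy hlam hIlam hfar hdef).trans_eq ?_
      rw [Finset.sum_comm]
      exact Finset.sum_congr rfl fun p _ => Finset.sum_comm)
  have hpos : 0 < c / 4 * classCard y p * classCard y p' / classCard z p := by
    have := classCard_pos y p
    have := classCard_pos y p'
    have := classCard_pos z p
    positivity
  obtain ⟨t, q, hq, q', hq', hfar⟩ : ∃ t, ∃ q ∈ labelClass y p, ∃ q' ∈ labelClass y p',
      farKernel (x t) y z b lam q q' ≠ 0 := by
    by_contra! hcon
    refine (hpos.trans_le hblock).ne' (Finset.sum_eq_zero fun q hq =>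
      Finset.sum_eq_zero fun q' hq' => ?_)
    rw [Finset.sum_eq_zero fun t _ => hcon t q hq q' hq', zero_div]
  have hz {v w : ι} (hv : v ∈ labelClass y w) (hw : z w = z p) : classCard z v = classCard z p :=
    classCard_congr ((hy _ _ (mem_labelClass.1 hv)).trans hw)
  rw [mem_labelClass] at hq hq'
  refine ⟨q, q', (of_farKernel_ne_zero hfar).2.1, ?_⟩
  obtain ⟨v, hv, hval⟩ := exists_le_card_reachSet (r := labelClass y q) (r' := labelClass y q')
    ⟨q, mem_labelClass.2 rfl⟩ ⟨q', mem_labelClass.2 rfl⟩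
    (fun t p q => farKernel_nonneg (x t) y z b lam p q) (φ := classCard z p) (c := c / 4)
    (Λ := Real.exp lam) (classCard_pos z p) (by linarith) (Real.exp_pos _)
    (fun t v hv => hz hv (hy _ _ hq) ▸ sum_farKernel_row_le b lam (hx t) v q')
    (fun t v hv => by
      simp only [farKernel_symm (x t) y z b lam _ v]
      exact hz hv ((hy _ _ hq').trans hzz.symm) ▸ sum_farKernel_row_le b lam (hx t) v q)
    (by rwa [labelClass_congr hq, labelClass_congr hq']) a
  exact ⟨v, mem_labelClass.1 hv, hval⟩

end Kernel

section SpreadTree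

/-- The subtree of a binary tree of integers determined by its first bit. -/
def subtree {m : ℕ} (u : (Fin (m + 1) → Bool) → ℤ) (b : Bool) : (Fin m → Bool) → ℤ :=
  fun w => u (Fin.cons b w)

/-- The binary tree of integers with prescribed subtrees. -/
def joinTree {m : ℕ} (u : Bool → (Fin m → Bool) → ℤ) : (Fin (m + 1) → Bool) → ℤ :=
  fun w => u (w 0) (Fin.tail w)

/-- A binary tree branches if one of its two subtrees lies to the right of the other, at a distance
comparable with `2 ^ j * 2 ^ (L * m)` for some `j ≤ L`. The requirement `32 * κ ≤ 2 ^ j` makes this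
distance dominate `κ` errors of the size of a subtree. -/
def Branches (κ L : ℕ) {m : ℕ} (u : (Fin (m + 1) → Bool) → ℤ) : Prop :=
  ∃ j ≤ L, 32 * κ ≤ 2 ^ j ∧ ∃ b : Bool, ∀ x y,
    2 ^ j * 2 ^ (L * m) ≤ subtree u b y - subtree u (!b) x ∧
    subtree u b y - subtree u (!b) x ≤ 8 * (2 ^ j * 2 ^ (L * m))

/-- A spread tree of depth `m` and rank `n`: at each level, the tree either branches or has two
equal subtrees, and branching happens exactly `n` times along each path. -/
def IsSpreadTree (κ L : ℕ) : (m n : ℕ) → ((Fin m → Bool) → ℤ) → Prop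
  | 0, n, _ => n = 0
  | m + 1, n, u => (∀ v w, |u v - u w| ≤ 2 ^ (L * (m + 1))) ∧
      ((subtree u false = subtree u true ∧ IsSpreadTree κ L m n (subtree u true)) ∨
        ∃ n', n = n' + 1 ∧ (∀ b, IsSpreadTree κ L m n' (subtree u b)) ∧ Branches κ L u)

lemma IsSpreadTree.abs_sub_le {κ L m n : ℕ} {u : (Fin m → Bool) → ℤ}
    (h : IsSpreadTree κ L m n u) (v w : Fin m → Bool) : |u v - u w| ≤ 2 ^ (L * m) := by
  cases m with
  | zero => simp [Subsingleton.elim v w]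
  | succ m => exact h.1 v w

lemma Branches.neg {κ L m : ℕ} {u : (Fin (m + 1) → Bool) → ℤ} (h : Branches κ L u) :
    Branches κ L fun w => -u w := by
  obtain ⟨j, hj, hκ, b, hb⟩ := h
  refine ⟨j, hj, hκ, !b, fun x y => ?_⟩
  have := hb y x
  simp only [subtree, Bool.not_not] at this ⊢
  constructor <;> linarith [this.1, this.2]

lemma IsSpreadTree.neg {κ L m n : ℕ} {u : (Fin m → Bool) → ℤ}
    (h : IsSpreadTree κ L m n u) : IsSpreadTree κ L m n (fun w => -u w) := by
  induction m generalizing n with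
  | zero => exact h
  | succ m ih =>
    refine ⟨fun v w => by simpa only [neg_sub_neg] using h.1 w v, ?_⟩
    rcases h.2 with ⟨heq, htree⟩ | ⟨n', hn, htree, hbr⟩
    · exact Or.inl ⟨funext fun w => congrArg Neg.neg (congrFun heq w), ih htree⟩
    · exact Or.inr ⟨n', hn, fun b => ih (htree b), hbr.neg⟩

lemma isSpreadTree_const (κ L m : ℕ) (z : ℤ) : IsSpreadTree κ L m 0 (fun _ => z) := by
  induction m with
  | zero => rfl
  | succ m ih => exact ⟨fun v w => by simp, Or.inl ⟨rfl, ih⟩⟩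

lemma abs_sub_le_of_ediv_eq {M z z' : ℤ} (hM : 0 < M) (h : z / M = z' / M) : |z - z'| ≤ M := by
  have hz := Int.emod_add_mul_ediv z M
  have hz' := Int.emod_add_mul_ediv z' M
  rw [← h] at hz'
  rw [abs_le]
  constructor <;> linarith [Int.emod_nonneg z hM.ne', Int.emod_nonneg z' hM.ne',
    Int.emod_lt_of_pos z hM, Int.emod_lt_of_pos z' hM]

lemma ediv_mem_Ico {M N c z : ℤ} (hM : 0 ≤ M) (hN : 0 < N) (h : z / (M * N) = c) :
    z / M ∈ Finset.Ico (c * N) (c * N + N) := by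
  rw [← Int.ediv_ediv_of_nonneg hM] at h
  have hz := Int.emod_add_mul_ediv (z / M) N
  rw [h] at hz
  rw [Finset.mem_Ico]
  constructor <;> linarith [Int.emod_nonneg (z / M) hN.ne', Int.emod_lt_of_pos (z / M) hN]

lemma exists_pow_le_and_le_mul_pow {κ L D : ℕ} (hκ : 1 ≤ κ) (hκD : 64 * κ ≤ D)
    (hDL : D < 2 ^ L) : ∃ j ≤ L, 32 * κ ≤ 2 ^ j ∧ 2 ^ j ≤ D ∧ D + 2 ≤ 8 * 2 ^ j := by
  have hle : 2 ^ Nat.log 2 D ≤ D := Nat.pow_log_le_self 2 (by omega)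
  have hlt : D < 2 ^ (Nat.log 2 D + 1) := Nat.lt_pow_succ_log_self (by norm_num) D
  rw [pow_succ] at hlt
  exact ⟨Nat.log 2 D, ((Nat.pow_lt_pow_iff_right (by norm_num)).1 (hle.trans_lt hDL)).le,
    by omega, hle, by omega⟩

lemma branches_joinTree {κ L m : ℕ} (hκ : 1 ≤ κ) {y : Bool → ℤ}
    (hfar : 64 * κ + 1 ≤ y true - y false) (hnear : y true - y false ≤ 2 ^ L)
    {u : Bool → (Fin m → Bool) → ℤ} (hu : ∀ b w, u b w / 2 ^ (L * m) = y b) :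
    Branches κ L (joinTree u) := by
  obtain ⟨D, hD⟩ := Int.eq_ofNat_of_zero_le (show 0 ≤ y true - y false - 1 by omega)
  obtain ⟨j, hjL, hκj, hjD, hDj⟩ := exists_pow_le_and_le_mul_pow (L := L) (D := D) hκ (by omega)
    (by zify; omega)
  refine ⟨j, hjL, hκj, true, fun x w => ?_⟩
  change 2 ^ j * 2 ^ (L * m) ≤ u true w - u false x ∧
    u true w - u false x ≤ 8 * (2 ^ j * 2 ^ (L * m))
  set M : ℤ := 2 ^ (L * m)
  have hM : 0 < M := by positivity
  have hdecomp (b : Bool) (v : Fin m → Bool) : u b v % M + M * y b = u b v := by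
    rw [← hu b v]; exact Int.emod_add_mul_ediv _ _
  have htrue : y true = y false + D + 1 := by
    have : y true - y false - 1 = D := hD
    linarith
  have hlow := mul_le_mul_of_nonneg_right (Int.ofNat_le.2 hjD) hM.le
  have hupp := mul_le_mul_of_nonneg_right (Int.ofNat_le.2 hDj) hM.le
  push_cast at hlow hupp
  have hx := hdecomp false x
  have hw := hdecomp true w
  rw [htrue] at hw
  constructor <;> nlinarith [Int.emod_nonneg (u false x) hM.ne',
    Int.emod_nonneg (u true w) hM.ne', Int.emod_lt_of_pos (u false x) hM,
    Int.emod_lt_of_pos (u true w) hM]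

lemma exists_far_or_exists_large {Y : Finset ℤ} {f : ℤ → ℕ} {T Q : ℕ} (hQ : 1 ≤ Q)
    (hsum : 2 * (Q * (Y.card * T)) < ∑ y ∈ Y, f y) :
    (∃ y ∈ Y, ∃ y' ∈ Y, T < f y ∧ T < f y' ∧ (Q : ℤ) ≤ y' - y) ∨ ∃ y ∈ Y, Y.card * T < f y := by
  by_contra! ⟨hclose, hsmall⟩
  set fat := Y.filter fun y => T < f y
  have hfat : fat.card ≤ Q := by
    rcases fat.eq_empty_or_nonempty with hempty | hne
    · simp [hempty]
    · refine (Finset.card_le_card (t := Finset.Ico (fat.min' hne) (fat.min' hne + Q))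
        fun y hy => ?_).trans (by simp)
      obtain ⟨hyY, hyT⟩ := Finset.mem_filter.1 hy
      obtain ⟨hminY, hminT⟩ := Finset.mem_filter.1 (fat.min'_mem hne)
      rw [Finset.mem_Ico]
      have := hclose _ hminY y hyY hminT hyT
      exact ⟨fat.min'_le y hy, by linarith⟩
  have hfatsum : ∑ y ∈ fat, f y ≤ Q * (Y.card * T) :=
    (Finset.sum_le_card_nsmul _ _ _ fun y hy => hsmall y (Finset.mem_filter.1 hy).1).trans
      (Nat.mul_le_mul_right _ hfat)
  have hthin : ∑ y ∈ Y with ¬ T < f y, f y ≤ Y.card * T :=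
    (Finset.sum_le_card_nsmul _ _ _ fun y hy => not_lt.1 (Finset.mem_filter.1 hy).2).trans
      (Nat.mul_le_mul_right _ (Finset.card_filter_le _ _))
  have hle : Y.card * T ≤ Q * (Y.card * T) := Nat.le_mul_of_pos_left _ hQ
  have hsplit : ∑ y ∈ fat, f y + ∑ y ∈ Y with ¬ T < f y, f y = ∑ y ∈ Y, f y :=
    Finset.sum_filter_add_sum_filter_not Y (fun y => T < f y) f
  rw [← hsplit, two_mul] at hsum
  omega

lemma exists_far_fibers_or_exists_large_fiber (κ L m n : ℕ) {W : Finset ℤ} {c : ℤ}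
    (hW : ∀ z ∈ W, z / 2 ^ (L * (m + 1)) = c)
    (hcard : (2 * (64 * κ + 1)) ^ (m + 1) * 2 ^ (L * (n + 1)) < W.card) :
    (∃ y : Bool → ℤ, 64 * κ + 1 ≤ y true - y false ∧ y true - y false ≤ 2 ^ L ∧ ∀ b,
      (2 * (64 * κ + 1)) ^ m * 2 ^ (L * n) < (W.filter fun z => z / 2 ^ (L * m) = y b).card) ∨
    ∃ y, (2 * (64 * κ + 1)) ^ m * 2 ^ (L * (n + 1)) <
      (W.filter fun z => z / 2 ^ (L * m) = y).card := by
  set Y := Finset.Ico (c * 2 ^ L) (c * 2 ^ L + 2 ^ L) with hY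
  have hYcard : Y.card = 2 ^ L := by
    rw [hY, Int.card_Ico, add_sub_cancel_left]
    exact_mod_cast Int.toNat_natCast (2 ^ L)
  have hfiber : ∀ z ∈ W, z / 2 ^ (L * m) ∈ Y := fun z hz =>
    ediv_mem_Ico (by positivity) (by positivity) (by rw [← pow_add, ← Nat.mul_succ]; exact hW z hz)
  rw [Finset.card_eq_sum_card_fiberwise hfiber] at hcard
  rcases exists_far_or_exists_large (T := (2 * (64 * κ + 1)) ^ m * 2 ^ (L * n))
    (Q := 64 * κ + 1) (by omega) (lt_of_eq_of_lt (by rw [hYcard]; ring) hcard) with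
    ⟨y, hy, y', hy', hyT, hyT', hfar⟩ | ⟨y, -, hyT⟩
  · refine Or.inl ⟨fun b => bif b then y' else y, by exact_mod_cast hfar, ?_,
      Bool.rec hyT hyT'⟩
    have := (Finset.mem_Ico.1 hy).1
    have := (Finset.mem_Ico.1 hy').2
    simp only [cond_true, cond_false]
    linarith
  · exact Or.inr ⟨y, lt_of_eq_of_lt (by rw [hYcard]; ring) hyT⟩

lemma exists_isSpreadTree {κ : ℕ} (hκ : 1 ≤ κ) (L m n : ℕ) (W : Finset ℤ) (c : ℤ)
    (hW : ∀ z ∈ W, z / 2 ^ (L * m) = c)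
    (hcard : (2 * (64 * κ + 1)) ^ m * 2 ^ (L * n) < W.card) :
    ∃ u : (Fin m → Bool) → ℤ, IsSpreadTree κ L m n u ∧ ∀ w, u w ∈ W := by
  induction m generalizing n W c with
  | zero =>
    have hle : W.card ≤ 1 := Finset.card_le_one.2 fun a ha b hb => by
      simpa using (hW a ha).trans (hW b hb).symm
    have := Nat.one_le_two_pow (n := L * n)
    simp only [pow_zero, one_mul] at hcard
    omega
  | succ m ih =>
    rcases n with _ | n
    · obtain ⟨z, hz⟩ := Finset.card_pos.1 ((Nat.zero_le _).trans_lt hcard)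
      exact ⟨fun _ => z, isSpreadTree_const κ L _ z, fun _ => hz⟩
    have hdiam : ∀ z ∈ W, ∀ z' ∈ W, |z - z'| ≤ 2 ^ (L * (m + 1)) := fun z hz z' hz' =>
      abs_sub_le_of_ediv_eq (by positivity) ((hW z hz).trans (hW z' hz').symm)
    have hih (y : ℤ) (n : ℕ) (hy : (2 * (64 * κ + 1)) ^ m * 2 ^ (L * n) <
        (W.filter fun z => z / 2 ^ (L * m) = y).card) :=
      ih n _ y (fun z hz => (Finset.mem_filter.1 hz).2) hy
    rcases exists_far_fibers_or_exists_large_fiber κ L m n hW hcard with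
      ⟨y, hfar, hnear, hlarge⟩ | ⟨y, hlarge⟩
    · choose u hu huW using fun b => hih (y b) n (hlarge b)
      have hmem (b : Bool) (w : Fin m → Bool) := Finset.mem_filter.1 (huW b w)
      exact ⟨joinTree u, ⟨fun v w => hdiam _ (hmem _ _).1 _ (hmem _ _).1,
        Or.inr ⟨n, rfl, hu, branches_joinTree hκ hfar hnear fun b w => (hmem b w).2⟩⟩,
        fun w => (hmem _ _).1⟩
    · obtain ⟨u, hu, huW⟩ := hih y (n + 1) hlarge
      have hmem (w : Fin m → Bool) := (Finset.mem_filter.1 (huW w)).1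
      exact ⟨joinTree fun _ => u, ⟨fun v w => hdiam _ (hmem _) _ (hmem _), Or.inl ⟨rfl, hu⟩⟩,
        fun w => hmem _⟩

end SpreadTree

section ChainFree

/-- A set of integers is chain-free if it contains no `K + 1` terms in increasing order whose
consecutive gaps all lie in an interval `[D / 2, 9 * D]` with `32 * κ ≤ D`. -/
def ChainFree (κ K : ℕ) (P : Set ℤ) : Prop :=
  ∀ (D : ℤ) (x : ℕ → ℤ), 32 * (κ : ℤ) ≤ D → (∀ a ≤ K, x a ∈ P) →
    (∀ a < K, D ≤ 2 * (x (a + 1) - x a) ∧ x (a + 1) - x a ≤ 9 * D) → False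

variable {J : Type*}

/-- The choice of bits which has the value `h i` at the first `a` points `i` of the list `e`, and
the opposite value elsewhere. -/
def switchedBits [DecidableEq J] {K : ℕ} (h : J → Bool) (e : Fin K ↪ J) (a : ℕ) (i : J) : Bool :=
  if ∃ b : Fin K, (b : ℕ) < a ∧ e b = i then h i else !(h i)

section SwitchedBits

variable [DecidableEq J] {K : ℕ} (h : J → Bool) (e : Fin K ↪ J)

lemma switchedBits_succ_self (a : Fin K) : switchedBits h e (a + 1) (e a) = h (e a) :=
  if_pos ⟨a, Nat.lt_succ_self a, rfl⟩

lemma switchedBits_self (a : Fin K) : switchedBits h e a (e a) = !(h (e a)) :=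
  if_neg fun ⟨_, hb, hba⟩ => hb.ne (congrArg Fin.val (e.injective hba))

lemma switchedBits_succ_of_ne (a : Fin K) {i : J} (hi : i ≠ e a) :
    switchedBits h e (a + 1) i = switchedBits h e a i := by
  unfold switchedBits
  congr 1
  refine propext ⟨fun ⟨b, hb, hbi⟩ => ⟨b, ?_, hbi⟩,
    fun ⟨b, hb, hbi⟩ => ⟨b, hb.trans (Nat.lt_succ_self _), hbi⟩⟩
  exact (Nat.lt_succ_iff_lt_or_eq.1 hb).resolve_right fun hba => hi (Fin.ext hba ▸ hbi.symm)

end SwitchedBits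

variable [Fintype J]

lemma sum_sub_sum_bounds_of_dominant {f g : J → ℤ} {i₀ : J} {M G : ℤ}
    (hothers : ∀ i, i ≠ i₀ → |f i - g i| ≤ M) (hM : 0 ≤ M) (hMG : 32 * Fintype.card J * M ≤ G)
    (hlow : G ≤ f i₀ - g i₀) (hupp : f i₀ - g i₀ ≤ 8 * G) :
    G ≤ 2 * (∑ i, f i - ∑ i, g i) ∧ ∑ i, f i - ∑ i, g i ≤ 9 * G := by
  classical
  have hsplit : ∑ i, f i - ∑ i, g i = f i₀ - g i₀ + ∑ i ∈ Finset.univ.erase i₀, (f i - g i) := by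
    rw [← Finset.sum_sub_distrib, ← Finset.add_sum_erase _ _ (Finset.mem_univ i₀)]
  have hrest : |∑ i ∈ Finset.univ.erase i₀, (f i - g i)| ≤ Fintype.card J * M :=
    calc |∑ i ∈ Finset.univ.erase i₀, (f i - g i)|
        ≤ ∑ i ∈ Finset.univ.erase i₀, |f i - g i| := Finset.abs_sum_le_sum_abs _ _
      _ ≤ ∑ _i ∈ Finset.univ.erase i₀, M :=
          Finset.sum_le_sum fun i hi => hothers i (Finset.ne_of_mem_erase hi)
      _ ≤ ∑ _i : J, M :=
          Finset.sum_le_sum_of_subset_of_nonneg (Finset.erase_subset _ _) fun _ _ _ => hM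
      _ = Fintype.card J * M := by simp
  rw [abs_le] at hrest
  constructor <;> linarith [hrest.1, hrest.2]

/-- Otherwise some level set of the branching exponent `j` contains `K` indices, and switching their
bits one after the other from the lower to the upper subtree produces a chain in `P`. -/
lemma exists_dead_branch {L K k' m : ℕ} (hk : (L + 1) * K ≤ k') {P : Set ℤ}
    (hP : ChainFree (Fintype.card J) K P) {u : J → (Fin (m + 1) → Bool) → ℤ}
    (hu : ∀ i b v w, |subtree (u i) b v - subtree (u i) b w| ≤ 2 ^ (L * m))
    {S : Finset J} (hS : k' < S.card) (hbr : ∀ i ∈ S, Branches (Fintype.card J) L (u i)) :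
    ∃ ε : J → Bool, ∀ w : J → Fin m → Bool, ∑ i, u i (Fin.cons (ε i) (w i)) ∉ P := by
  classical
  by_contra! hcon
  choose! j hjL hjκ h hgap using hbr
  obtain ⟨j₀, -, hj₀⟩ := Finset.exists_lt_card_fiber_of_mul_lt_card_of_maps_to
    (s := S) (t := Finset.range (L + 1)) (f := j) (n := K)
    (fun i hi => Finset.mem_range.2 (Nat.lt_succ_of_le (hjL i hi)))
    (by rw [Finset.card_range]; omega)
  obtain ⟨e'⟩ : Nonempty (Fin K ↪ {i // i ∈ S.filter fun i => j i = j₀}) :=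
    Function.Embedding.nonempty_of_card_le (by
      rw [Fintype.card_coe, Fintype.card_fin]; exact hj₀.le)
  let e : Fin K ↪ J := e'.trans (Function.Embedding.subtype _)
  have he (a : Fin K) : e a ∈ S ∧ j (e a) = j₀ := Finset.mem_filter.1 (e' a).2
  choose w hw using fun a => hcon (switchedBits h e a)
  have hM : (1 : ℤ) ≤ 2 ^ (L * m) := one_le_pow₀ (by norm_num)
  rcases Nat.eq_zero_or_pos K with rfl | hK
  · exact hP (32 * Fintype.card J) _ le_rfl (fun a _ => hw a) (by simp)
  have hκ : 32 * (Fintype.card J : ℤ) ≤ 2 ^ j₀ := by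
    exact_mod_cast (he ⟨0, hK⟩).2 ▸ hjκ _ (he ⟨0, hK⟩).1
  refine hP (2 ^ j₀ * 2 ^ (L * m)) _ (hκ.trans (le_mul_of_one_le_right (by positivity) hM))
    (fun a _ => hw a) fun a ha => ?_
  have hgap_a := hgap _ (he ⟨a, ha⟩).1 (w a (e ⟨a, ha⟩)) (w (a + 1) (e ⟨a, ha⟩))
  rw [(he ⟨a, ha⟩).2, ← switchedBits_self h e ⟨a, ha⟩, ← switchedBits_succ_self h e ⟨a, ha⟩]
    at hgap_a
  refine sum_sub_sum_bounds_of_dominant (i₀ := e ⟨a, ha⟩) (fun i hi => ?_)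
    (zero_le_one.trans hM) (mul_le_mul_of_nonneg_right hκ (zero_le_one.trans hM))
    hgap_a.1 hgap_a.2
  rw [switchedBits_succ_of_ne h e ⟨a, ha⟩ hi]
  exact hu i (switchedBits h e a i) _ _

end ChainFree

section Decay

/-- The decay base in the counting bound for sums over spread trees. -/
def decayBase (κ : ℕ) : ℝ := 1 - (1 / 2) ^ κ / κ

lemma decayBase_pos {κ : ℕ} (hκ : 1 ≤ κ) : 0 < decayBase κ := by
  have hpow : ((1 : ℝ) / 2) ^ κ ≤ (1 / 2) ^ 1 :=
    pow_le_pow_of_le_one (by norm_num) (by norm_num) hκ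
  have hdiv : ((1 : ℝ) / 2) ^ κ / κ ≤ (1 / 2) ^ κ :=
    div_le_self (by positivity) (Nat.one_le_cast.2 hκ)
  unfold decayBase
  norm_num at hpow
  linarith

lemma decayBase_lt_one {κ : ℕ} (hκ : 1 ≤ κ) : decayBase κ < 1 :=
  sub_lt_self 1 (div_pos (by positivity) (Nat.cast_pos.2 hκ))

lemma le_decayBase_pow {κ : ℕ} (hκ : 1 ≤ κ) : 1 - (1 / 2) ^ κ ≤ decayBase κ ^ κ := by
  have hκ0 : (κ : ℝ) ≠ 0 := Nat.cast_ne_zero.2 (by omega)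
  have hbase := decayBase_pos hκ
  rw [decayBase, sub_eq_add_neg] at *
  calc 1 + -(1 / 2 : ℝ) ^ κ = 1 + κ * -((1 / 2) ^ κ / κ) := by field_simp
    _ ≤ (1 + -((1 / 2) ^ κ / κ)) ^ κ := one_add_mul_le_pow (by linarith) κ

variable {J : Type*} [Fintype J]

section Slice

variable [DecidableEq J]

/-- The part of a family of tuples of paths with prescribed first bits, with these bits removed. -/
def slice {m : ℕ} (Ω : Finset (J → Fin (m + 1) → Bool)) (ε : J → Bool) :
    Finset (J → Fin m → Bool) :=
  Finset.univ.filter fun w => (fun i => Fin.cons (ε i) (w i) : J → Fin (m + 1) → Bool) ∈ Ω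

lemma card_le_sum_card_slice {m : ℕ} (Ω : Finset (J → Fin (m + 1) → Bool)) :
    Ω.card ≤ ∑ ε, (slice Ω ε).card := by
  rw [Finset.card_eq_sum_card_fiberwise (f := fun ω (i : J) => ω i 0) (t := Finset.univ)
    (fun _ _ => Finset.mem_coe.2 (Finset.mem_univ _))]
  refine Finset.sum_le_sum fun ε _ => ?_
  have hcons : ∀ ω : J → Fin (m + 1) → Bool, (fun i => ω i 0) = ε →
      (fun i => Fin.cons (ε i) (Fin.tail (ω i)) : J → Fin (m + 1) → Bool) = ω := by
    rintro ω rfl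
    exact funext fun i => Fin.cons_self_tail (ω i)
  refine Finset.card_le_card_of_injOn (fun ω i => Fin.tail (ω i)) (fun ω hω => ?_)
    fun ω hω ω' hω' h => ?_
  · obtain ⟨hωΩ, hωε⟩ := Finset.mem_filter.1 hω
    exact Finset.mem_filter.2 ⟨Finset.mem_univ _, by rwa [hcons ω hωε]⟩
  · rw [← hcons ω (Finset.mem_filter.1 hω).2, ← hcons ω' (Finset.mem_filter.1 hω').2]
    funext i
    rw [show Fin.tail (ω i) = Fin.tail (ω' i) from congrFun h i]

lemma card_mul_le_card_nonempty_slice_mul {m : ℕ} (Ω : Finset (J → Fin (m + 1) → Bool)) {A X : ℝ}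
    (hA : 0 ≤ A) (hslice : ∀ ε, ((slice Ω ε).card : ℝ) * A ≤ X) :
    (Ω.card : ℝ) * A ≤ (Finset.univ.filter fun ε => (slice Ω ε).Nonempty).card * X := by
  calc (Ω.card : ℝ) * A ≤ (∑ ε, ((slice Ω ε).card : ℝ)) * A := by
        gcongr; exact_mod_cast card_le_sum_card_slice Ω
    _ = ∑ ε with (slice Ω ε).Nonempty, ((slice Ω ε).card : ℝ) * A := by
        rw [Finset.sum_mul]
        refine (Finset.sum_filter_of_ne fun ε _ hne => ?_).symm
        by_contra hempty
        simp [Finset.not_nonempty_iff_eq_empty.1 hempty] at hne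
    _ ≤ ∑ ε with (slice Ω ε).Nonempty, X := Finset.sum_le_sum fun ε _ => hslice ε
    _ = _ := by rw [Finset.sum_const, nsmul_eq_mul]

lemma card_filter_mul_decayBase_pow_le (hκ : 1 ≤ Fintype.card J) {p : (J → Bool) → Prop}
    [DecidablePred p] {k s : ℕ} (hs : s ≤ Fintype.card J) (hp : k < s → ∃ ε, ¬ p ε) :
    ((Finset.univ.filter p).card : ℝ) * decayBase (Fintype.card J) ^ k ≤
      2 ^ Fintype.card J * decayBase (Fintype.card J) ^ s := by
  set κ := Fintype.card J with hκdef
  have hq0 : 0 < decayBase κ := decayBase_pos hκ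
  have hq1 : decayBase κ ≤ 1 := (decayBase_lt_one hκ).le
  have hcard : (Finset.univ : Finset (J → Bool)).card = 2 ^ κ := by simp [hκdef]
  rcases le_or_gt s k with hsk | hsk
  · have hle : ((Finset.univ.filter p).card : ℝ) ≤ 2 ^ κ := by
      exact_mod_cast (Finset.card_filter_le _ _).trans_eq hcard
    exact mul_le_mul hle (pow_le_pow_of_le_one hq0.le hq1 hsk) (by positivity) (by positivity)
  · obtain ⟨ε, hε⟩ := hp hsk
    have hlt : (Finset.univ.filter p).card < 2 ^ κ := hcard ▸ Finset.card_lt_card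
      (Finset.filter_ssubset.2 ⟨ε, Finset.mem_univ _, hε⟩)
    have hle : ((Finset.univ.filter p).card : ℝ) + 1 ≤ 2 ^ κ := by exact_mod_cast hlt
    calc ((Finset.univ.filter p).card : ℝ) * decayBase κ ^ k
        ≤ (Finset.univ.filter p).card :=
          mul_le_of_le_one_right (Nat.cast_nonneg _) (pow_le_one₀ hq0.le hq1)
      _ ≤ 2 ^ κ - 1 := by linarith
      _ = 2 ^ κ * (1 - (1 / 2) ^ κ) := by rw [mul_sub, ← mul_pow]; norm_num
      _ ≤ 2 ^ κ * decayBase κ ^ κ := by gcongr; exact le_decayBase_pow hκ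
      _ ≤ 2 ^ κ * decayBase κ ^ s := by
          gcongr 2 ^ κ * ?_; exact pow_le_pow_of_le_one hq0.le hq1 hs

end Slice

lemma IsSpreadTree.exists_rank_subtree {κ L m n : ℕ} {u : (Fin (m + 1) → Bool) → ℤ}
    (hu : IsSpreadTree κ L (m + 1) n u) :
    ∃ (br : Bool) (n' : ℕ), (∀ b, IsSpreadTree κ L m n' (subtree u b)) ∧
      n = n' + (if br then 1 else 0) ∧ (br = true → Branches κ L u) := by
  rcases hu.2 with ⟨heq, htree⟩ | ⟨n', hn, htree, hbr⟩
  · exact ⟨false, n, Bool.rec (heq ▸ htree) htree, by simp, by simp⟩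
  · exact ⟨true, n', htree, by simpa using hn, fun _ => hbr⟩

lemma card_mul_decayBase_pow_le {L K k' : ℕ} (hk : (L + 1) * K ≤ k')
    (hκ : 1 ≤ Fintype.card J) {P : Set ℤ} (hP : ChainFree (Fintype.card J) K P) {m : ℕ}
    {n : J → ℕ} {u : J → (Fin m → Bool) → ℤ}
    (hu : ∀ i, IsSpreadTree (Fintype.card J) L m (n i) (u i))
    {Ω : Finset (J → Fin m → Bool)} (hΩ : ∀ ω ∈ Ω, ∑ i, u i (ω i) ∈ P) :
    (Ω.card : ℝ) * decayBase (Fintype.card J) ^ (k' * m) ≤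
      2 ^ (Fintype.card J * m) * decayBase (Fintype.card J) ^ (∑ i, n i) := by
  classical
  set κ := Fintype.card J
  set q := decayBase κ
  have hq0 : 0 < q := decayBase_pos hκ
  induction m generalizing n with
  | zero =>
    have hn : ∀ i, n i = 0 := hu
    simp only [hn, Finset.sum_const_zero, mul_zero, pow_zero, mul_one]
    exact_mod_cast (Finset.card_le_univ Ω).trans (by simp)
  | succ m ih =>
    choose br n' htree hn hbr using fun i => (hu i).exists_rank_subtree
    set S := Finset.univ.filter fun i => br i = true with hS
    have hrank : ∑ i, n i = ∑ i, n' i + S.card := by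
      simp only [hn, Finset.sum_add_distrib, hS, Finset.card_filter]
    have hslice (ε : J → Bool) :
        ((slice Ω ε).card : ℝ) * q ^ (k' * m) ≤ 2 ^ (κ * m) * q ^ ∑ i, n' i :=
      ih (u := fun i => subtree (u i) (ε i)) (hu := fun i => htree i (ε i))
        (hΩ := fun w hw => hΩ _ (Finset.mem_filter.1 hw).2)
    have hdead : k' < S.card → ∃ ε, ¬ (slice Ω ε).Nonempty := fun hlt => by
      obtain ⟨ε, hε⟩ := exists_dead_branch hk hP (fun i b v w => (htree i b).abs_sub_le v w) hlt
        fun i hi => hbr i (Finset.mem_filter.1 hi).2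
      exact ⟨ε, fun ⟨w, hw⟩ => hε w (hΩ _ (Finset.mem_filter.1 hw).2)⟩
    set alive := Finset.univ.filter fun ε => (slice Ω ε).Nonempty
    calc (Ω.card : ℝ) * q ^ (k' * (m + 1)) = Ω.card * q ^ (k' * m) * q ^ k' := by ring
      _ ≤ alive.card * (2 ^ (κ * m) * q ^ ∑ i, n' i) * q ^ k' := by
          gcongr ?_ * _
          exact card_mul_le_card_nonempty_slice_mul Ω (by positivity) hslice
      _ = alive.card * q ^ k' * (2 ^ (κ * m) * q ^ ∑ i, n' i) := by ring
      _ ≤ 2 ^ κ * q ^ S.card * (2 ^ (κ * m) * q ^ ∑ i, n' i) := by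
          gcongr ?_ * _
          exact card_filter_mul_decayBase_pow_le hκ (Finset.card_le_univ S) hdead
      _ = 2 ^ (κ * (m + 1)) * q ^ ∑ i, n i := by rw [hrank]; ring

end Decay

section ProjectionEntropy

/-- The index of the dyadic interval of level `i` containing `v`. -/
def dyad (i : ℕ) (v : ℝ) : ℤ := ⌊2 ^ i * v⌋

lemma dyad_add_ediv (i j : ℕ) (v : ℝ) : dyad (i + j) v / 2 ^ j = dyad i v := by
  have hscale : (2 : ℝ) ^ i * v = 2 ^ (i + j) * v / ((2 ^ j : ℕ) : ℝ) := by
    push_cast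
    rw [pow_add]
    field_simp
  rw [dyad, dyad, hscale, Int.floor_div_natCast]
  push_cast
  rfl

lemma dyad_eq_of_le {i j : ℕ} (hij : i ≤ j) {v w : ℝ} (h : dyad j v = dyad j w) :
    dyad i v = dyad i w := by
  obtain ⟨k, rfl⟩ := Nat.exists_eq_add_of_le hij
  rw [← dyad_add_ediv i k v, ← dyad_add_ediv i k w, h]

/-- The indices of the level `i + f` dyadic intervals inside the `k`-th one of level `i`. -/
def dyadDescendants (f : ℕ) (k : ℤ) : Finset ℤ := Finset.Ico (k * 2 ^ f) ((k + 1) * 2 ^ f)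

lemma card_dyadDescendants (f : ℕ) (k : ℤ) : (dyadDescendants f k).card = 2 ^ f := by
  rw [dyadDescendants, Int.card_Ico, ← sub_mul, add_sub_cancel_left, one_mul]
  exact_mod_cast Int.toNat_natCast (2 ^ f)

lemma dyad_add_mem_dyadDescendants (i f : ℕ) (v : ℝ) :
    dyad (i + f) v ∈ dyadDescendants f (dyad i v) := by
  have hpos : (0 : ℤ) < 2 ^ f := by positivity
  rw [dyadDescendants, Finset.mem_Ico, ← dyad_add_ediv i f v]
  exact ⟨Int.ediv_mul_le _ hpos.ne', Int.lt_ediv_add_one_mul_self _ hpos⟩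

lemma abs_mul_sub_lt_one_of_dyad_eq {i : ℕ} {v w : ℝ} (h : dyad i v = dyad i w) :
    2 ^ i * |v - w| < 1 := by
  have := Int.abs_sub_lt_one_of_floor_eq_floor h
  rwa [← mul_sub, abs_mul, abs_of_pos (by positivity)] at this

lemma abs_sub_lt_of_dyad_eq {i : ℕ} {v w : ℝ} (h : dyad i v = dyad i w) :
    |v - w| < 1 / 2 ^ i := by
  rw [lt_div_iff₀' (by positivity)]
  exact abs_mul_sub_lt_one_of_dyad_eq h

lemma abs_floor_sub_floor_le {x y : ℝ} {c : ℤ} (h : |x - y| < c) : |⌊x⌋ - ⌊y⌋| ≤ c := by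
  obtain ⟨hlo, hhi⟩ := abs_lt.1 h
  have hupper : ((⌊x⌋ - ⌊y⌋ : ℤ) : ℝ) < (c + 1 : ℤ) := by
    push_cast
    linarith [Int.floor_le x, Int.lt_floor_add_one y]
  have hlower : ((-(c + 1) : ℤ) : ℝ) < (⌊x⌋ - ⌊y⌋ : ℤ) := by
    push_cast
    linarith [Int.floor_le y, Int.lt_floor_add_one x]
  rw [Int.cast_lt] at hupper hlower
  exact abs_le.2 ⟨by omega, by omega⟩

variable {ι : Type*} [Fintype ι]

/-- Entropy of the partition of the index set by `β` at dyadic level `i` and by the projection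
`α + t β` at dyadic level `l`. -/
def jointEntropy (α β : ι → ℝ) (t : ℝ) (i l : ℕ) : ℝ :=
  labelEntropy fun p => (dyad i (β p), dyad l (α p + t * β p))

variable (α β : ι → ℝ) (t : ℝ)

lemma jointEntropy_anti {i i' l l' : ℕ} (hi : i ≤ i') (hl : l ≤ l') :
    jointEntropy α β t i' l' ≤ jointEntropy α β t i l := by
  refine labelEntropy_mono fun p q h => ?_
  rw [Prod.mk.injEq] at h ⊢
  exact ⟨dyad_eq_of_le hi h.1, dyad_eq_of_le hl h.2⟩

lemma jointEntropy_supermodular {i i' l l' : ℕ} (hi : i ≤ i') (hl : l ≤ l') :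
    jointEntropy α β t i l' + jointEntropy α β t i' l ≤
      jointEntropy α β t i' l' + jointEntropy α β t i l := by
  refine (labelEntropy_supermodular (x := fun p => (dyad i (β p), dyad l' (α p + t * β p)))
    (y := fun p => (dyad i' (β p), dyad l (α p + t * β p)))
    (z := fun p => (dyad i (β p), dyad l (α p + t * β p)))
    (fun p q h => ?_) (fun p q h => ?_)).trans
    (add_le_add_left (labelEntropy_mono fun p q h => ?_) _) <;>
  simp only [Prod.mk.injEq] at h ⊢
  · exact ⟨h.1, dyad_eq_of_le hl h.2⟩
  · exact ⟨dyad_eq_of_le hi h.1, h.2⟩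
  · exact ⟨h.2.1, h.1.2⟩

lemma jointEntropy_le_add_left (i l f : ℕ) :
    jointEntropy α β t i l ≤ jointEntropy α β t (i + f) l +
      Fintype.card ι * (f * Real.log 2) := by
  rw [← Real.log_pow]
  refine labelEntropy_le_add_log _ _ (by positivity) fun p =>
    ⟨dyadDescendants f (dyad i (β p)) ×ˢ {dyad l (α p + t * β p)}, ?_, fun q hq => ?_⟩
  · rw [Finset.card_product, Finset.card_singleton, mul_one, card_dyadDescendants]
    push_cast
    rfl
  · rw [Prod.mk.injEq] at hq
    rw [Finset.mem_product, ← hq.1, ← hq.2]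
    exact ⟨dyad_add_mem_dyadDescendants _ _ _, Finset.mem_singleton_self _⟩

lemma jointEntropy_le_add_right (i l f : ℕ) :
    jointEntropy α β t i l ≤ jointEntropy α β t i (l + f) +
      Fintype.card ι * (f * Real.log 2) := by
  rw [← Real.log_pow]
  refine labelEntropy_le_add_log _ _ (by positivity) fun p =>
    ⟨{dyad i (β p)} ×ˢ dyadDescendants f (dyad l (α p + t * β p)), ?_, fun q hq => ?_⟩
  · rw [Finset.card_product, Finset.card_singleton, one_mul, card_dyadDescendants]
    push_cast
    rfl
  · rw [Prod.mk.injEq] at hq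
    rw [Finset.mem_product, ← hq.1, ← hq.2]
    exact ⟨Finset.mem_singleton_self _, dyad_add_mem_dyadDescendants _ _ _⟩

lemma labelEntropy_const {σ : Type*} (c : σ) :
    labelEntropy (fun _ : ι => c) = Fintype.card ι * Real.log (Fintype.card ι) := by
  simp [labelEntropy, classCard, labelClass]

lemma labelEntropy_of_injective {σ : Type*} {f : ι → σ} (hf : Function.Injective f) :
    labelEntropy f = 0 := by
  refine Finset.sum_eq_zero fun p _ => ?_
  have hclass : labelClass f p = {p} := by
    ext q
    simp [hf.eq_iff]
  rw [classCard, hclass, Finset.card_singleton, Nat.cast_one, Real.log_one]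

lemma card_mul_log_card_le_jointEntropy_add (hβ0 : ∀ p, 0 ≤ β p) (hβ1 : ∀ p, β p < 1) {l : ℕ}
    {v : Finset ℤ} (hv : ∀ p, dyad l (α p + t * β p) ∈ v) {m : ℝ} (hm : 0 < m)
    (hvm : (v.card : ℝ) ≤ m) :
    Fintype.card ι * Real.log (Fintype.card ι) ≤
      jointEntropy α β t 0 l + Fintype.card ι * Real.log m := by
  rw [← labelEntropy_const ()]
  refine labelEntropy_le_add_log _ _ hm fun p => ⟨{0} ×ˢ v, by simpa using hvm, fun q _ => ?_⟩
  have hzero : dyad 0 (β q) = 0 := by simp [dyad, Int.floor_eq_zero_iff, hβ0 q, hβ1 q]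
  rw [hzero]
  exact Finset.mk_mem_product (Finset.mem_singleton_self _) (hv q)

lemma jointEntropy_diag_le {n : ℕ} (hinj : Function.Injective fun p => (dyad n (α p), dyad n (β p)))
    (hβ : ∀ p q, dyad n (β p) = dyad n (β q) → β p = β q) :
    jointEntropy α β t n n ≤ Fintype.card ι * Real.log 8 := by
  rw [← zero_add (Fintype.card ι * Real.log 8), ← labelEntropy_of_injective hinj]
  refine labelEntropy_le_add_log _ _ (by norm_num) fun p =>
    ⟨Finset.Icc (dyad n (α p) - 1) (dyad n (α p) + 1) ×ˢ {dyad n (β p)}, ?_, fun q hq => ?_⟩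
  · rw [Finset.card_product, Finset.card_singleton, mul_one, Int.card_Icc,
      show dyad n (α p) + 1 + 1 - (dyad n (α p) - 1) = 3 by ring]
    norm_num
  · obtain ⟨hb, hproj⟩ := Prod.mk.injEq _ _ _ _ ▸ hq
    have hclose : |2 ^ n * α q - 2 ^ n * α p| < ((1 : ℤ) : ℝ) := by
      have := abs_mul_sub_lt_one_of_dyad_eq hproj
      rwa [hβ _ _ hb, add_sub_add_right_eq_sub, ← abs_of_pos (show (0 : ℝ) < 2 ^ n by positivity),
        ← abs_mul, mul_sub, ← Int.cast_one] at this
    have hdyad : |dyad n (α q) - dyad n (α p)| ≤ 1 := abs_floor_sub_floor_le hclose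
    rw [abs_le] at hdyad
    rw [hb]
    exact Finset.mk_mem_product (Finset.mem_Icc.2 ⟨by linarith, by linarith⟩)
      (Finset.mem_singleton_self _)

/-- The information about the projection `α + t β` gained between levels `i` and `i + e`, given
`β` at level `i`. -/
def levelGain (e i : ℕ) : ℝ := jointEntropy α β t i i - jointEntropy α β t i (i + e)

/-- The conditional mutual information, given `β` at level `i` and `α + t β` at level `i + e`,
between `β` at level `i + e` and `α + t β` at level `i + 2 e`. -/
def scaleDefect (e i : ℕ) : ℝ :=
  jointEntropy α β t (i + e) (i + 2 * e) + jointEntropy α β t i (i + e) -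
    jointEntropy α β t i (i + 2 * e) - jointEntropy α β t (i + e) (i + e)

lemma scaleDefect_eq (e i : ℕ) : scaleDefect α β t e i =
    levelGain α β t (2 * e) i - levelGain α β t e i - levelGain α β t e (i + e) := by
  unfold scaleDefect levelGain
  rw [show i + e + e = i + 2 * e by ring]
  ring

lemma scaleDefect_nonneg (e i : ℕ) : 0 ≤ scaleDefect α β t e i := by
  have := jointEntropy_supermodular α β t (show i ≤ i + e by omega)
    (show i + e ≤ i + 2 * e by omega)
  unfold scaleDefect
  linarith

lemma levelGain_nonneg (e i : ℕ) : 0 ≤ levelGain α β t e i :=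
  sub_nonneg.2 (jointEntropy_anti α β t le_rfl (by omega))

lemma levelGain_le (e i : ℕ) : levelGain α β t e i ≤ Fintype.card ι * e := by
  have hlog : (e : ℝ) * Real.log 2 ≤ e :=
    mul_le_of_le_one_right e.cast_nonneg (by linarith [Real.log_two_lt_d9])
  have := mul_le_mul_of_nonneg_left hlog (Nat.cast_nonneg (α := ℝ) (Fintype.card ι))
  have := jointEntropy_le_add_right α β t i i e
  unfold levelGain
  linarith

lemma sum_range_sub_shift (g : ℕ → ℝ) (n e : ℕ) :
    ∑ i ∈ Finset.range n, g (i + e) + ∑ i ∈ Finset.range e, g i =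
      ∑ i ∈ Finset.range n, g i + ∑ i ∈ Finset.range e, g (n + i) := by
  have hleft := Finset.sum_range_add g e n
  have hright := Finset.sum_range_add g n e
  rw [add_comm e n] at hleft
  simp_rw [add_comm _ e]
  linarith

lemma sum_levelGain_le (n e : ℕ) :
    ∑ i ∈ Finset.range n, levelGain α β t e i ≤ n * (Fintype.card ι * e) := by
  simpa using Finset.sum_le_card_nsmul (Finset.range n) _ _ fun i _ => levelGain_le α β t e i

lemma sum_levelGain_nonneg (n e : ℕ) : 0 ≤ ∑ i ∈ Finset.range n, levelGain α β t e i :=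
  Finset.sum_nonneg fun i _ => levelGain_nonneg α β t e i

lemma sum_scaleDefect_le (n e : ℕ) :
    ∑ i ∈ Finset.range n, scaleDefect α β t e i ≤
      ∑ i ∈ Finset.range n, levelGain α β t (2 * e) i -
        2 * ∑ i ∈ Finset.range n, levelGain α β t e i + e * (Fintype.card ι * e) := by
  have hshift := sum_range_sub_shift (levelGain α β t e) n e
  have hinitial := sum_levelGain_le α β t e e
  have hfinal : 0 ≤ ∑ i ∈ Finset.range e, levelGain α β t e (n + i) :=
    Finset.sum_nonneg fun i _ => levelGain_nonneg α β t e _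
  simp_rw [scaleDefect_eq]
  rw [Finset.sum_sub_distrib, Finset.sum_sub_distrib]
  linarith

/-- The mean gain per level between levels `i` and `i + 2 ^ j`, summed over `i < n`. -/
def meanGain (n j : ℕ) : ℝ := (∑ i ∈ Finset.range n, levelGain α β t (2 ^ j) i) / 2 ^ j

lemma sum_scaleDefect_div_le (n j : ℕ) :
    (∑ i ∈ Finset.range n, scaleDefect α β t (2 ^ j) i) / 2 ^ j ≤
      2 * meanGain α β t n (j + 1) - 2 * meanGain α β t n j + 2 ^ j * Fintype.card ι := by
  have h := sum_scaleDefect_le α β t n (2 ^ j)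
  push_cast at h
  rw [div_le_iff₀ (by positivity), meanGain, meanGain, pow_succ']
  refine h.trans_eq ?_
  rw [pow_succ']
  field_simp

lemma sum_sum_scaleDefect_le {n J : ℕ} (hJ : 2 ^ J ≤ n) :
    ∑ j ∈ Finset.range J, (∑ i ∈ Finset.range n, scaleDefect α β t (2 ^ j) i) / 2 ^ j ≤
      3 * n * Fintype.card ι := by
  set N : ℝ := (Fintype.card ι : ℝ)
  have hgeom : ∑ j ∈ Finset.range J, (2 : ℝ) ^ j ≤ n := by
    rw [geom_sum_eq (by norm_num)]
    have : (2 : ℝ) ^ J ≤ n := by exact_mod_cast hJ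
    linarith
  have hlast : meanGain α β t n J ≤ n * N := by
    rw [meanGain, div_le_iff₀ (by positivity), mul_assoc]
    exact (sum_levelGain_le α β t n (2 ^ J)).trans_eq (by push_cast; rfl)
  have hfirst : 0 ≤ meanGain α β t n 0 :=
    div_nonneg (sum_levelGain_nonneg α β t n _) (by positivity)
  calc ∑ j ∈ Finset.range J, (∑ i ∈ Finset.range n, scaleDefect α β t (2 ^ j) i) / 2 ^ j
      ≤ ∑ j ∈ Finset.range J,
          (2 * meanGain α β t n (j + 1) - 2 * meanGain α β t n j + 2 ^ j * N) :=
        Finset.sum_le_sum fun j _ => sum_scaleDefect_div_le α β t n j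
    _ = 2 * meanGain α β t n J - 2 * meanGain α β t n 0 +
          (∑ j ∈ Finset.range J, (2 : ℝ) ^ j) * N := by
        rw [Finset.sum_add_distrib, Finset.sum_range_sub fun j => 2 * meanGain α β t n j,
          Finset.sum_mul]
    _ ≤ 2 * (n * N) - 0 + n * N := by gcongr; linarith
    _ = 3 * n * N := by ring

lemma mul_jointEntropy_sub_le_sum (n f e l : ℕ) (hl : n + e ≤ l) :
    f * (jointEntropy α β t f l - jointEntropy α β t n l) ≤
      ∑ i ∈ Finset.range n, (jointEntropy α β t i (i + e) -
        jointEntropy α β t (i + f) (i + e)) := by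
  have hshift := sum_range_sub_shift (fun i => jointEntropy α β t i l) n f
  have hinitial : f * jointEntropy α β t f l ≤ ∑ i ∈ Finset.range f, jointEntropy α β t i l := by
    simpa using Finset.card_nsmul_le_sum (Finset.range f) _ _ fun i hi =>
      jointEntropy_anti α β t (Finset.mem_range.1 hi).le le_rfl
  have hfinal : ∑ i ∈ Finset.range f, jointEntropy α β t (n + i) l ≤
      f * jointEntropy α β t n l := by
    simpa using Finset.sum_le_card_nsmul (Finset.range f) _ _ fun i _ =>
      jointEntropy_anti α β t (Nat.le_add_right n i) le_rfl
  calc f * (jointEntropy α β t f l - jointEntropy α β t n l)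
      ≤ ∑ i ∈ Finset.range n, (jointEntropy α β t i l - jointEntropy α β t (i + f) l) := by
        rw [Finset.sum_sub_distrib]
        linarith
    _ ≤ _ := Finset.sum_le_sum fun i hi => by
        have := Finset.mem_range.1 hi
        have := jointEntropy_supermodular α β t (show i ≤ i + f by omega)
          (show i + e ≤ l by omega)
        linarith

end ProjectionEntropy

section LocalLabels

variable {ι : Type*} (α β : ι → ℝ)

/-- Label by `β` at level `i` and by the projection of reference slope `t₀` at level `i + e`. -/
def baseLabel (t₀ : ℝ) (i e : ℕ) (p : ι) : ℤ × ℤ :=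
  (dyad i (β p), dyad (i + e) (α p + t₀ * β p))

/-- The base label refined by the projection of slope `t` at level `i + 2 * e`. -/
def slopeLabel (t₀ t : ℝ) (i e : ℕ) (p : ι) : (ℤ × ℤ) × ℤ :=
  (baseLabel α β t₀ i e p, dyad (i + 2 * e) (α p + t * β p))

/-- The base label refined by `β` at level `i + e`. -/
def heightLabel (t₀ : ℝ) (i e : ℕ) (p : ι) : (ℤ × ℤ) × ℤ :=
  (baseLabel α β t₀ i e p, dyad (i + e) (β p))

lemma baseLabel_eq_of_slopeLabel {t₀ t : ℝ} {i e : ℕ} (p q : ι)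
    (h : slopeLabel α β t₀ t i e p = slopeLabel α β t₀ t i e q) :
    baseLabel α β t₀ i e p = baseLabel α β t₀ i e q := (Prod.mk.inj h).1

lemma baseLabel_eq_of_heightLabel {t₀ : ℝ} {i e : ℕ} (p q : ι)
    (h : heightLabel α β t₀ i e p = heightLabel α β t₀ i e q) :
    baseLabel α β t₀ i e p = baseLabel α β t₀ i e q := (Prod.mk.inj h).1

lemma dyad_mem_Icc_of_slope_close {t₀ t : ℝ} {i e : ℕ} (ht : |t - t₀| ≤ 1 / 2 ^ e) {p q : ι}
    (hβ : dyad i (β q) = dyad i (β p))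
    (hproj : dyad (i + e) (α q + t * β q) = dyad (i + e) (α p + t * β p)) :
    dyad (i + e) (α q + t₀ * β q) ∈ Finset.Icc (dyad (i + e) (α p + t₀ * β p) - 2)
      (dyad (i + e) (α p + t₀ * β p) + 2) := by
  have hslope : |2 ^ (i + e) * ((t - t₀) * (β q - β p))| ≤ 1 := by
    rw [abs_mul, abs_mul, abs_of_pos (show (0 : ℝ) < 2 ^ (i + e) by positivity)]
    calc (2 : ℝ) ^ (i + e) * (|t - t₀| * |β q - β p|)
        ≤ 2 ^ (i + e) * (1 / 2 ^ e * (1 / 2 ^ i)) := by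
          gcongr
          exact (abs_sub_lt_of_dyad_eq hβ).le
      _ = 1 := by rw [pow_add]; field_simp
  have hclose : |2 ^ (i + e) * (α q + t₀ * β q) - 2 ^ (i + e) * (α p + t₀ * β p)| <
      ((2 : ℤ) : ℝ) := by
    calc |2 ^ (i + e) * (α q + t₀ * β q) - 2 ^ (i + e) * (α p + t₀ * β p)|
        = |(2 ^ (i + e) * (α q + t * β q) - 2 ^ (i + e) * (α p + t * β p)) -
            2 ^ (i + e) * ((t - t₀) * (β q - β p))| := by ring_nf
      _ ≤ |2 ^ (i + e) * (α q + t * β q) - 2 ^ (i + e) * (α p + t * β p)| +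
            |2 ^ (i + e) * ((t - t₀) * (β q - β p))| := abs_sub _ _
      _ < 1 + 1 := add_lt_add_of_lt_of_le (Int.abs_sub_lt_one_of_floor_eq_floor hproj) hslope
      _ = ((2 : ℤ) : ℝ) := by norm_num
  have hdyad : |dyad (i + e) (α q + t₀ * β q) - dyad (i + e) (α p + t₀ * β p)| ≤ 2 :=
    abs_floor_sub_floor_le hclose
  rw [abs_le] at hdyad
  exact Finset.mem_Icc.2 ⟨by linarith, by linarith⟩

lemma card_Icc_sub_two_add_two_le (z : ℤ) : ((Finset.Icc (z - 2) (z + 2)).card : ℝ) ≤ 8 := by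
  rw [Int.card_Icc, show z + 2 + 1 - (z - 2) = 5 by ring]
  norm_num

variable {α β}

/-- The possible base labels of points which agree with `p` in `β` at level `i` and in a
projection of slope close to `t₀` at level `i + e`. -/
def baseLabelNbhd (α β : ι → ℝ) (t₀ : ℝ) (i e : ℕ) (p : ι) : Finset (ℤ × ℤ) :=
  {dyad i (β p)} ×ˢ Finset.Icc (dyad (i + e) (α p + t₀ * β p) - 2)
    (dyad (i + e) (α p + t₀ * β p) + 2)

lemma card_baseLabelNbhd_prod_singleton_le (t₀ : ℝ) (i e : ℕ) (p : ι) (k : ℤ) :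
    ((baseLabelNbhd α β t₀ i e p ×ˢ {k}).card : ℝ) ≤ 8 := by
  rw [baseLabelNbhd, Finset.card_product, Finset.card_product, Finset.card_singleton, one_mul,
    Finset.card_singleton, mul_one]
  exact card_Icc_sub_two_add_two_le _

lemma baseLabel_mem_baseLabelNbhd {t₀ t : ℝ} {i e : ℕ} (ht : |t - t₀| ≤ 1 / 2 ^ e) {p q : ι}
    (hβ : dyad i (β q) = dyad i (β p))
    (hproj : dyad (i + e) (α q + t * β q) = dyad (i + e) (α p + t * β p)) :
    baseLabel α β t₀ i e q ∈ baseLabelNbhd α β t₀ i e p :=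
  Finset.mk_mem_product (by simp [hβ]) (dyad_mem_Icc_of_slope_close α β ht hβ hproj)

variable [Fintype ι]

lemma labelEntropy_baseLabel_le {t₀ t : ℝ} {i e : ℕ} (ht : |t - t₀| ≤ 1 / 2 ^ e) :
    labelEntropy (baseLabel α β t₀ i e) ≤
      jointEntropy α β t i (i + e) + Fintype.card ι * Real.log 8 := by
  refine labelEntropy_le_add_log _ _ (by norm_num) fun p =>
    ⟨{dyad i (β p)} ×ˢ Finset.Icc (dyad (i + e) (α p + t * β p) - 2)
      (dyad (i + e) (α p + t * β p) + 2), ?_, fun q hq => ?_⟩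
  · rw [Finset.card_product, Finset.card_singleton, one_mul]
    exact card_Icc_sub_two_add_two_le _
  · obtain ⟨hβ, hproj⟩ := Prod.mk.inj hq
    exact Finset.mk_mem_product (by simp [hβ])
      (dyad_mem_Icc_of_slope_close α β (by rwa [abs_sub_comm]) hβ hproj)

lemma jointEntropy_le_slopeLabel {t₀ t : ℝ} {i e : ℕ} (ht : |t - t₀| ≤ 1 / 2 ^ e) :
    jointEntropy α β t i (i + 2 * e) ≤
      labelEntropy (slopeLabel α β t₀ t i e) + Fintype.card ι * Real.log 8 := by
  refine labelEntropy_le_add_log _ _ (by norm_num) fun p =>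
    ⟨baseLabelNbhd α β t₀ i e p ×ˢ {dyad (i + 2 * e) (α p + t * β p)},
      card_baseLabelNbhd_prod_singleton_le t₀ i e p _, fun q hq => ?_⟩
  obtain ⟨hβ, hproj⟩ := Prod.mk.inj hq
  exact Finset.mk_mem_product
    (baseLabel_mem_baseLabelNbhd ht hβ (dyad_eq_of_le (by omega) hproj)) (by simp [hproj])

lemma jointEntropy_le_heightLabel {t₀ t : ℝ} {i e : ℕ} (ht : |t - t₀| ≤ 1 / 2 ^ e) :
    jointEntropy α β t (i + e) (i + e) ≤
      labelEntropy (heightLabel α β t₀ i e) + Fintype.card ι * Real.log 8 := by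
  refine labelEntropy_le_add_log _ _ (by norm_num) fun p =>
    ⟨baseLabelNbhd α β t₀ i e p ×ˢ {dyad (i + e) (β p)},
      card_baseLabelNbhd_prod_singleton_le t₀ i e p _, fun q hq => ?_⟩
  obtain ⟨hβ, hproj⟩ := Prod.mk.inj hq
  exact Finset.mk_mem_product
    (baseLabel_mem_baseLabelNbhd ht (dyad_eq_of_le (by omega) hβ) hproj) (by simp [hβ])

/-- The conditional mutual information of `slopeLabel` and `heightLabel` given `baseLabel`. It is a
version of `scaleDefect` in which the conditioning does not depend on the slope `t`. -/
def labelDefect (α β : ι → ℝ) (t₀ t : ℝ) (i e : ℕ) : ℝ :=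
  labelEntropy (fun q => (slopeLabel α β t₀ t i e q, heightLabel α β t₀ i e q)) +
    labelEntropy (baseLabel α β t₀ i e) - labelEntropy (slopeLabel α β t₀ t i e) -
    labelEntropy (heightLabel α β t₀ i e)

lemma labelDefect_nonneg (t₀ t : ℝ) (i e : ℕ) : 0 ≤ labelDefect α β t₀ t i e := by
  have := labelEntropy_supermodular (baseLabel_eq_of_slopeLabel α β (t₀ := t₀) (t := t) (i := i)
    (e := e)) (baseLabel_eq_of_heightLabel α β)
  unfold labelDefect
  linarith

lemma labelDefect_le {t₀ t : ℝ} {i e : ℕ} (ht : |t - t₀| ≤ 1 / 2 ^ e) :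
    labelDefect α β t₀ t i e ≤ scaleDefect α β t e i + 3 * (Fintype.card ι * Real.log 8) := by
  have hjoin : labelEntropy (fun q => (slopeLabel α β t₀ t i e q, heightLabel α β t₀ i e q)) ≤
      jointEntropy α β t (i + e) (i + 2 * e) := by
    refine labelEntropy_mono fun p q h => ?_
    simp only [slopeLabel, heightLabel, Prod.mk.injEq] at h ⊢
    exact ⟨h.2.2, h.1.2⟩
  have := labelEntropy_baseLabel_le (α := α) (β := β) (i := i) ht
  have := jointEntropy_le_slopeLabel (α := α) (β := β) (i := i) ht
  have := jointEntropy_le_heightLabel (α := α) (β := β) (i := i) ht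
  unfold labelDefect scaleDefect
  linarith

lemma jointEntropy_sub_le_sum_farFraction {t₀ t : ℝ} {i e : ℕ} (f : ℕ)
    (ht : |t - t₀| ≤ 1 / 2 ^ e) :
    jointEntropy α β t i (i + 2 * e) - jointEntropy α β t (i + f) (i + 2 * e) ≤
      Fintype.card ι * (Real.log 8 + Real.log 4) + (2 * (f * Real.log 2) + 2) *
        ∑ p, farFraction (slopeLabel α β t₀ t i e) (fun p => dyad (i + f) (β p)) p := by
  have hrefine : labelEntropy (fun q => (slopeLabel α β t₀ t i e q, dyad (i + f) (β q))) ≤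
      jointEntropy α β t (i + f) (i + 2 * e) := by
    refine labelEntropy_mono fun p q h => ?_
    simp only [slopeLabel, Prod.mk.injEq] at h ⊢
    exact ⟨h.2, h.1.2⟩
  have hfar := labelEntropy_sub_le_sum_farFraction (slopeLabel α β t₀ t i e)
    (fun p => dyad (i + f) (β p)) (G := 2 ^ f) (one_le_pow₀ one_le_two) fun p => by
      refine ⟨dyadDescendants f (dyad i (β p)), ?_, fun q hq => ?_⟩
      · rw [card_dyadDescendants]
        push_cast
        rfl
      · simp only [slopeLabel, baseLabel, Prod.mk.injEq] at hq
        rw [← hq.1.1]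
        exact dyad_add_mem_dyadDescendants _ _ _
  have := jointEntropy_le_slopeLabel (α := α) (β := β) (i := i) ht
  rw [Real.log_pow] at hfar
  linarith

lemma sum_labelDefect_le {t₀ t : ℝ} {e : ℕ} (ht : |t - t₀| ≤ 1 / 2 ^ e) {n : ℕ} {X : ℝ}
    (hdef : ∑ i ∈ Finset.range n, scaleDefect α β t e i ≤ X * n * Fintype.card ι) :
    ∑ i ∈ Finset.range n, labelDefect α β t₀ t i e ≤ (X + 7) * n * Fintype.card ι := by
  have hlog : 3 * Real.log 8 ≤ 7 := by
    rw [show (8 : ℝ) = 2 ^ 3 by norm_num, Real.log_pow]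
    push_cast
    linarith [Real.log_two_lt_d9]
  calc ∑ i ∈ Finset.range n, labelDefect α β t₀ t i e
      ≤ ∑ i ∈ Finset.range n, (scaleDefect α β t e i + 3 * (Fintype.card ι * Real.log 8)) :=
        Finset.sum_le_sum fun i _ => labelDefect_le ht
    _ = ∑ i ∈ Finset.range n, scaleDefect α β t e i + 3 * Real.log 8 * (n * Fintype.card ι) := by
        rw [Finset.sum_add_distrib, Finset.sum_const, Finset.card_range, nsmul_eq_mul]
        ring
    _ ≤ X * n * Fintype.card ι + 7 * (n * Fintype.card ι) := by gcongr
    _ = (X + 7) * n * Fintype.card ι := by ring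

lemma card_le_sum_farFraction {t₀ t : ℝ} {e f : ℕ} (ht : |t - t₀| ≤ 1 / 2 ^ e) {n : ℕ}
    (hgain : 5 * n * (Fintype.card ι : ℝ) ≤ ∑ i ∈ Finset.range n,
      (jointEntropy α β t i (i + 2 * e) - jointEntropy α β t (i + f) (i + 2 * e))) :
    n * Fintype.card ι ≤ (2 * (f * Real.log 2) + 2) * ∑ i ∈ Finset.range n, ∑ p,
      farFraction (slopeLabel α β t₀ t i e) (fun p => dyad (i + f) (β p)) p := by
  have hlog : Real.log 8 + Real.log 4 ≤ 4 := by
    rw [← Real.log_mul (by norm_num) (by norm_num), show (8 : ℝ) * 4 = 2 ^ 5 by norm_num,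
      Real.log_pow]
    push_cast
    linarith [Real.log_two_lt_d9]
  have hsum := hgain.trans (Finset.sum_le_sum (s := Finset.range n) fun i _ =>
    jointEntropy_sub_le_sum_farFraction (t₀ := t₀) (i := i) f ht)
  rw [Finset.sum_add_distrib, Finset.sum_const, Finset.card_range, nsmul_eq_mul,
    ← Finset.mul_sum (Finset.range n)] at hsum
  have : n * (Fintype.card ι * (Real.log 8 + Real.log 4)) ≤ n * (Fintype.card ι * (4 : ℝ)) := by
    gcongr
  linarith

lemma exists_large_and_small {n : ℕ} (hn : 1 ≤ n) {g d : ℕ → ℝ} {A Y c : ℝ} (hA : 0 ≤ A)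
    (hY : 0 < Y) (hc : 0 < c) (hgA : ∀ i, g i ≤ A) (hd : ∀ i, 0 ≤ d i)
    (hgsum : c * n * A ≤ ∑ i ∈ Finset.range n, g i)
    (hdsum : ∑ i ∈ Finset.range n, d i ≤ Y * n * A) :
    ∃ i < n, c / 2 * A ≤ g i ∧ d i ≤ 2 * Y / c * A := by
  obtain ⟨i, hi, hbalance⟩ : ∃ i ∈ Finset.range n, c / 2 * A ≤ g i - c / (2 * Y) * d i := by
    refine Finset.exists_le_of_sum_le (Finset.nonempty_range_iff.2 (by omega)) ?_
    rw [Finset.sum_sub_distrib, ← Finset.mul_sum (Finset.range n) d, Finset.sum_const,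
      Finset.card_range, nsmul_eq_mul]
    have hcost : c / (2 * Y) * ∑ i ∈ Finset.range n, d i ≤ c / (2 * Y) * (Y * n * A) := by gcongr
    rw [show c / (2 * Y) * (Y * n * A) = n * (c / 2 * A) by field_simp] at hcost
    linarith
  have hcost0 : 0 ≤ c / (2 * Y) * d i := mul_nonneg (by positivity) (hd i)
  have hcost : c / (2 * Y) * d i ≤ A := by
    have : 0 ≤ c / 2 * A := by positivity
    linarith [hgA i]
  refine ⟨i, Finset.mem_range.1 hi, by linarith, ?_⟩
  calc d i = 2 * Y / c * (c / (2 * Y) * d i) := by field_simp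
    _ ≤ 2 * Y / c * A := by gcongr

lemma exists_good_level {D : Type*} [Fintype D] {t₀ : ℝ} {t : D → ℝ} {e f n : ℕ}
    (hn : 1 ≤ n) (ht : ∀ ω, |t ω - t₀| ≤ 1 / 2 ^ e) {X c : ℝ} (hX : 0 ≤ X) (hc0 : 0 < c)
    (hc : c * (2 * (f * Real.log 2) + 2) ≤ 1)
    (hdef : ∀ ω, ∑ i ∈ Finset.range n, scaleDefect α β (t ω) e i ≤ X * n * Fintype.card ι)
    (hgain : ∀ ω, 5 * n * (Fintype.card ι : ℝ) ≤ ∑ i ∈ Finset.range n,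
      (jointEntropy α β (t ω) i (i + 2 * e) - jointEntropy α β (t ω) (i + f) (i + 2 * e))) :
    ∃ i < n, c / 2 * Fintype.card ι * Fintype.card D ≤ ∑ ω, ∑ p,
        farFraction (slopeLabel α β t₀ (t ω) i e) (fun p => dyad (i + f) (β p)) p ∧
      ∑ ω, labelDefect α β t₀ (t ω) i e ≤
        2 * (X + 7) / c * Fintype.card ι * Fintype.card D := by
  simp only [mul_assoc _ (Fintype.card ι : ℝ) (Fintype.card D : ℝ)]
  refine exists_large_and_small hn (by positivity) (by linarith) hc0 (fun i => ?_)
    (fun i => Finset.sum_nonneg fun ω _ => labelDefect_nonneg _ _ _ _) ?_ ?_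
  · calc ∑ ω, ∑ p, farFraction (slopeLabel α β t₀ (t ω) i e) (fun p => dyad (i + f) (β p)) p
        ≤ ∑ _ω : D, ∑ _p : ι, (1 : ℝ) :=
          Finset.sum_le_sum fun ω _ => Finset.sum_le_sum fun p _ => (farFraction_lt_one _ _ _).le
      _ = Fintype.card ι * Fintype.card D := by simp [mul_comm]
  · rw [Finset.sum_comm]
    calc c * n * (Fintype.card ι * Fintype.card D) = ∑ _ω : D, c * (n * Fintype.card ι) := by
          simp only [Finset.sum_const, Finset.card_univ, nsmul_eq_mul]
          ring
      _ ≤ _ := Finset.sum_le_sum fun ω _ => by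
          have hfar := card_le_sum_farFraction (t₀ := t₀) (ht ω) (hgain ω)
          refine (mul_le_mul_of_nonneg_left hfar hc0.le).trans ?_
          rw [← mul_assoc]
          exact mul_le_of_le_one_left (Finset.sum_nonneg fun i _ => Finset.sum_nonneg fun p _ =>
            farFraction_nonneg _ _ _) hc
  · rw [Finset.sum_comm]
    calc _ ≤ ∑ _ω : D, (X + 7) * n * Fintype.card ι :=
          Finset.sum_le_sum fun ω _ => sum_labelDefect_le (ht ω) (hdef ω)
      _ = (X + 7) * n * (Fintype.card ι * Fintype.card D) := by
          simp only [Finset.sum_const, Finset.card_univ, nsmul_eq_mul]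
          ring

end LocalLabels

section PackingBound

/-- Finite subsets of the range of `v` obey an Assouad-type packing bound with exponent `u` down to
scale `r₀`. -/
def PackingBound {ι : Type*} (v : ι → ℝ) (r₀ C u : ℝ) : Prop :=
  ∀ D : Finset ℝ, (D : Set ℝ) ⊆ Set.range v → ∀ r R : ℝ, r₀ ≤ r → r ≤ R →
    (∀ x ∈ D, ∀ y ∈ D, x ≠ y → r ≤ |x - y|) → (∀ x ∈ D, ∀ y ∈ D, |x - y| ≤ R) →
    (D.card : ℝ) ≤ C * (R / r) ^ u

lemma PackingBound.add_one_le_of_seq {ι : Type*} {v : ι → ℝ} {r₀ C u : ℝ}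
    (hv : PackingBound v r₀ C u) {K : ℕ} {y : ℕ → ℝ} (hy : ∀ a ≤ K, y a ∈ Set.range v) {r R : ℝ}
    (hr₀ : r₀ ≤ r) (hr : 0 < r) (hrR : r ≤ R)
    (hsep : ∀ a b, a < b → b ≤ K → r ≤ |y b - y a| ∧ |y b - y a| ≤ R) :
    (K : ℝ) + 1 ≤ C * (R / r) ^ u := by
  have hsep' {a b : ℕ} (ha : a < K + 1) (hb : b < K + 1) (hab : a ≠ b) :
      r ≤ |y a - y b| ∧ |y a - y b| ≤ R := by
    rcases lt_or_gt_of_ne hab with hlt | hgt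
    · rw [abs_sub_comm]
      exact hsep a b hlt (by omega)
    · exact hsep b a hgt (by omega)
  have hinj : Set.InjOn y (Finset.range (K + 1) : Set ℕ) := fun a ha b hb hab => by
    by_contra hne
    have := (hsep' (Finset.mem_range.1 ha) (Finset.mem_range.1 hb) hne).1
    rw [hab, sub_self, abs_zero] at this
    linarith
  have hcard := hv ((Finset.range (K + 1)).image y)
    (fun x hx => by
      obtain ⟨a, ha, rfl⟩ := Finset.mem_image.1 hx
      exact hy a (Finset.mem_range_succ_iff.1 ha)) r R hr₀ hrR
  simp only [Finset.forall_mem_image, Finset.mem_range] at hcard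
  rw [Finset.card_image_of_injOn hinj, Finset.card_range] at hcard
  refine le_trans (by push_cast; rfl) (hcard (fun a ha b hb hab => ?_) fun a ha b hb => ?_)
  · exact (hsep' ha hb fun h => hab (h ▸ rfl)).1
  · rcases eq_or_ne a b with rfl | hab
    · rw [sub_self, abs_zero]
      linarith
    · exact (hsep' ha hb hab).2

lemma chain_bounds {D : ℤ} {x : ℕ → ℤ} {K : ℕ}
    (h : ∀ a < K, D ≤ 2 * (x (a + 1) - x a) ∧ x (a + 1) - x a ≤ 9 * D) {a b : ℕ} (hab : a ≤ b)
    (hb : b ≤ K) : D * (b - a) ≤ 2 * (x b - x a) ∧ x b - x a ≤ 9 * D * (b - a) := by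
  induction b, hab using Nat.le_induction with
  | base => simp
  | succ b _ ih =>
    obtain ⟨hlower, hupper⟩ := ih (by omega)
    obtain ⟨hgap, hgap'⟩ := h b (by omega)
    push_cast
    constructor <;> linarith

lemma abs_sub_bounds_of_chain {y y' x₀ η X X' D K k : ℝ} (hy : |y - x₀ - η * X| ≤ 7 * k * |η|)
    (hy' : |y' - x₀ - η * X'| ≤ 7 * k * |η|) (hlower : D ≤ 2 * (X' - X))
    (hupper : X' - X ≤ 9 * D * K) (hD : 64 * k ≤ D) (hK : 1 ≤ K) (hD0 : 0 ≤ D) :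
    |η| * D / 4 ≤ |y' - y| ∧ |y' - y| ≤ 40 * K * (|η| * D / 4) := by
  have herror : |(y' - y) - η * (X' - X)| ≤ 14 * k * |η| := by
    rw [show (y' - y) - η * (X' - X) = (y' - x₀ - η * X') - (y - x₀ - η * X) by ring]
    exact (abs_sub _ _).trans (by linarith)
  have hmain : |η * (X' - X)| = |η| * (X' - X) := by
    rw [abs_mul, abs_of_nonneg (by linarith : 0 ≤ X' - X)]
  have hη := abs_nonneg η
  have herror' : 14 * k * |η| ≤ |η| * D * (14 / 64) := by nlinarith
  constructor
  · have htriangle := abs_sub_abs_le_abs_sub (η * (X' - X)) (y' - y)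
    rw [abs_sub_comm (η * _), hmain] at htriangle
    nlinarith
  · have htriangle := abs_sub_abs_le_abs_sub (y' - y) (η * (X' - X))
    rw [hmain] at htriangle
    have : |η| * (X' - X) ≤ |η| * (9 * D * K) := by gcongr
    have : |η| * D ≤ |η| * D * K := le_mul_of_one_le_right (by positivity) hK
    have : 0 ≤ |η| * D := by positivity
    have : |η| * (9 * D * K) = 9 * (|η| * D * K) := by ring
    have : 40 * K * (|η| * D / 4) = 10 * (|η| * D * K) := by ring
    linarith

lemma chainFree_of_packingBound {ι : Type*} {v : ι → ℝ} {r₀ C u η x₀ : ℝ} {k K : ℕ} (hk : 1 ≤ k)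
    (hK1 : 1 ≤ K) (hK : C * (40 * K) ^ u < K + 1) (hη : η ≠ 0) (hr₀ : r₀ ≤ 16 * |η|)
    (hv : PackingBound v r₀ C u) :
    ChainFree (2 * k) K {σ : ℤ | ∃ q, |v q - x₀ - η * σ| ≤ 7 * k * |η|} := by
  intro D x hD hx hgap
  have : Nonempty ι := ⟨(hx 0 (Nat.zero_le _)).choose⟩
  choose! q hq using hx
  have hη0 : 0 < |η| := abs_pos.2 hη
  have hk' : (1 : ℝ) ≤ k := by exact_mod_cast hk
  have hK' : (1 : ℝ) ≤ K := by exact_mod_cast hK1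
  have hDk : 64 * (k : ℤ) ≤ D := by
    push_cast at hD
    linarith
  have hDk' : 64 * (k : ℝ) ≤ D := by exact_mod_cast hDk
  have hD0 : 0 < D := by omega
  have hsep (a b : ℕ) (hab : a < b) (hb : b ≤ K) : |η| * D / 4 ≤ |v (q b) - v (q a)| ∧
      |v (q b) - v (q a)| ≤ 40 * K * (|η| * D / 4) := by
    obtain ⟨hlower, hupper⟩ := chain_bounds hgap hab.le hb
    have hlower' : D ≤ 2 * (x b - x a) := le_trans (by nlinarith) hlower
    have hupper' : x b - x a ≤ 9 * D * K := hupper.trans (by gcongr; omega)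
    exact abs_sub_bounds_of_chain (hq a (by omega)) (hq b hb) (by exact_mod_cast hlower')
      (by exact_mod_cast hupper') hDk' hK' (by exact_mod_cast hD0.le)
  have hr : 0 < |η| * D / 4 := by
    have : (0 : ℝ) < D := by exact_mod_cast hD0
    positivity
  have hcard := hv.add_one_le_of_seq (y := fun a => v (q a)) (fun a _ => Set.mem_range_self _)
    (by nlinarith) hr (by nlinarith) hsep
  rw [mul_div_cancel_right₀ _ hr.ne'] at hcard
  linarith

end PackingBound

section SlopeWalk

variable {ι : Type*} {α β : ι → ℝ}

lemma abs_proj_sub_add_le {t₀ t : ℝ} {i e : ℕ} (ht : |t - t₀| ≤ 1 / 2 ^ e) {p₀ p₁ q q' : ι}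
    (hx : slopeLabel α β t₀ t i e q' = slopeLabel α β t₀ t i e q)
    (hq : heightLabel α β t₀ i e q = heightLabel α β t₀ i e p₀)
    (hq' : heightLabel α β t₀ i e q' = heightLabel α β t₀ i e p₁) :
    |(α q' + t₀ * β q') - (α q + t₀ * β q) + (t - t₀) * (β p₁ - β p₀)| ≤
      3 * (1 / 2 ^ (i + 2 * e)) := by
  have hheight {v w : ι} (h : heightLabel α β t₀ i e v = heightLabel α β t₀ i e w) :
      |(t - t₀) * (β v - β w)| ≤ 1 / 2 ^ (i + 2 * e) := by
    rw [abs_mul]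
    calc |t - t₀| * |β v - β w| ≤ 1 / 2 ^ e * (1 / 2 ^ (i + e)) := by
          gcongr
          exact (abs_sub_lt_of_dyad_eq (Prod.mk.inj h).2).le
      _ = 1 / 2 ^ (i + 2 * e) := by rw [two_mul, ← add_assoc, pow_add _ (i + e)]; field_simp
  calc |(α q' + t₀ * β q') - (α q + t₀ * β q) + (t - t₀) * (β p₁ - β p₀)|
      = |(α q' + t * β q' - (α q + t * β q)) - (t - t₀) * (β q' - β p₁) +
          (t - t₀) * (β q - β p₀)| := by ring_nf
    _ ≤ |α q' + t * β q' - (α q + t * β q)| + |(t - t₀) * (β q' - β p₁)| +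
          |(t - t₀) * (β q - β p₀)| := (abs_add_le _ _).trans (by gcongr; exact abs_sub _ _)
    _ ≤ 1 / 2 ^ (i + 2 * e) + 1 / 2 ^ (i + 2 * e) + 1 / 2 ^ (i + 2 * e) :=
        add_le_add_three (abs_sub_lt_of_dyad_eq (Prod.mk.inj hx).2).le (hheight hq') (hheight hq)
    _ = 3 * (1 / 2 ^ (i + 2 * e)) := by ring

lemma exists_endpoint [Fintype ι] {D : Type*} {t₀ lam : ℝ} {t : D → ℝ} {i e : ℕ} {b : ι → ℤ}
    (ht : ∀ ω, |t ω - t₀| ≤ 1 / 2 ^ e) {p₀ p₁ : ι} (k : ℕ) (p : ι) (s s' : Fin k → D)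
    (h : Reach (labelClass (heightLabel α β t₀ i e) p₀) (labelClass (heightLabel α β t₀ i e) p₁)
      (fun ω => farKernel (slopeLabel α β t₀ (t ω) i e) (heightLabel α β t₀ i e)
        (baseLabel α β t₀ i e) b lam) k p s s') :
    ∃ q, |(α q + t₀ * β q) - (α p + t₀ * β p) -
      (β p₁ - β p₀) * ∑ j, (t (s' j) - t (s j))| ≤ 6 * k * (1 / 2 ^ (i + 2 * e)) := by
  induction k generalizing p with
  | zero => exact ⟨p, by simp⟩
  | succ k ih =>
    obtain ⟨hp, q', hq', q, hq, hforth, hback, hrest⟩ := h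
    rw [mem_labelClass] at hp hq' hq
    obtain ⟨w, hw⟩ := ih q _ _ hrest
    have hforth := abs_proj_sub_add_le (ht (s 0)) (of_farKernel_ne_zero hforth.ne').1 hp hq'
    have hback := abs_proj_sub_add_le (ht (s' 0)) (of_farKernel_ne_zero hback.ne').1 hq hq'
    refine ⟨w, ?_⟩
    rw [Fin.sum_univ_succ]
    simp only [Fin.tail] at hw
    push_cast
    rw [abs_le] at hw hforth hback ⊢
    constructor <;> linarith

lemma abs_sub_sub_dyad_le (l : ℕ) (x y : ℝ) :
    |x - y - 1 / 2 ^ l * (dyad l x - dyad l y : ℤ)| ≤ 1 / 2 ^ l := by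
  have hfract : x - y - 1 / 2 ^ l * (dyad l x - dyad l y : ℤ) =
      1 / 2 ^ l * (Int.fract (2 ^ l * x) - Int.fract (2 ^ l * y)) := by
    simp only [dyad, Int.fract]
    push_cast
    field_simp
    ring
  rw [hfract, abs_mul, abs_of_pos (by positivity)]
  refine mul_le_of_le_one_right (by positivity) (abs_le.2 ⟨?_, ?_⟩) <;>
  linarith [Int.fract_nonneg (2 ^ l * x), Int.fract_nonneg (2 ^ l * y),
    Int.fract_lt_one (2 ^ l * x), Int.fract_lt_one (2 ^ l * y)]

lemma abs_sum_sub_dyad_le {k : ℕ} (l : ℕ) (x y : Fin k → ℝ) :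
    |∑ j, (x j - y j) - 1 / 2 ^ l * (∑ j, (dyad l (x j) - dyad l (y j)) : ℤ)| ≤
      k * (1 / 2 ^ l) := by
  push_cast
  rw [Finset.mul_sum, ← Finset.sum_sub_distrib]
  refine (Finset.abs_sum_le_sum_abs _ _).trans ?_
  have hterm (j : Fin k) :
      |x j - y j - 1 / 2 ^ l * ((dyad l (x j) : ℝ) - dyad l (y j))| ≤ 1 / 2 ^ l := by
    rw [← Int.cast_sub]
    exact abs_sub_sub_dyad_le l (x j) (y j)
  simpa using Finset.sum_le_card_nsmul Finset.univ _ _ fun j _ => hterm j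

lemma exists_endpoint_near_dyad [Fintype ι] {D : Type*} {t₀ lam : ℝ} {t : D → ℝ} {i e l : ℕ}
    {b : ι → ℤ} (ht : ∀ ω, |t ω - t₀| ≤ 1 / 2 ^ e) {p₀ p₁ : ι}
    (hl : 1 / 2 ^ (i + 2 * e) ≤ |(β p₁ - β p₀) * (1 / 2 ^ l)|) {k : ℕ} {p : ι} {s s' : Fin k → D}
    (h : Reach (labelClass (heightLabel α β t₀ i e) p₀) (labelClass (heightLabel α β t₀ i e) p₁)
      (fun ω => farKernel (slopeLabel α β t₀ (t ω) i e) (heightLabel α β t₀ i e)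
        (baseLabel α β t₀ i e) b lam) k p s s') :
    ∃ q, |(α q + t₀ * β q) - (α p + t₀ * β p) - (β p₁ - β p₀) * (1 / 2 ^ l) *
        (∑ j, (dyad l (t (s' j)) - dyad l (t (s j))) : ℤ)| ≤
      7 * k * |(β p₁ - β p₀) * (1 / 2 ^ l)| := by
  obtain ⟨q, hq⟩ := exists_endpoint ht k p s s' h
  refine ⟨q, ?_⟩
  have hround := abs_sum_sub_dyad_le l (fun j => t (s' j)) fun j => t (s j)
  set d := β p₁ - β p₀
  set σ := (∑ j, (dyad l (t (s' j)) - dyad l (t (s j))) : ℤ)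
  calc |(α q + t₀ * β q) - (α p + t₀ * β p) - d * (1 / 2 ^ l) * σ|
      = |((α q + t₀ * β q) - (α p + t₀ * β p) - d * ∑ j, (t (s' j) - t (s j))) +
          d * (∑ j, (t (s' j) - t (s j)) - 1 / 2 ^ l * σ)| := by ring_nf
    _ ≤ 6 * k * (1 / 2 ^ (i + 2 * e)) + |d| * (k * (1 / 2 ^ l)) := by
        refine (abs_add_le _ _).trans (add_le_add hq ?_)
        rw [abs_mul]
        gcongr
    _ ≤ 6 * k * |d * (1 / 2 ^ l)| + |d| * (k * (1 / 2 ^ l)) := by gcongr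
    _ = 7 * k * |d * (1 / 2 ^ l)| := by
        rw [abs_mul, abs_of_pos (show (0 : ℝ) < 1 / 2 ^ l by positivity)]
        ring

lemma one_div_two_pow_le_abs_sub {l : ℕ} {v w : ℝ} (h : 2 ≤ |dyad l v - dyad l w|) :
    1 / 2 ^ l ≤ |v - w| := by
  by_contra! hlt
  rw [lt_div_iff₀' (by positivity)] at hlt
  have hclose : |2 ^ l * v - 2 ^ l * w| < ((1 : ℤ) : ℝ) := by
    rw [← mul_sub, abs_mul, abs_of_pos (by positivity)]
    exact_mod_cast hlt
  have : |dyad l v - dyad l w| ≤ 1 := abs_floor_sub_floor_le hclose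
  linarith

lemma one_div_two_pow_le_abs_mul {a b l : ℕ} {d : ℝ} (hd : 1 / 2 ^ a ≤ |d|) (hab : a + l ≤ b) :
    1 / 2 ^ b ≤ |d * (1 / 2 ^ l)| := by
  rw [abs_mul, abs_of_pos (show (0 : ℝ) < 1 / 2 ^ l by positivity)]
  calc (1 : ℝ) / 2 ^ b ≤ 1 / 2 ^ (a + l) :=
        one_div_le_one_div_of_le (by positivity) (pow_le_pow_right₀ one_le_two hab)
    _ = 1 / 2 ^ a * (1 / 2 ^ l) := by rw [pow_add]; field_simp
    _ ≤ |d| * (1 / 2 ^ l) := by gcongr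

lemma card_mul_decayBase_pow_le_of_sub {L K k k' m n : ℕ} (hk : 1 ≤ k) (hk' : (L + 1) * K ≤ k')
    {P : Set ℤ} (hP : ChainFree (2 * k) K P) {τ : (Fin m → Bool) → ℤ}
    (hτ : IsSpreadTree (2 * k) L m n τ)
    {R : Finset ((Fin k → Fin m → Bool) × (Fin k → Fin m → Bool))}
    (hR : ∀ st ∈ R, ∑ j, (τ (st.2 j) - τ (st.1 j)) ∈ P) :
    (R.card : ℝ) * decayBase (2 * k) ^ (k' * m) ≤
      2 ^ (2 * k * m) * decayBase (2 * k) ^ (2 * k * n) := by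
  have hJ : Fintype.card (Fin k ⊕ Fin k) = 2 * k := by simp [two_mul]
  have h := card_mul_decayBase_pow_le (J := Fin k ⊕ Fin k) (P := P) (n := fun _ => n) hk'
    (by omega) (by rwa [hJ]) (u := Sum.elim (fun _ w => -τ w) fun _ => τ)
    (by
      rw [hJ]
      exact Sum.rec (fun _ => hτ.neg) fun _ => hτ)
    (Ω := R.map (Equiv.sumArrowEquivProdArrow _ _ _).symm.toEmbedding)
    (fun ω hω => by
      obtain ⟨st, hst, rfl⟩ := Finset.mem_map.1 hω
      have := hR st hst
      rw [Finset.sum_sub_distrib, sub_eq_neg_add, ← Finset.sum_neg_distrib] at this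
      rwa [Fintype.sum_sum_type])
  simpa only [Finset.card_map, hJ, Finset.sum_const, Finset.card_univ, smul_eq_mul] using h

lemma pow_mul_decayBase_pow_le [Fintype ι] [Nonempty ι] {n e f L m g a K k' rank : ℕ} (hn : 1 ≤ n)
    (he : e = L * m + g) (hfg : f ≤ g) {X c lam r₀ C u : ℝ} (hX : 0 ≤ X) (hc0 : 0 < c)
    (hc : c * (2 * (f * Real.log 2) + 2) ≤ 1) (hlam : 0 < lam)
    (hlamX : 8 * (2 * (X + 7) / c + 1) ≤ c * lam) (hK1 : 1 ≤ K) (hK : C * (40 * K) ^ u < K + 1)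
    (hk' : (L + 1) * K ≤ k') (hr₀ : r₀ ≤ 1 / 2 ^ (n + 2 * e)) {T : Set ℝ}
    (hdef : ∀ t ∈ T, ∑ i ∈ Finset.range n, scaleDefect α β t e i ≤ X * n * Fintype.card ι)
    (hgain : ∀ t ∈ T, 5 * n * (Fintype.card ι : ℝ) ≤ ∑ i ∈ Finset.range n,
      (jointEntropy α β t i (i + 2 * e) - jointEntropy α β t (i + f) (i + 2 * e)))
    (hpack : ∀ t ∈ T, PackingBound (fun p => α p + t * β p) r₀ C u)
    {W : Finset ℤ} {z₀ : ℤ} (hW : ∀ z ∈ W, ∃ t ∈ T, dyad (e + L * m) t = z ∧ dyad e t = z₀)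
    (hWcard : (2 * (64 * (2 * 2 ^ a) + 1)) ^ m * 2 ^ (L * rank) < W.card) :
    (c / 4 / Real.exp lam) ^ (2 * 2 ^ a) * decayBase (2 * 2 ^ a) ^ (k' * m) ≤
      decayBase (2 * 2 ^ a) ^ (2 * 2 ^ a * rank) := by
  have hk1 : 1 ≤ 2 ^ a := Nat.one_le_two_pow
  have hWz (z : ℤ) (hz : z ∈ W) : z / 2 ^ (L * m) = z₀ := by
    obtain ⟨t, -, rfl, rfl⟩ := hW z hz
    exact dyad_add_ediv e _ t
  obtain ⟨τ, hτ, hτW⟩ := exists_isSpreadTree (κ := 2 * 2 ^ a) (by omega) L m rank W z₀ hWz hWcard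
  choose t htT htz hdyad using fun w => hW (τ w) (hτW w)
  set t₀ : ℝ := t fun _ => true
  have hclose (w : Fin m → Bool) : |t w - t₀| ≤ 1 / 2 ^ e :=
    (abs_sub_lt_of_dyad_eq ((hdyad w).trans (hdyad _).symm)).le
  obtain ⟨i, hi, hfar, hsmall⟩ := exists_good_level (t₀ := t₀) (t := t) hn hclose hX hc0 hc
    (fun w => hdef _ (htT w)) (fun w => hgain _ (htT w))
  obtain ⟨p₀, p₁, hp, p, -, hcount⟩ := exists_classes_many_reach
    (x := fun w => slopeLabel α β t₀ (t w) i e) (y := heightLabel α β t₀ i e)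
    (z := baseLabel α β t₀ i e) (b := fun p => dyad (i + f) (β p))
    (fun w => baseLabel_eq_of_slopeLabel α β) (baseLabel_eq_of_heightLabel α β) hc0 hlam hlamX
    hfar hsmall a
  set η : ℝ := (β p₁ - β p₀) * (1 / 2 ^ (e + L * m))
  have hη : 1 / 2 ^ (i + 2 * e) ≤ |η| :=
    one_div_two_pow_le_abs_mul (one_div_two_pow_le_abs_sub hp) (by omega)
  have hη₀ : η ≠ 0 := abs_pos.1 (hη.trans_lt' (by positivity))
  have hr₀η : r₀ ≤ 16 * |η| := by
    have : (1 : ℝ) / 2 ^ (n + 2 * e) ≤ 1 / 2 ^ (i + 2 * e) :=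
      one_div_le_one_div_of_le (by positivity) (pow_le_pow_right₀ one_le_two (by omega))
    linarith [abs_nonneg η]
  have hchain := chainFree_of_packingBound (x₀ := α p + t₀ * β p) hk1 hK1 hK hη₀ hr₀η
    (hpack _ (htT fun _ => true))
  have hcount' := (mul_le_mul_of_nonneg_right hcount
      (pow_nonneg (decayBase_pos (κ := 2 * 2 ^ a) (by omega)).le (k' * m))).trans
    (card_mul_decayBase_pow_le_of_sub hk1 hk' hchain hτ fun st hst => by
      have := exists_endpoint_near_dyad hclose hη ((mem_reachSet _ _).1 hst)
      simp only [htz] at this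
      exact this)
  simp only [Fintype.card_pi, Finset.prod_const, Finset.card_univ, Fintype.card_bool,
    Fintype.card_fin, Nat.cast_pow, Nat.cast_ofNat] at hcount'
  rw [← pow_mul, mul_comm m, mul_right_comm, mul_comm ((2 : ℝ) ^ (2 * 2 ^ a * m))] at hcount'
  exact le_of_mul_le_mul_right hcount' (by positivity)

end SlopeWalk

section Branching

/-- Each dyadic interval of generation `e` contains at most `N` dyadic intervals of generation
`e + f` that meet `S`. -/
def BranchingLE (S : Set ℝ) (e f : ℕ) (N : ℝ) : Prop :=
  ∀ (z₀ : ℤ) (W : Finset ℤ), (∀ z ∈ W, ∃ t ∈ S, dyad (e + f) t = z ∧ dyad e t = z₀) → W.card ≤ N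

/-- The dyadic Hausdorff content of `S` in dimension `τ` is at least `h`. A pair `(i, k)` stands for
the dyadic interval `{t | dyad i t = k}`, of length `2 ^ (-i)`; covers are finite. -/
def DyadicContentGE (S : Set ℝ) (τ h : ℝ) : Prop :=
  ∀ I : Finset (ℕ × ℤ), (∀ t ∈ S, ∃ x ∈ I, dyad x.1 t = x.2) →
    h ≤ ∑ x ∈ I, (2 : ℝ) ^ (-(τ * x.1))

lemma exists_dyad_cover_of_abs_le {S : Set ℝ} {B : ℕ} (hS : ∀ t ∈ S, |t| ≤ B) (e : ℕ) :
    ∃ Z : Finset ℤ, (∀ t ∈ S, dyad e t ∈ Z) ∧ (Z.card : ℝ) ≤ (2 * B + 1) * 2 ^ e := by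
  refine ⟨Finset.Icc (-(B * 2 ^ e)) (B * 2 ^ e), fun t ht => Finset.mem_Icc.2 ?_, ?_⟩
  · have hpos : (0 : ℝ) < 2 ^ e := by positivity
    obtain ⟨hlower, hupper⟩ := abs_le.1 (hS t ht)
    refine ⟨Int.le_floor.2 (by push_cast; nlinarith), ?_⟩
    have : (dyad e t : ℝ) ≤ (B * 2 ^ e : ℤ) :=
      (Int.floor_le _).trans (by push_cast; nlinarith)
    exact_mod_cast this
  · have hcard : (B : ℤ) * 2 ^ e + 1 - -(B * 2 ^ e) = ((2 * (B * 2 ^ e) + 1 : ℕ) : ℤ) := by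
      push_cast
      ring
    rw [Int.card_Icc, hcard, Int.toNat_natCast]
    push_cast
    linarith [one_le_pow₀ (one_le_two (α := ℝ)) (n := e)]

lemma BranchingLE.exists_dyad_cover {S : Set ℝ} {e f : ℕ} {N : ℝ} (h : BranchingLE S e f N)
    {Z : Finset ℤ} (hZ : ∀ t ∈ S, dyad e t ∈ Z) :
    ∃ Z' : Finset ℤ, (∀ t ∈ S, dyad (e + f) t ∈ Z') ∧ (Z'.card : ℝ) ≤ Z.card * N := by
  classical
  set W : ℤ → Finset ℤ := fun z₀ => (dyadDescendants f z₀).filter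
    fun z => ∃ t ∈ S, dyad (e + f) t = z ∧ dyad e t = z₀
  refine ⟨Z.biUnion W, fun t ht => Finset.mem_biUnion.2 ⟨dyad e t, hZ t ht, ?_⟩, ?_⟩
  · exact Finset.mem_filter.2 ⟨dyad_add_mem_dyadDescendants e f t, t, ht, rfl, rfl⟩
  · calc ((Z.biUnion W).card : ℝ) ≤ ∑ z₀ ∈ Z, ((W z₀).card : ℝ) := by
          exact_mod_cast Finset.card_biUnion_le
      _ ≤ ∑ _z₀ ∈ Z, N :=
          Finset.sum_le_sum fun z₀ _ => h z₀ _ fun z hz => (Finset.mem_filter.1 hz).2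
      _ = Z.card * N := by rw [Finset.sum_const, nsmul_eq_mul]

lemma exists_dyad_cover_of_branchingLE {S : Set ℝ} {B e a : ℕ} (hS : ∀ t ∈ S, |t| ≤ B) {τ : ℝ}
    (hno : ∀ b < a, BranchingLE S (2 ^ b * e) (2 ^ b * e) (2 ^ (τ * (2 ^ b * e)))) :
    ∃ Z : Finset ℤ, (∀ t ∈ S, dyad (2 ^ a * e) t ∈ Z) ∧
      (Z.card : ℝ) ≤ (2 * B + 1) * 2 ^ e * 2 ^ (τ * ((2 ^ a - 1) * e)) := by
  induction a with
  | zero => simpa using exists_dyad_cover_of_abs_le hS e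
  | succ a ih =>
    obtain ⟨Z, hZ, hcard⟩ := ih fun b hb => hno b (by omega)
    obtain ⟨Z', hZ', hcard'⟩ := (hno a (by omega)).exists_dyad_cover hZ
    refine ⟨Z', by rwa [pow_succ, mul_two, add_mul], hcard'.trans ?_⟩
    calc (Z.card : ℝ) * 2 ^ (τ * (2 ^ a * e))
        ≤ (2 * B + 1) * 2 ^ e * 2 ^ (τ * ((2 ^ a - 1) * e)) * 2 ^ (τ * (2 ^ a * e)) := by gcongr
      _ = (2 * B + 1) * 2 ^ e * 2 ^ (τ * ((2 ^ (a + 1) - 1) * e)) := by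
          rw [mul_assoc, ← Real.rpow_add two_pos]
          ring_nf

lemma two_pow_mul_rpow_mul_rpow_neg_le {τ : ℝ} {a e j : ℕ} (ha : 4 ≤ 2 ^ a * τ)
    (hτ : 0 ≤ τ) (hj : 2 ^ j ≤ e) :
    (2 : ℝ) ^ e * 2 ^ (τ / 4 * ((2 ^ a - 1) * e)) * 2 ^ (-(τ * (2 ^ a * e))) ≤
      2 ^ (-(2 * 2 ^ j : ℝ)) := by
  rw [← Real.rpow_natCast, ← Real.rpow_add two_pos, ← Real.rpow_add two_pos]
  refine Real.rpow_le_rpow_of_exponent_le one_le_two ?_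
  have hj' : (2 : ℝ) ^ j ≤ e := by exact_mod_cast hj
  have he : (0 : ℝ) ≤ e := Nat.cast_nonneg e
  nlinarith [mul_nonneg hτ he, mul_le_mul_of_nonneg_right ha he]

lemma sum_biUnion_le_sum_sum {ι κ : Type*} [DecidableEq κ] (s : Finset ι) (t : ι → Finset κ)
    {g : κ → ℝ} (hg : ∀ x, 0 ≤ g x) :
    ∑ x ∈ s.biUnion t, g x ≤ ∑ i ∈ s, ∑ x ∈ t i, g x := by
  classical
  induction s using Finset.induction_on with
  | empty => simp
  | insert i s hi ih =>
    rw [Finset.biUnion_insert, Finset.sum_insert hi]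
    have := Finset.sum_union_inter (s₁ := t i) (s₂ := s.biUnion t) (f := g)
    have := Finset.sum_nonneg (s := t i ∩ s.biUnion t) fun x _ => hg x
    linarith

lemma DyadicContentGE.le_sum {T : Set ℝ} {τ h : ℝ} (hT : DyadicContentGE T τ h) {M : ℕ}
    {S : ℕ → Set ℝ} (hcov : ∀ t ∈ T, ∃ k < M, t ∈ S k) {e : ℕ → ℕ} {Z : ℕ → Finset ℤ}
    (hZ : ∀ k < M, ∀ t ∈ S k, dyad (e k) t ∈ Z k) :
    h ≤ ∑ k ∈ Finset.range M, (Z k).card * (2 : ℝ) ^ (-(τ * e k)) := by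
  classical
  refine (hT ((Finset.range M).biUnion fun k => (Z k).image (Prod.mk (e k))) fun t ht => ?_).trans
    ((sum_biUnion_le_sum_sum _ _ fun x => by positivity).trans_eq
      (Finset.sum_congr rfl fun k _ => ?_))
  · obtain ⟨k, hk, htk⟩ := hcov t ht
    exact ⟨(e k, dyad (e k) t), Finset.mem_biUnion.2
      ⟨k, Finset.mem_range.2 hk, Finset.mem_image_of_mem _ (hZ k hk t htk)⟩, rfl⟩
  · rw [Finset.sum_image fun _ _ _ _ h => (Prod.mk.inj h).2]
    simp only [Finset.sum_const, nsmul_eq_mul]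

lemma exists_not_branchingLE {T : Set ℝ} {S : ℕ → Set ℝ} {B M a j₀ : ℕ} (hB : ∀ t ∈ T, |t| ≤ B)
    {τ h : ℝ} (hτ : 0 ≤ τ) (hS : ∀ k, S k ⊆ T) (hcov : ∀ t ∈ T, ∃ k < M, t ∈ S k)
    (hT : DyadicContentGE T τ h) (ha : 4 ≤ 2 ^ a * τ)
    (hj : M * (2 * B + 1) * (2 : ℝ) ^ (-(2 * 2 ^ j₀ : ℝ)) < h) :
    ∃ k < M, ∃ b < a, ¬ BranchingLE (S k) (2 ^ (j₀ + k * a + b)) (2 ^ (j₀ + k * a + b))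
      (2 ^ (τ / 4 * 2 ^ (j₀ + k * a + b))) := by
  by_contra! hno
  set e : ℕ → ℕ := fun k => 2 ^ (j₀ + k * a)
  have hcover (k : ℕ) (hk : k < M) : ∃ Z : Finset ℤ, (∀ t ∈ S k, dyad (2 ^ a * e k) t ∈ Z) ∧
      (Z.card : ℝ) ≤ (2 * B + 1) * 2 ^ e k * 2 ^ (τ / 4 * ((2 ^ a - 1) * e k)) := by
    refine exists_dyad_cover_of_branchingLE (fun t ht => hB t (hS k ht)) fun b hb => ?_
    have hscale : 2 ^ b * e k = 2 ^ (j₀ + k * a + b) := by rw [← pow_add, add_comm]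
    have hscale' : (2 : ℝ) ^ b * e k = 2 ^ (j₀ + k * a + b) := by exact_mod_cast hscale
    rw [hscale, hscale']
    exact hno k hk b hb
  choose! Z hZ hcard using hcover
  have hcost (k : ℕ) (hk : k < M) : (Z k).card * (2 : ℝ) ^ (-(τ * (2 ^ a * e k : ℕ))) ≤
      (2 * B + 1) * 2 ^ (-(2 * 2 ^ j₀ : ℝ)) := by
    have hje : 2 ^ j₀ ≤ e k := Nat.pow_le_pow_right two_pos (by omega)
    have hdecay := two_pow_mul_rpow_mul_rpow_neg_le ha hτ hje
    push_cast
    calc _ ≤ (2 * B + 1) * 2 ^ e k * 2 ^ (τ / 4 * ((2 ^ a - 1) * e k)) *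
          (2 : ℝ) ^ (-(τ * (2 ^ a * e k))) := by
          gcongr
          exact hcard k hk
      _ = (2 * B + 1) * ((2 : ℝ) ^ e k * 2 ^ (τ / 4 * ((2 ^ a - 1) * e k)) *
          2 ^ (-(τ * (2 ^ a * e k)))) := by ring
      _ ≤ _ := by gcongr
  have hsum := (hT.le_sum hcov hZ).trans
    (Finset.sum_le_sum fun k hk => hcost k (Finset.mem_range.1 hk))
  rw [Finset.sum_const, Finset.card_range, nsmul_eq_mul, ← mul_assoc] at hsum
  linarith

end Branching

section ScaleBound

lemma eventually_linear_le_two_pow (x y : ℝ) : ∀ᶠ a : ℕ in atTop, x * a + y ≤ 2 ^ a := by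
  have hlin : Tendsto (fun a : ℕ => (a : ℝ) ^ 1 / 2 ^ a) atTop (𝓝 0) :=
    tendsto_pow_const_div_const_pow_of_one_lt 1 one_lt_two
  have hconst : Tendsto (fun a : ℕ => (a : ℝ) ^ 0 / 2 ^ a) atTop (𝓝 0) :=
    tendsto_pow_const_div_const_pow_of_one_lt 0 one_lt_two
  have hsum := (hlin.const_mul x).add (hconst.const_mul y)
  rw [mul_zero, mul_zero, add_zero] at hsum
  filter_upwards [hsum.eventually (gt_mem_nhds zero_lt_one)] with a ha
  rw [pow_one, pow_zero, ← mul_div_assoc, mul_one_div, ← add_div,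
    div_lt_one (by positivity)] at ha
  exact ha.le

lemma exists_chain_length {C u : ℝ} (hu : u < 1) :
    ∃ K : ℕ, 1 ≤ K ∧ C * (40 * K) ^ u < K + 1 := by
  have hlarge : Tendsto (fun K : ℕ => (40 * K : ℝ) ^ (1 - u)) atTop atTop :=
    (tendsto_rpow_atTop (by linarith)).comp
      (tendsto_natCast_atTop_atTop.const_mul_atTop (by norm_num))
  obtain ⟨K, hK1, hK⟩ := ((eventually_ge_atTop 1).and
    (hlarge.eventually_ge_atTop (40 * C))).exists
  refine ⟨K, hK1, ?_⟩
  have hK0 : (0 : ℝ) < K := by exact_mod_cast hK1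
  rw [Real.rpow_sub (by positivity), Real.rpow_one, le_div_iff₀ (by positivity)] at hK
  nlinarith

lemma exists_tree_parameters (K : ℕ) {τ : ℝ} (hτ : 0 < τ) :
    ∃ a L : ℕ, 0 < L ∧ a + 9 ≤ τ * L / 4 ∧ ((L : ℝ) + 1) * K ≤ τ / 2 * 2 ^ a := by
  obtain ⟨a, ha⟩ := (eventually_linear_le_two_pow (4 / τ * K / (τ / 2))
    ((4 / τ * 9 + 2) * K / (τ / 2))).exists
  set L : ℕ := ⌈4 * (a + 9) / τ⌉₊
  have hLlower : 4 * (a + 9) / τ ≤ L := Nat.le_ceil _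
  have hLupper : (L : ℝ) < 4 * (a + 9) / τ + 1 := Nat.ceil_lt_add_one (by positivity)
  refine ⟨a, L, Nat.ceil_pos.2 (by positivity), ?_, ?_⟩
  · rw [div_le_iff₀ hτ] at hLlower
    linarith
  · calc ((L : ℝ) + 1) * K ≤ (4 * (a + 9) / τ + 2) * K :=
          mul_le_mul_of_nonneg_right (by linarith) (Nat.cast_nonneg K)
      _ = τ / 2 * (4 / τ * K / (τ / 2) * a + (4 / τ * 9 + 2) * K / (τ / 2)) := by
          field_simp
          ring
      _ ≤ τ / 2 * 2 ^ a := by gcongr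

lemma exists_eq_mul_add {τ : ℝ} (hτ : 0 < τ) {f L e : ℕ} (hL : 0 < L)
    (he : 4 / τ * (f + L) + (f + L) ≤ e) :
    ∃ m g : ℕ, e = L * m + g ∧ f ≤ g ∧ g ≤ f + L ∧ (g : ℝ) ≤ τ * L * m / 4 := by
  have hfe : f ≤ e := by
    have : (0 : ℝ) ≤ 4 / τ * (f + L) := by positivity
    have : (f : ℝ) ≤ e := by linarith
    exact_mod_cast this
  have hdiv : L * ((e - f) / L) + (e - f) % L = e - f := Nat.div_add_mod (e - f) L
  have hmod := Nat.mod_lt (e - f) hL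
  refine ⟨(e - f) / L, (e - f) % L + f, by omega, by omega, by omega, ?_⟩
  set m := (e - f) / L
  have hsmall : ((e - f) % L + f : ℕ) ≤ (f : ℝ) + L := by exact_mod_cast by omega
  have hsplit : (e : ℝ) = L * m + ((e - f) % L + f : ℕ) := by exact_mod_cast (by omega)
  calc (((e - f) % L + f : ℕ) : ℝ) ≤ f + L := hsmall
    _ = τ / 4 * (4 / τ * (f + L)) := by field_simp
    _ ≤ τ / 4 * (L * m) := mul_le_mul_of_nonneg_left (by linarith) (by positivity)
    _ = τ * L * m / 4 := by ring

lemma card_le_card_image_ediv_mul (W : Finset ℤ) (g : ℕ) :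
    W.card ≤ (W.image fun z => z / 2 ^ g).card * 2 ^ g := by
  rw [mul_comm]
  refine Finset.card_le_mul_card_image W _ fun y _ => ?_
  rw [← card_dyadDescendants g y]
  refine Finset.card_le_card fun z hz => ?_
  have hpos : (0 : ℤ) < 2 ^ g := by positivity
  rw [dyadDescendants, Finset.mem_Ico, ← (Finset.mem_filter.1 hz).2]
  exact ⟨Int.ediv_mul_le _ hpos.ne', Int.lt_ediv_add_one_mul_self _ hpos⟩

lemma lt_card_image_ediv {a L m g rank e : ℕ} {τ : ℝ} (hτ : 0 ≤ τ) (hL : a + 9 ≤ τ * L / 4)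
    (hrank : rank ≤ τ * m / 2) (hg : g ≤ τ * L * m / 4) (he : L * m ≤ e) {W : Finset ℤ}
    (hW : (2 : ℝ) ^ (τ * e) < W.card) :
    (2 * (64 * (2 * 2 ^ a) + 1)) ^ m * 2 ^ (L * rank) < (W.image fun z => z / 2 ^ g).card := by
  have hbase : 2 * (64 * (2 * 2 ^ a) + 1) ≤ 2 ^ (a + 9) := by
    have := Nat.one_le_two_pow (n := a)
    rw [pow_add]
    omega
  have hexponent : (((a + 9) * m + L * rank + g : ℕ) : ℝ) ≤ τ * e := by
    have he' : (L : ℝ) * m ≤ e := by exact_mod_cast he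
    have := mul_le_mul_of_nonneg_right hL (Nat.cast_nonneg (α := ℝ) m)
    have := mul_le_mul_of_nonneg_left hrank (Nat.cast_nonneg (α := ℝ) L)
    have := mul_le_mul_of_nonneg_left he' hτ
    push_cast
    linarith
  have hcard : 2 ^ ((a + 9) * m + L * rank + g) < W.card := by
    rw [← Nat.cast_lt (α := ℝ), Nat.cast_pow, Nat.cast_ofNat, ← Real.rpow_natCast]
    exact (Real.rpow_le_rpow_of_exponent_le one_le_two hexponent).trans_lt hW
  refine lt_of_mul_lt_mul_right ?_ (Nat.zero_le (2 ^ g))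
  calc (2 * (64 * (2 * 2 ^ a) + 1)) ^ m * 2 ^ (L * rank) * 2 ^ g
      ≤ (2 ^ (a + 9)) ^ m * 2 ^ (L * rank) * 2 ^ g := by gcongr
    _ = 2 ^ ((a + 9) * m + L * rank + g) := by rw [← pow_mul, ← pow_add, ← pow_add]
    _ < W.card := hcard
    _ ≤ _ := card_le_card_image_ediv_mul W g

lemma neg_log_mul_le_of_pow_mul_pow_le {q c lam τ : ℝ} {κ k' m rank : ℕ} (hq : 0 < q) (hq1 : q < 1)
    (hc : 0 < c) (hκ : 0 < κ) (hk' : k' ≤ κ * (τ / 4)) (hrank : τ * m / 2 ≤ rank + 1)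
    (h : (c / 4 / Real.exp lam) ^ κ * q ^ (k' * m) ≤ q ^ (κ * rank)) :
    -Real.log q * (τ * m / 4 - 1) ≤ lam + Real.log (4 / c) := by
  have hlog := Real.log_le_log (by positivity) h
  rw [Real.log_mul (by positivity) (by positivity), Real.log_pow, Real.log_pow, Real.log_pow,
    Real.log_div (by positivity) (by positivity), Real.log_exp, ← inv_div 4 c,
    Real.log_inv] at hlog
  push_cast at hlog
  have hκ0 : (0 : ℝ) < κ := by exact_mod_cast hκ
  have hQ : 0 < -Real.log q := neg_pos.2 (Real.log_neg hq hq1)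
  refine le_of_mul_le_mul_left ?_ hκ0
  have : -Real.log q * (k' * m) ≤ -Real.log q * (κ * (τ / 4) * m) := by gcongr
  have : κ * -Real.log q * (τ * m / 2 - 1) ≤ κ * -Real.log q * rank := by
    gcongr
    linarith
  linarith

lemma scale_mul_le {Q τ L f g m e x : ℝ} (hL : 0 < L) (hQτ : 0 ≤ Q * τ) (he : e = L * m + g)
    (hg : g ≤ f + L) (h : Q * (τ * m / 4 - 1) ≤ Q * τ / (8 * L) * e + x) :
    Q * τ / (8 * L) * e ≤ x + Q + Q * τ / 4 * (f / L + 1) := by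
  have hm : e / L - (f / L + 1) ≤ m := by
    rw [sub_le_iff_le_add, div_le_iff₀ hL, he, add_mul, add_mul, div_mul_cancel₀ _ hL.ne']
    linarith
  have hmain : Q * τ / 4 * (e / L) = 2 * (Q * τ / (8 * L) * e) := by
    field_simp
    ring
  have := mul_le_mul_of_nonneg_left hm (show 0 ≤ Q * τ / 4 by positivity)
  linarith

lemma exists_branchingLE_of_packingBound (f : ℕ) {K : ℕ} (hK1 : 1 ≤ K) {τ : ℝ} (hτ : 0 < τ) :
    ∃ ε : ℝ, 0 < ε ∧ ∀ᶠ e : ℕ in atTop, ∀ (ι : Type) [Fintype ι] [Nonempty ι] (α β : ι → ℝ) (n : ℕ)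
      (r₀ C u : ℝ) (T : Set ℝ), 1 ≤ n → C * (40 * K) ^ u < K + 1 → r₀ ≤ 1 / 2 ^ (n + 2 * e) →
      (∀ t ∈ T, ∑ i ∈ Finset.range n, scaleDefect α β t e i ≤ ε * e * n * Fintype.card ι) →
      (∀ t ∈ T, 5 * n * (Fintype.card ι : ℝ) ≤ ∑ i ∈ Finset.range n,
        (jointEntropy α β t i (i + 2 * e) - jointEntropy α β t (i + f) (i + 2 * e))) →
      (∀ t ∈ T, PackingBound (fun p => α p + t * β p) r₀ C u) →
      BranchingLE T e e (2 ^ (τ * e)) := by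
  obtain ⟨a, L, hL, haL, hLK⟩ := exists_tree_parameters K hτ
  have hL0 : (0 : ℝ) < L := by exact_mod_cast hL
  have hκ : 1 ≤ 2 * 2 ^ a := Nat.succ_le_of_lt (by positivity)
  set Q : ℝ := -Real.log (decayBase (2 * 2 ^ a))
  have hQ : 0 < Q := neg_pos.2 (Real.log_neg (decayBase_pos hκ) (decayBase_lt_one hκ))
  have : 0 < Real.log 2 := Real.log_pos one_lt_two
  set c : ℝ := 1 / (2 * (f * Real.log 2) + 2)
  have hc : 0 < c := by positivity
  set A : ℝ := Q * τ / (8 * L)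
  have hA : 0 < A := by positivity
  refine ⟨c ^ 2 / 16 * A, by positivity, ?_⟩
  filter_upwards [tendsto_natCast_atTop_atTop.eventually_ge_atTop (4 / τ * (f + L) + (f + L)),
    tendsto_natCast_atTop_atTop.eventually_gt_atTop
      ((8 * (14 / c + 1) / c + Real.log (4 / c) + Q + Q * τ / 4 * (f / L + 1)) / A)]
    with e hsplit hlarge ι _ _ α β n r₀ C u T hn hK hr₀ hdef hgain hpack z₀ W hW
  by_contra! hcard
  obtain ⟨m, g, he, hfg, hgL, hg⟩ := exists_eq_mul_add hτ hL hsplit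
  set lam : ℝ := 8 * (2 * (c ^ 2 / 16 * A * e + 7) / c + 1) / c
  have hW' : ∀ z ∈ W.image (fun z => z / 2 ^ g), ∃ t ∈ T, dyad (e + L * m) t = z ∧ dyad e t = z₀ :=
    Finset.forall_mem_image.2 fun z hz => by
      obtain ⟨t, ht, rfl, htz⟩ := hW z hz
      refine ⟨t, ht, ?_, htz⟩
      rw [← dyad_add_ediv (e + L * m) g, add_assoc, ← he]
  have hdecay := neg_log_mul_le_of_pow_mul_pow_le (decayBase_pos hκ) (decayBase_lt_one hκ) hc hκ
    (τ := τ) (by push_cast; linarith) (Nat.lt_floor_add_one (τ * m / 2)).le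
    (pow_mul_decayBase_pow_le (X := c ^ 2 / 16 * A * e) (lam := lam) (k' := (L + 1) * K) hn he hfg
      (by positivity) hc (one_div_mul_cancel (by positivity)).le (by positivity)
      (mul_div_cancel₀ _ hc.ne').ge hK1 hK le_rfl hr₀ hdef hgain hpack hW'
      (lt_card_image_ediv hτ.le haL (Nat.floor_le (by positivity)) hg (by omega) hcard))
  have hlam : lam = A * e + 8 * (14 / c + 1) / c := by
    simp only [lam]
    field_simp
    ring
  rw [hlam, add_assoc] at hdecay
  have := scale_mul_le (f := f) (g := g) hL0 (mul_pos hQ hτ).le (by exact_mod_cast he)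
    (by exact_mod_cast hgL) hdecay
  rw [div_lt_iff₀' hA] at hlarge
  linarith

end ScaleBound

section ProjectionTheorem

section Gain

variable {ι : Type*} {α β v : ι → ℝ} {r₀ C u R : ℝ} {l : ℕ}

lemma PackingBound.card_le_of_two_le_abs_sub (hv : PackingBound v r₀ C u) (hr₀ : r₀ ≤ 1 / 2 ^ l)
    (hR : 1 / 2 ^ l ≤ R) (hdist : ∀ p q, |v p - v q| ≤ R) {Y : Finset ℤ}
    (hY : ∀ y ∈ Y, ∃ q, dyad l (v q) = y) (hsep : ∀ y ∈ Y, ∀ y' ∈ Y, y ≠ y' → 2 ≤ |y - y'|) :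
    (Y.card : ℝ) ≤ C * (R / (1 / 2 ^ l)) ^ u := by
  classical
  choose q hq using fun y : Y => hY y y.2
  have hinj : Function.Injective fun y => v (q y) := fun y y' h =>
    Subtype.ext ((hq y).symm.trans ((congrArg (dyad l) h).trans (hq y')))
  rw [← Finset.card_attach, ← Finset.card_image_of_injective _ hinj]
  refine hv _ ?_ _ _ hr₀ hR ?_ ?_
  · rw [Finset.coe_image]
    rintro _ ⟨y, _, rfl⟩
    exact ⟨q y, rfl⟩
  · simp only [Finset.forall_mem_image]
    refine fun y _ y' _ hne => one_div_two_pow_le_abs_sub ?_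
    rw [hq, hq]
    exact hsep y y.2 y' y'.2 fun h => hne (by rw [Subtype.ext h])
  · simp only [Finset.forall_mem_image]
    exact fun y _ y' _ => hdist _ _

variable [Fintype ι]

lemma PackingBound.card_image_dyad_le (hv : PackingBound v r₀ C u) (hr₀ : r₀ ≤ 1 / 2 ^ l)
    (hR : 1 / 2 ^ l ≤ R) (hdist : ∀ p q, |v p - v q| ≤ R) :
    ((Finset.univ.image fun p => dyad l (v p)).card : ℝ) ≤ 2 * (C * (R / (1 / 2 ^ l)) ^ u) := by
  set Z := Finset.univ.image fun p => dyad l (v p)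
  have hZ : ∀ z ∈ Z, ∃ q, dyad l (v q) = z := by simp [Z]
  have heven := hv.card_le_of_two_le_abs_sub hr₀ hR hdist (Y := Z.filter fun z => z % 2 = 0)
    (fun z hz => hZ z (Finset.mem_filter.1 hz).1) fun y hy y' hy' hne => by
      have := (Finset.mem_filter.1 hy).2
      have := (Finset.mem_filter.1 hy').2
      rcases abs_cases (y - y') with h | h <;> omega
  have hodd := hv.card_le_of_two_le_abs_sub hr₀ hR hdist (Y := Z.filter fun z => ¬ z % 2 = 0)
    (fun z hz => hZ z (Finset.mem_filter.1 hz).1) fun y hy y' hy' hne => by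
      have := (Finset.mem_filter.1 hy).2
      have := (Finset.mem_filter.1 hy').2
      rcases abs_cases (y - y') with h | h <;> omega
  rw [← Finset.card_filter_add_card_filter_not (s := Z) (fun z => z % 2 = 0), Nat.cast_add]
  linarith

lemma abs_add_mul_sub_le {a a' b b' t B : ℝ} (ha : a ∈ Ico 0 1) (ha' : a' ∈ Ico 0 1)
    (hb : b ∈ Ico 0 1) (hb' : b' ∈ Ico 0 1) (ht : |t| ≤ B) :
    |a + t * b - (a' + t * b')| ≤ 1 + B := by
  have haa' : |a - a'| ≤ 1 := abs_le.2 ⟨by linarith [ha.1, ha'.2], by linarith [ha.2, ha'.1]⟩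
  have hbb' : |b - b'| ≤ 1 := abs_le.2 ⟨by linarith [hb.1, hb'.2], by linarith [hb.2, hb'.1]⟩
  calc |a + t * b - (a' + t * b')| = |(a - a') + t * (b - b')| := by congr 1; ring
    _ ≤ |a - a'| + |t| * |b - b'| := by rw [← abs_mul]; exact abs_add_le _ _
    _ ≤ 1 + B * 1 := by
      have := (abs_nonneg t).trans ht
      gcongr
    _ = 1 + B := by rw [mul_one]

lemma log_two_mul_mul_div_rpow {B : ℝ} (hC : 0 < C) (hB : 0 ≤ B) :
    Real.log (2 * (C * ((1 + B) / (1 / 2 ^ l)) ^ u)) =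
      Real.log (2 * C) + u * Real.log (1 + B) + u * (l * Real.log 2) := by
  rw [← mul_assoc, Real.log_mul (by positivity) (by positivity), Real.log_rpow (by positivity),
    div_div_eq_mul_div, div_one, Real.log_mul (x := 1 + B) (by positivity) (by positivity),
    Real.log_pow]
  ring

lemma PackingBound.five_mul_card_le_sum {t : ℝ} (hα : ∀ p, α p ∈ Ico 0 1) (hβ : ∀ p, β p ∈ Ico 0 1)
    {n E f : ℕ} (hinj : Function.Injective fun p => (dyad n (α p), dyad n (β p)))
    (hβinj : ∀ p q, dyad n (β p) = dyad n (β q) → β p = β q) {B : ℝ} (ht : |t| ≤ B)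
    {σ : ℝ} (hC : 0 < C) (hσ : σ * n ≤ Real.log (Fintype.card ι))
    (hr₀ : r₀ ≤ 1 / 2 ^ (n + 2 * E)) (hpack : PackingBound (fun p => α p + t * β p) r₀ C u)
    (hf : 10 ≤ f * (σ - u * Real.log 2))
    (hn : f * (u * (2 * E * Real.log 2) + Real.log (2 * C) + u * Real.log (1 + B) +
      f * Real.log 2 + Real.log 8) ≤ 5 * n) {e : ℕ} (he : e ≤ E) :
    5 * n * (Fintype.card ι : ℝ) ≤ ∑ i ∈ Finset.range n,
      (jointEntropy α β t i (i + 2 * e) - jointEntropy α β t (i + f) (i + 2 * e)) := by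
  refine le_trans ?_ (mul_jointEntropy_sub_le_sum α β t n f (2 * e) (n + 2 * E) (by omega))
  have hB0 : 0 ≤ B := (abs_nonneg t).trans ht
  have hR : (1 : ℝ) / 2 ^ (n + 2 * E) ≤ 1 + B := by
    rw [div_le_iff₀ (by positivity)]
    nlinarith [one_le_pow₀ (one_le_two (α := ℝ)) (n := n + 2 * E)]
  have hcells := hpack.card_image_dyad_le hr₀ hR
    fun p q => abs_add_mul_sub_le (hα p) (hα q) (hβ p) (hβ q) ht
  have hpos : 0 < 2 * (C * ((1 + B) / (1 / 2 ^ (n + 2 * E))) ^ u) := by positivity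
  have hvalues := card_mul_log_card_le_jointEntropy_add α β t (fun p => (hβ p).1)
    (fun p => (hβ p).2) (l := n + 2 * E) (fun p => Finset.mem_image.2 ⟨p, Finset.mem_univ p, rfl⟩)
    hpos hcells
  rw [log_two_mul_mul_div_rpow hC hB0] at hvalues
  have hcoarse := jointEntropy_le_add_left α β t 0 (n + 2 * E) f
  rw [zero_add] at hcoarse
  have hfine := (jointEntropy_anti α β t (le_refl n) (Nat.le_add_right n (2 * E))).trans
    (jointEntropy_diag_le α β t hinj hβinj)
  set N : ℝ := (Fintype.card ι : ℝ)
  set c : ℝ := u * (2 * E * Real.log 2) + Real.log (2 * C) + u * Real.log (1 + B) +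
    f * Real.log 2 + Real.log 8
  have hcard : N * (σ * n) ≤ N * Real.log N := by gcongr
  have hdrop : N * ((σ - u * Real.log 2) * n - c) ≤
      jointEntropy α β t f (n + 2 * E) - jointEntropy α β t n (n + 2 * E) := by
    push_cast at hvalues
    simp only [c]
    linarith
  calc 5 * n * N ≤ N * (f * (σ - u * Real.log 2) * n - f * c) := by
        nlinarith [mul_le_mul_of_nonneg_right hf (Nat.cast_nonneg (α := ℝ) n),
          Nat.cast_nonneg (α := ℝ) (Fintype.card ι)]
    _ = f * (N * ((σ - u * Real.log 2) * n - c)) := by ring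
    _ ≤ _ := mul_le_mul_of_nonneg_left hdrop (Nat.cast_nonneg f)

end Gain

lemma add_mul_add_lt_of_lt {j₀ a b k M : ℕ} (hk : k < M) (hb : b < a) :
    j₀ + k * a + b < j₀ + M * a := by
  have := Nat.mul_le_mul_right a hk
  rw [Nat.succ_mul] at this
  omega

lemma exists_forall_block_le {a M j₀ : ℕ} {x : ℕ → ℝ} (hx : ∀ j, 0 ≤ x j) {X ε : ℝ}
    (hsum : ∑ j ∈ Finset.range (j₀ + M * a), x j ≤ X) (hX : X < M * ε) :
    ∃ k < M, ∀ b < a, x (j₀ + k * a + b) ≤ ε := by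
  by_contra! hcon
  choose! b hb hbx using hcon
  have hinj : Set.InjOn (fun k => j₀ + k * a + b k) (Finset.range M) := by
    intro k hk k' hk' (h : j₀ + k * a + b k = j₀ + k' * a + b k')
    have hbk := hb k (Finset.mem_range.1 hk)
    have hbk' := hb k' (Finset.mem_range.1 hk')
    rcases lt_trichotomy k k' with hlt | heq | hlt
    · have := add_mul_add_lt_of_lt (j₀ := j₀) hlt hbk
      omega
    · exact heq
    · have := add_mul_add_lt_of_lt (j₀ := j₀) hlt hbk'
      omega
  have hsub : (Finset.range M).image (fun k => j₀ + k * a + b k) ⊆ Finset.range (j₀ + M * a) :=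
    Finset.image_subset_iff.2 fun k hk => Finset.mem_range.2
      (add_mul_add_lt_of_lt (Finset.mem_range.1 hk) (hb k (Finset.mem_range.1 hk)))
  have hlower : M * ε ≤ ∑ k ∈ Finset.range M, x (j₀ + k * a + b k) := by
    simpa using Finset.card_nsmul_le_sum (Finset.range M) _ ε fun k hk =>
      (hbx k (Finset.mem_range.1 hk)).le
  have hupper := Finset.sum_le_sum_of_subset_of_nonneg hsub fun j _ _ => hx j
  rw [Finset.sum_image hinj] at hupper
  linarith

lemma exists_initial_scale (c : ℝ) {h : ℝ} (hh : 0 < h) (e₀ : ℕ) :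
    ∃ j₀ : ℕ, c * (2 : ℝ) ^ (-(2 * 2 ^ j₀ : ℝ)) < h ∧ e₀ ≤ 2 ^ j₀ := by
  have hscale : Tendsto (fun j : ℕ => (2 * 2 ^ j : ℝ)) atTop atTop :=
    (tendsto_pow_atTop_atTop_of_one_lt one_lt_two).const_mul_atTop two_pos
  have hzero : Tendsto (fun j : ℕ => c * (2 : ℝ) ^ (-(2 * 2 ^ j : ℝ))) atTop (𝓝 0) := by
    simpa using ((tendsto_rpow_atBot_of_base_gt_one 2 one_lt_two).comp
      (tendsto_neg_atTop_atBot.comp hscale)).const_mul c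
  exact ((hzero.eventually (gt_mem_nhds hh)).and
    ((tendsto_pow_atTop_atTop_of_one_lt one_lt_two).eventually_ge_atTop e₀)).exists

lemma exists_forall_scaleDefect_le {ι : Type*} [Fintype ι] [Nonempty ι] (α β : ι → ℝ) (t : ℝ)
    {n M a j₀ : ℕ} (hn : 2 ^ (j₀ + M * a) ≤ n) {ε : ℝ} (hM : 3 < M * ε) :
    ∃ k < M, ∀ b < a, ∑ i ∈ Finset.range n, scaleDefect α β t (2 ^ (j₀ + k * a + b)) i ≤
      ε * (2 ^ (j₀ + k * a + b) : ℕ) * n * Fintype.card ι := by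
  have hpos : (0 : ℝ) < n * Fintype.card ι := by
    have : 0 < n := Nat.two_pow_pos _ |>.trans_le hn
    positivity
  obtain ⟨k, hk, hblock⟩ := exists_forall_block_le (ε := ε * (n * Fintype.card ι))
    (fun j => div_nonneg (Finset.sum_nonneg fun i _ => scaleDefect_nonneg α β t (2 ^ j) i)
      (by positivity : (0 : ℝ) ≤ 2 ^ j))
    (sum_sum_scaleDefect_le α β t hn) (by nlinarith)
  refine ⟨k, hk, fun b hb => ?_⟩
  have hdefect := hblock b hb
  rw [div_le_iff₀ (by positivity)] at hdefect
  push_cast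
  linarith

lemma log_card_prod_self_ge {A : Finset ℝ} {s : ℝ} {n : ℕ} (hA : (2 : ℝ) ^ (s * n) ≤ A.card) :
    2 * s * Real.log 2 * n ≤ Real.log (Fintype.card (A × A)) := by
  have hpos : (0 : ℝ) < A.card := lt_of_lt_of_le (by positivity) hA
  have hlog := Real.log_le_log (by positivity) hA
  rw [Real.log_rpow two_pos] at hlog
  rw [Fintype.card_prod, Fintype.card_coe, Nat.cast_mul, Real.log_mul hpos.ne' hpos.ne']
  linarith

lemma injective_dyad_prod {A : Finset ℝ} {n : ℕ} (hA : Set.InjOn (dyad n) A) :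
    Function.Injective fun p : A × A => (dyad n (p.1 : ℝ), dyad n (p.2 : ℝ)) := fun p q hpq =>
  Prod.ext (Subtype.ext (hA p.1.2 q.1.2 (Prod.mk.inj hpq).1))
    (Subtype.ext (hA p.2.2 q.2.2 (Prod.mk.inj hpq).2))

lemma exists_not_branchingLE_of_small_scaleDefect {ι : Type*} [Fintype ι] [Nonempty ι]
    (α β : ι → ℝ) {T : Set ℝ} {B M a j₀ n : ℕ} (hB : ∀ t ∈ T, |t| ≤ B) {τ h ε : ℝ} (hτ : 0 ≤ τ)
    (hT : DyadicContentGE T τ h) (ha : 4 ≤ 2 ^ a * τ)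
    (hj : M * (2 * B + 1) * (2 : ℝ) ^ (-(2 * 2 ^ j₀ : ℝ)) < h) (hn : 2 ^ (j₀ + M * a) ≤ n)
    (hM : 3 < M * ε) :
    ∃ e : ℕ, 2 ^ j₀ ≤ e ∧ e ≤ 2 ^ (j₀ + M * a) ∧ ∃ S ⊆ T,
      (∀ t ∈ S, ∑ i ∈ Finset.range n, scaleDefect α β t e i ≤ ε * e * n * Fintype.card ι) ∧
      ¬ BranchingLE S e e (2 ^ (τ / 4 * e)) := by
  set S : ℕ → Set ℝ := fun k => {t ∈ T | ∀ b < a,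
    ∑ i ∈ Finset.range n, scaleDefect α β t (2 ^ (j₀ + k * a + b)) i ≤
      ε * (2 ^ (j₀ + k * a + b) : ℕ) * n * Fintype.card ι}
  obtain ⟨k, hk, b, hb, hbranching⟩ := exists_not_branchingLE (S := S) hB hτ
    (fun k => sep_subset _ _)
    (fun t ht => (exists_forall_scaleDefect_le α β t hn hM).imp fun k hk => ⟨hk.1, ht, hk.2⟩)
    hT ha hj
  refine ⟨2 ^ (j₀ + k * a + b), Nat.pow_le_pow_right two_pos (by omega),
    Nat.pow_le_pow_right two_pos (add_mul_add_lt_of_lt hk hb).le, S k, sep_subset _ _,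
    fun t ht => ht.2 b hb, ?_⟩
  rwa [Nat.cast_pow, Nat.cast_ofNat]

/-- A discretised projection theorem. If every image satisfied the packing bound, then each slope
would lose entropy at most scales, whereas pigeonholing over blocks of scales yields a scale at
which a branching set of slopes has small defect. -/
theorem exists_not_packingBound {s u C τ h : ℝ} (hu1 : u < 1) (hus : u < 2 * s) (hC : 0 < C)
    (hτ : 0 < τ) (hh : 0 < h) (B : ℕ) :
    ∃ n N : ℕ, 1 ≤ n ∧ ∀ (A : Finset ℝ) (T : Set ℝ), (∀ a ∈ A, a ∈ Ico 0 1) →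
      Set.InjOn (dyad n) A → (2 : ℝ) ^ (s * n) ≤ A.card → (∀ t ∈ T, |t| ≤ B) →
      DyadicContentGE T τ h →
      ∃ t ∈ T, ¬ PackingBound (fun p : A × A => (p.1 : ℝ) + t * p.2) (1 / 2 ^ N) C u := by
  have hγ : 0 < 2 * s * Real.log 2 - u * Real.log 2 := by
    rw [← sub_mul]
    exact mul_pos (sub_pos.2 hus) (Real.log_pos one_lt_two)
  obtain ⟨f, hf⟩ := exists_nat_gt (10 / (2 * s * Real.log 2 - u * Real.log 2))
  rw [div_lt_iff₀ hγ] at hf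
  obtain ⟨K, hK1, hK⟩ := exists_chain_length (C := C) hu1
  obtain ⟨ε, hε, hbranching⟩ := exists_branchingLE_of_packingBound f hK1 (div_pos hτ four_pos)
  obtain ⟨e₀, hbranching⟩ := eventually_atTop.1 hbranching
  obtain ⟨M, hM⟩ := exists_nat_gt (3 / ε)
  rw [div_lt_iff₀ hε] at hM
  obtain ⟨a, ha⟩ := pow_unbounded_of_one_lt (4 / τ) (one_lt_two (α := ℝ))
  rw [div_lt_iff₀ hτ] at ha
  obtain ⟨j₀, hj₀, he₀⟩ := exists_initial_scale (M * (2 * B + 1)) hh e₀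
  set E := 2 ^ (j₀ + M * a)
  obtain ⟨n, hn⟩ := exists_nat_gt (max (E : ℝ) (f * (u * (2 * E * Real.log 2) +
    Real.log (2 * C) + u * Real.log (1 + B) + f * Real.log 2 + Real.log 8) / 5))
  obtain ⟨hEn, hn5⟩ := max_lt_iff.1 hn
  rw [div_lt_iff₀' (by norm_num)] at hn5
  replace hEn : E ≤ n := by exact_mod_cast hEn.le
  have hn1 : 1 ≤ n := Nat.one_le_two_pow.trans hEn
  refine ⟨n, n + 2 * E, hn1, fun A T hA hAinj hAcard hT hcont => ?_⟩
  by_contra! hpack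
  have : Nonempty A := Finset.Nonempty.to_subtype <| Finset.card_pos.1 <| by
    exact_mod_cast (Real.rpow_pos_of_pos two_pos _).trans_le hAcard
  obtain ⟨e, hj₀e, heE, S, hST, hdefect, hnot⟩ := exists_not_branchingLE_of_small_scaleDefect
    (fun p : A × A => (p.1 : ℝ)) (fun p => p.2) hT hτ.le hcont ha.le hj₀ hEn hM
  exact hnot <| hbranching e (he₀.trans hj₀e) (A × A) _ _ n (1 / 2 ^ (n + 2 * E)) C u S hn1 hK
    (one_div_pow_le_one_div_pow_of_le one_le_two (by omega)) hdefect
    (fun t ht => (hpack t (hST ht)).five_mul_card_le_sum (fun p => hA _ p.1.2) (fun p => hA _ p.2.2)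
      (injective_dyad_prod hAinj) (fun p q h => hAinj p.2.2 q.2.2 h) (hT t (hST ht)) hC
      (log_card_prod_self_ge hAcard) le_rfl hf.le hn5.le heE)
    fun t ht => hpack t (hST ht)

end ProjectionTheorem

section AssouadCover

/-- The covering condition in the definition of the Assouad dimension, with exponent `α` and
constant `C`. -/
def AssouadCover (E : Set ℝ) (α C : ℝ) : Prop :=
  ∀ x ∈ E, ∀ r R : ℝ, 0 < r → r < R →
    ∃ 𝒰 : Finset (Set ℝ), (E ∩ closedBall x R ⊆ ⋃ U ∈ 𝒰, U) ∧
      (∀ U ∈ 𝒰, ediam U ≤ ENNReal.ofReal r) ∧ ((𝒰.card : ℝ) ≤ C * (R / r) ^ α)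

lemma assouadDim_eq (E : Set ℝ) :
    assouadDim E = sInf {α : ℝ | 0 ≤ α ∧ ∃ C : ℝ, 0 < C ∧ AssouadCover E α C} := rfl

lemma AssouadCover.assouadDim_le {E : Set ℝ} {α C : ℝ} (hα : 0 ≤ α) (hC : 0 < C)
    (hE : AssouadCover E α C) : assouadDim E ≤ α := by
  rw [assouadDim_eq]
  exact csInf_le ⟨0, fun β hβ => hβ.1⟩ ⟨hα, C, hC, hE⟩

lemma ediam_le_ofReal {U : Set ℝ} {r : ℝ} (h : ∀ x ∈ U, ∀ y ∈ U, |x - y| ≤ r) :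
    ediam U ≤ ENNReal.ofReal r := by
  refine ediam_le fun x hx y hy => ?_
  rw [edist_dist, Real.dist_eq]
  exact ENNReal.ofReal_le_ofReal (h x hx y hy)

lemma abs_sub_le_of_ediam_le {U : Set ℝ} {r : ℝ} (hr : 0 ≤ r) (h : ediam U ≤ ENNReal.ofReal r)
    {x y : ℝ} (hx : x ∈ U) (hy : y ∈ U) : |x - y| ≤ r := by
  have hdist := edist_le_of_ediam_le hx hy h
  rwa [edist_dist, ENNReal.ofReal_le_ofReal_iff hr, Real.dist_eq] at hdist

lemma ediam_dyad_le (j : ℕ) (z : ℤ) {r : ℝ} (hr : 1 / 2 ^ j ≤ r) :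
    ediam {y : ℝ | dyad j y = z} ≤ ENNReal.ofReal r :=
  ediam_le_ofReal fun _ hv _ hw => (abs_sub_lt_of_dyad_eq (Eq.trans hv (Eq.symm hw))).le.trans hr

lemma AssouadCover.card_le {E : Set ℝ} {α C : ℝ} (hE : AssouadCover E α C) {D : Finset ℝ}
    (hD : ∀ x ∈ D, x ∈ E) (hne : D.Nonempty) {r R : ℝ} (hr : 0 < r) (hrR : r < R)
    (hsep : ∀ x ∈ D, ∀ y ∈ D, x ≠ y → r < |x - y|) (hR : ∀ x ∈ D, ∀ y ∈ D, |x - y| ≤ R) :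
    (D.card : ℝ) ≤ C * (R / r) ^ α := by
  obtain ⟨x₀, hx₀⟩ := hne
  obtain ⟨𝒰, hcov, hdiam, hcard⟩ := hE x₀ (hD x₀ hx₀) r R hr hrR
  have hU : ∀ x ∈ D, ∃ U ∈ 𝒰, x ∈ U := fun x hx => by
    simpa using hcov ⟨hD x hx, by rw [mem_closedBall, Real.dist_eq]; exact hR x hx x₀ hx₀⟩
  choose! U hU𝒰 hxU using hU
  have hinj : Set.InjOn U D := by
    intro x hx y hy hxy
    by_contra hne
    have := hsep x hx y hy hne
    have := abs_sub_le_of_ediam_le hr.le (hdiam _ (hU𝒰 x hx)) (hxU x hx)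
      (hxy ▸ hxU y hy)
    linarith
  exact (Nat.cast_le.2 (Finset.card_le_card_of_injOn U hU𝒰 hinj)).trans hcard

lemma card_Icc_floor_le {a b : ℝ} (hab : a ≤ b) :
    ((Finset.Icc ⌊a⌋ ⌊b⌋).card : ℝ) ≤ b - a + 2 := by
  have hfloor := Int.floor_le_floor hab
  rw [Int.card_Icc, ← Int.cast_natCast, Int.toNat_of_nonneg (by omega)]
  push_cast
  linarith [Int.floor_le b, Int.lt_floor_add_one a]

lemma assouadCover_one (E : Set ℝ) : AssouadCover E 1 4 := by
  classical
  intro x _ r R hr hrR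
  refine ⟨(Finset.Icc ⌊(x - R) / r⌋ ⌊(x + R) / r⌋).image fun z => {y : ℝ | ⌊y / r⌋ = z},
    ?_, ?_, ?_⟩
  · rintro y ⟨_, hy⟩
    rw [mem_closedBall, Real.dist_eq, abs_le] at hy
    simp only [Finset.mem_image, mem_iUnion, exists_prop]
    refine ⟨_, ⟨⌊y / r⌋, Finset.mem_Icc.2 ⟨?_, ?_⟩, rfl⟩, rfl⟩ <;>
      exact Int.floor_le_floor (div_le_div_of_nonneg_right (by linarith) hr.le)
  · simp only [Finset.forall_mem_image]
    refine fun z _ => ediam_le_ofReal fun v (hv : ⌊v / r⌋ = z) w (hw : ⌊w / r⌋ = z) => ?_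
    have hvw := Int.abs_sub_lt_one_of_floor_eq_floor (hv.trans hw.symm)
    rw [← sub_div, abs_div, abs_of_pos hr, div_lt_one hr] at hvw
    exact hvw.le
  · have : 1 < R / r := (one_lt_div hr).2 hrR
    have hdiff : (x + R) / r - (x - R) / r = 2 * (R / r) := by ring
    calc _ ≤ ((Finset.Icc ⌊(x - R) / r⌋ ⌊(x + R) / r⌋).card : ℝ) :=
          Nat.cast_le.2 Finset.card_image_le
      _ ≤ 2 * (R / r) + 2 := hdiff ▸ card_Icc_floor_le (by linarith)
      _ ≤ 4 * (R / r) ^ (1 : ℝ) := by rw [Real.rpow_one]; linarith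

lemma BranchingLE.mono {S S' : Set ℝ} {e f : ℕ} {N : ℝ} (h : BranchingLE S' e f N) (hS : S ⊆ S') :
    BranchingLE S e f N := fun z₀ W hW =>
  h z₀ W fun z hz => (hW z hz).imp fun _ ht => ⟨hS ht.1, ht.2⟩

lemma exists_dyad_cover_of_forall_branchingLE {S : Set ℝ} {ℓ n : ℕ} {q : ℝ}
    (h : ∀ j ≥ ℓ, BranchingLE S j n q) {Y : Finset ℤ} (hY : ∀ t ∈ S, dyad ℓ t ∈ Y) (k : ℕ) :
    ∃ Z : Finset ℤ, (∀ t ∈ S, dyad (ℓ + k * n) t ∈ Z) ∧ (Z.card : ℝ) ≤ Y.card * q ^ k := by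
  have hq : 0 ≤ q := by simpa using h ℓ le_rfl 0 ∅ (by simp)
  induction k with
  | zero => exact ⟨Y, by simpa using hY, by simp⟩
  | succ k ih =>
    obtain ⟨Z, hZ, hcard⟩ := ih
    obtain ⟨Z', hZ', hcard'⟩ := (h _ (Nat.le_add_right ℓ (k * n))).exists_dyad_cover hZ
    refine ⟨Z', by simpa only [add_assoc, Nat.succ_mul] using hZ', hcard'.trans ?_⟩
    rw [pow_succ, ← mul_assoc]
    gcongr

lemma exists_one_div_two_pow_le_and_pow_le {n ℓ : ℕ} (hn : 1 ≤ n) {s r Q : ℝ} (hs : 0 ≤ s)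
    (hr : 0 < r) (hQ1 : 1 ≤ Q) (hQ : 1 / 2 ^ ℓ ≤ Q * r) :
    ∃ k : ℕ, 1 / 2 ^ (ℓ + k * n) ≤ r ∧ ((2 : ℝ) ^ (s * n)) ^ k ≤ 2 ^ (s * n) * Q ^ s := by
  have h2ℓ : (0 : ℝ) < 2 ^ ℓ := by positivity
  rcases le_or_gt (1 / 2 ^ ℓ) r with hcoarse | hfine
  · refine ⟨0, by simpa using hcoarse, ?_⟩
    rw [pow_zero]
    exact one_le_mul_of_one_le_of_one_le (Real.one_le_rpow one_le_two (by positivity))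
      (Real.one_le_rpow hQ1 hs)
  · rw [lt_div_iff₀ h2ℓ] at hfine
    have h2n : (1 : ℝ) < 2 ^ n := one_lt_pow₀ one_lt_two (by omega)
    obtain ⟨k, hk, hk'⟩ := exists_nat_pow_near_of_lt_one (x := r * 2 ^ ℓ) (y := 1 / 2 ^ n)
      (by positivity) hfine.le (by positivity) ((div_lt_one (by positivity)).2 h2n)
    rw [div_pow, one_pow, div_lt_iff₀ (by positivity), ← pow_mul, mul_comm n] at hk
    rw [div_pow, one_pow, le_div_iff₀ (by positivity), ← pow_mul] at hk'
    rw [div_le_iff₀ h2ℓ] at hQ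
    refine ⟨k + 1, ?_, ?_⟩
    · rw [pow_add, div_le_iff₀ (by positivity), ← mul_assoc]
      exact hk.le
    · have hkQ : (2 : ℝ) ^ (n * k) ≤ Q :=
        le_of_mul_le_mul_left (a := r * 2 ^ ℓ) (by linarith) (by positivity)
      calc ((2 : ℝ) ^ (s * n)) ^ (k + 1) = 2 ^ (s * n) * (2 ^ (n * k)) ^ s := by
            rw [pow_succ', ← Real.rpow_natCast (2 ^ (s * n)) k, ← Real.rpow_mul two_pos.le,
              ← Real.rpow_natCast 2 (n * k), ← Real.rpow_mul two_pos.le, Nat.cast_mul]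
            ring_nf
        _ ≤ 2 ^ (s * n) * Q ^ s := by gcongr

lemma exists_cover_of_forall_branchingLE {S : Set ℝ} {ℓ n : ℕ} (hn : 1 ≤ n) {s : ℝ} (hs : 0 ≤ s)
    (h : ∀ j ≥ ℓ, BranchingLE S j n (2 ^ (s * n))) {Y : Finset ℤ} (hY : ∀ t ∈ S, dyad ℓ t ∈ Y)
    {r Q : ℝ} (hr : 0 < r) (hQ1 : 1 ≤ Q) (hQ : 1 / 2 ^ ℓ ≤ Q * r) :
    ∃ 𝒰 : Finset (Set ℝ), (S ⊆ ⋃ U ∈ 𝒰, U) ∧ (∀ U ∈ 𝒰, ediam U ≤ ENNReal.ofReal r) ∧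
      ((𝒰.card : ℝ) ≤ Y.card * (2 ^ (s * n) * Q ^ s)) := by
  classical
  obtain ⟨k, hscale, hpow⟩ := exists_one_div_two_pow_le_and_pow_le hn hs hr hQ1 hQ
  obtain ⟨Z, hZ, hcard⟩ := exists_dyad_cover_of_forall_branchingLE h hY k
  refine ⟨Z.image fun z => {y : ℝ | dyad (ℓ + k * n) y = z}, fun x hx => ?_, ?_, ?_⟩
  · exact mem_biUnion (Finset.mem_image_of_mem _ (hZ x hx)) rfl
  · simp only [Finset.forall_mem_image]
    exact fun z _ => ediam_dyad_le _ z hscale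
  · refine (Nat.cast_le.2 Finset.card_image_le).trans (hcard.trans ?_)
    gcongr

lemma exists_dyad_cover_closedBall {ℓ₀ : ℕ} (x : ℝ) {R : ℝ} (hR0 : 0 < R) (hR : R ≤ 1 / 2 ^ ℓ₀) :
    ∃ ℓ ≥ ℓ₀, ∃ Y : Finset ℤ, (∀ y ∈ closedBall x R, dyad ℓ y ∈ Y) ∧ 1 / 2 ^ ℓ ≤ 2 * R ∧
      Y.card = 5 := by
  have hone : (1 : ℝ) / 2 ^ ℓ₀ ≤ 1 := (div_le_one (by positivity)).2 (one_le_pow₀ one_le_two)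
  obtain ⟨ℓ, hlower, hupper⟩ := exists_nat_pow_near_of_lt_one (x := R) (y := 1 / 2)
    hR0 (hR.trans hone) (by norm_num) (by norm_num)
  have h2ℓ : (0 : ℝ) < 2 ^ ℓ := by positivity
  refine ⟨ℓ, ?_, Finset.Icc (dyad ℓ x - 2) (dyad ℓ x + 2), fun y hy => ?_, ?_, ?_⟩
  · have hlt := hlower.trans_le hR
    rw [← one_div_pow, pow_lt_pow_iff_right_of_lt_one₀ (by norm_num) (by norm_num)] at hlt
    omega
  · rw [mem_closedBall, Real.dist_eq] at hy
    have hscaled : |2 ^ ℓ * y - 2 ^ ℓ * x| < ((2 : ℤ) : ℝ) := by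
      have hyx := hy.trans hupper
      rw [one_div_pow, le_div_iff₀ h2ℓ] at hyx
      rw [← mul_sub, abs_mul, abs_of_pos h2ℓ]
      push_cast
      linarith
    have := abs_le.1 (abs_floor_sub_floor_le hscaled)
    rw [Finset.mem_Icc]
    unfold dyad
    omega
  · rw [pow_succ, one_div_pow] at hlower
    linarith
  · rw [Int.card_Icc]
    omega

lemma exists_dyad_cover_inter_closedBall {F : Set ℝ} {M : ℕ} (hF : ∀ x ∈ F, |x| ≤ M) (ℓ₀ : ℕ)
    (x : ℝ) {R : ℝ} (hR0 : 0 < R) :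
    ∃ ℓ ≥ ℓ₀, ∃ Y : Finset ℤ, (∀ y ∈ F ∩ closedBall x R, dyad ℓ y ∈ Y) ∧ 1 / 2 ^ ℓ ≤ 2 * R ∧
      (Y.card : ℝ) ≤ 5 + (2 * M + 1) * 2 ^ ℓ₀ := by
  rcases le_or_gt R (1 / 2 ^ ℓ₀) with hsmall | hlarge
  · obtain ⟨ℓ, hℓ, Y, hY, hscale, hcard⟩ := exists_dyad_cover_closedBall x hR0 hsmall
    refine ⟨ℓ, hℓ, Y, fun y hy => hY y hy.2, hscale, ?_⟩
    rw [hcard]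
    exact le_add_of_nonneg_right (by positivity)
  · obtain ⟨Y, hY, hcard⟩ := exists_dyad_cover_of_abs_le hF ℓ₀
    exact ⟨ℓ₀, le_rfl, Y, fun y hy => hY y hy.1, by linarith, by linarith⟩

lemma assouadCover_of_forall_branchingLE {F : Set ℝ} {M : ℕ} (hF : ∀ x ∈ F, |x| ≤ M) {s : ℝ}
    (hs : 0 ≤ s) {n : ℕ} (hn : 1 ≤ n) {ℓ₀ : ℕ} (h : ∀ ℓ ≥ ℓ₀, BranchingLE F ℓ n (2 ^ (s * n))) :
    AssouadCover F s ((5 + (2 * M + 1) * 2 ^ ℓ₀) * (2 ^ (s * n) * 2 ^ s)) := by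
  intro x _ r R hr hrR
  have hRr : 1 < R / r := (one_lt_div hr).2 hrR
  obtain ⟨ℓ, hℓ, Y, hY, hscale, hcard⟩ :=
    exists_dyad_cover_inter_closedBall hF ℓ₀ x (hr.trans hrR)
  obtain ⟨𝒰, hcov, hdiam, h𝒰⟩ := exists_cover_of_forall_branchingLE hn hs
    (fun j hj => (h j (hℓ.trans hj)).mono inter_subset_left) hY hr (Q := 2 * (R / r))
    (by linarith) (by rwa [mul_assoc, div_mul_cancel₀ _ hr.ne'])
  refine ⟨𝒰, hcov, hdiam, h𝒰.trans ?_⟩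
  rw [Real.mul_rpow two_pos.le (by positivity), ← mul_assoc, ← mul_assoc, ← mul_assoc]
  gcongr

lemma exists_not_branchingLE_of_lt_assouadDim {F : Set ℝ} {M : ℕ} (hF : ∀ x ∈ F, |x| ≤ M) {s : ℝ}
    (hs : 0 ≤ s) (hsF : s < assouadDim F) {n : ℕ} (hn : 1 ≤ n) (ℓ₀ : ℕ) :
    ∃ ℓ ≥ ℓ₀, ¬ BranchingLE F ℓ n (2 ^ (s * n)) := by
  by_contra! h
  exact hsF.not_ge <|
    (assouadCover_of_forall_branchingLE hF hs hn h).assouadDim_le hs (by positivity)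

end AssouadCover

section Slopes

lemma one_div_two_pow_rpow (j : ℕ) (τ : ℝ) : ((1 : ℝ) / 2 ^ j) ^ τ = 2 ^ (-(τ * j)) := by
  rw [one_div, ← Real.rpow_natCast, ← Real.rpow_neg two_pos.le, ← Real.rpow_mul two_pos.le,
    neg_mul, mul_comm]

lemma one_div_two_pow_le_of_sum_le {I : Finset (ℕ × ℤ)} {τ c : ℝ} (hτ : 0 < τ)
    (hsum : ∑ x ∈ I, (2 : ℝ) ^ (-(τ * x.1)) ≤ c) {x : ℕ × ℤ} (hx : x ∈ I) :
    1 / 2 ^ x.1 ≤ c ^ τ⁻¹ := by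
  have hterm : ((1 : ℝ) / 2 ^ x.1) ^ τ ≤ c := by
    rw [one_div_two_pow_rpow]
    exact (Finset.single_le_sum (f := fun x : ℕ × ℤ => (2 : ℝ) ^ (-(τ * x.1)))
      (fun _ _ => by positivity) hx).trans hsum
  exact (Real.le_rpow_inv_iff_of_pos (by positivity) (hterm.trans' (by positivity)) hτ).2 hterm

lemma sum_ediam_rpow_le {I : Finset (ℕ × ℤ)} {U : ℕ × ℤ → Set ℝ} {τ κ : ℝ} (hτ : 0 ≤ τ)
    (hκ : 0 ≤ κ) (hdiam : ∀ x ∈ I, ediam (U x) ≤ ENNReal.ofReal (κ * (1 / 2 ^ x.1))) :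
    ∑ x : I, ediam (U x) ^ τ ≤
      ENNReal.ofReal (κ ^ τ * ∑ x ∈ I, (2 : ℝ) ^ (-(τ * x.1))) := by
  rw [Finset.sum_coe_sort I fun x => ediam (U x) ^ τ, Finset.mul_sum,
    ENNReal.ofReal_sum_of_nonneg fun _ _ => by positivity]
  refine Finset.sum_le_sum fun x hx => ?_
  rw [← one_div_two_pow_rpow, ← Real.mul_rpow hκ (by positivity),
    ← ENNReal.ofReal_rpow_of_nonneg (by positivity) hτ]
  exact ENNReal.rpow_le_rpow (hdiam x hx) hτ

lemma exists_pos_forall_le_sum_of_cover {G : Set ℝ} {τ κ : ℝ} (hτ : 0 < τ) (hκ : 0 ≤ κ)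
    (hG : μH[τ] G ≠ 0) :
    ∃ h : ℝ, 0 < h ∧ ∀ (I : Finset (ℕ × ℤ)) (U : ℕ × ℤ → Set ℝ),
      (∀ x ∈ I, ediam (U x) ≤ ENNReal.ofReal (κ * (1 / 2 ^ x.1))) → (∀ t ∈ G, ∃ x ∈ I, t ∈ U x) →
      h ≤ ∑ x ∈ I, (2 : ℝ) ^ (-(τ * x.1)) := by
  by_contra! hcheap
  choose I U hdiam hcov hsum using fun k : ℕ => hcheap (1 / (k + 1)) Nat.one_div_pos_of_nat
  have hlim : Tendsto (fun k : ℕ => (1 : ℝ) / (k + 1)) atTop (𝓝 0) :=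
    tendsto_one_div_add_atTop_nhds_zero_nat
  have hdiam_lim :
      Tendsto (fun k : ℕ => ENNReal.ofReal (κ * (1 / ((k : ℝ) + 1)) ^ τ⁻¹)) atTop (𝓝 0) := by
    have hreal := (hlim.rpow_const (p := τ⁻¹) (Or.inr (by positivity))).const_mul κ
    rw [Real.zero_rpow (by positivity), mul_zero] at hreal
    simpa only [ENNReal.ofReal_zero] using ENNReal.tendsto_ofReal hreal
  have hsum_lim :
      Tendsto (fun k : ℕ => ENNReal.ofReal (κ ^ τ * (1 / ((k : ℝ) + 1)))) atTop (𝓝 0) := by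
    simpa only [mul_zero, ENNReal.ofReal_zero] using
      ENNReal.tendsto_ofReal (hlim.const_mul (κ ^ τ))
  have hle := Measure.hausdorffMeasure_le_liminf_sum (ι := fun k => I k) τ G _ hdiam_lim
    (fun k x => U k x)
    (Eventually.of_forall fun k x => (hdiam k x x.2).trans <| ENNReal.ofReal_le_ofReal <|
      mul_le_mul_of_nonneg_left (one_div_two_pow_le_of_sum_le hτ (hsum k).le x.2) hκ)
    (Eventually.of_forall fun k t ht => by simpa using hcov k t ht)
  have hbound : ∀ k : ℕ, ∑ x : I k, ediam (U k x) ^ τ ≤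
      ENNReal.ofReal (κ ^ τ * (1 / ((k : ℝ) + 1))) := fun k =>
    (sum_ediam_rpow_le hτ.le hκ (hdiam k)).trans <| ENNReal.ofReal_le_ofReal <|
      mul_le_mul_of_nonneg_left (hsum k).le (by positivity)
  exact hG <| le_bot_iff.1 <| hle.trans <|
    (liminf_le_liminf (Eventually.of_forall hbound)).trans hsum_lim.liminf_eq.le

lemma exists_dyadicContentGE_image {G : Set ℝ} {τ κ : ℝ} (hτ : 0 < τ) (hκ : 0 < κ)
    (hG : μH[τ] G ≠ 0) :
    ∃ h : ℝ, 0 < h ∧ ∀ g : ℝ → ℝ, (∀ x ∈ G, ∀ y ∈ G, κ * |x - y| ≤ |g x - g y|) →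
      DyadicContentGE (g '' G) τ h := by
  obtain ⟨h, hh, hcover⟩ := exists_pos_forall_le_sum_of_cover hτ (inv_nonneg.2 hκ.le) hG
  refine ⟨h, hh, fun g hg I hI => hcover I (fun i => {x ∈ G | dyad i.1 (g x) = i.2}) ?_ ?_⟩
  · refine fun i _ => ediam_le_ofReal fun x hx y hy => ?_
    rw [inv_mul_eq_div, le_div_iff₀' hκ]
    exact (hg x hx.1 y hy.1).trans (abs_sub_lt_of_dyad_eq (hx.2.trans hy.2.symm)).le
  · intro x hx
    obtain ⟨i, hi, hxi⟩ := hI _ (mem_image_of_mem g hx)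
    exact ⟨i, hi, hx, hxi⟩

lemma hausdorffMeasure_inter_Icc_ne_zero {F : Set ℝ} {τ : ℝ≥0} {z δ : ℝ} (hδ : 0 < δ)
    (hz : ∀ t ∈ 𝓝[F] z, (τ : ℝ≥0∞) < dimH t) :
    μH[(τ : ℝ)] (F ∩ Icc (z - δ) (z + δ)) ≠ 0 := by
  have hmem : F ∩ Icc (z - δ) (z + δ) ∈ 𝓝[F] z := inter_mem self_mem_nhdsWithin <|
    mem_nhdsWithin_of_mem_nhds (Icc_mem_nhds (by linarith) (by linarith))
  rw [hausdorffMeasure_of_lt_dimH (hz _ hmem)]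
  exact ENNReal.top_ne_zero

lemma dimH_diff_singleton (F : Set ℝ) (x : ℝ) : dimH (F \ {x}) = dimH F := by
  refine le_antisymm (dimH_mono sdiff_subset) ?_
  calc dimH F ≤ dimH (F \ {x} ∪ {x}) := dimH_mono fun y hy => by
        by_cases h : y = x
        · exact Or.inr h
        · exact Or.inl ⟨hy, h⟩
    _ = dimH (F \ {x}) := by rw [dimH_union, dimH_singleton, max_eq_left zero_le]

lemma exists_lt_forall_nhdsWithin_lt_dimH {F : Set ℝ} {τ : ℝ≥0} (hτ : (τ : ℝ≥0∞) < dimH F) :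
    ∃ v ∈ F, ∃ w ∈ F, v < w ∧ (∀ t ∈ 𝓝[F] v, (τ : ℝ≥0∞) < dimH t) ∧
      ∀ t ∈ 𝓝[F] w, (τ : ℝ≥0∞) < dimH t := by
  obtain ⟨x, hxF, hx⟩ := exists_mem_nhdsWithin_lt_dimH_of_lt_dimH hτ
  obtain ⟨y, ⟨hyF, hyx⟩, hy⟩ :=
    exists_mem_nhdsWithin_lt_dimH_of_lt_dimH (hτ.trans_eq (dimH_diff_singleton F x).symm)
  have hyF_nhds : ∀ t ∈ 𝓝[F] y, (τ : ℝ≥0∞) < dimH t := fun t ht =>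
    hy t (nhdsWithin_mono y sdiff_subset ht)
  rcases lt_or_gt_of_ne (show y ≠ x from hyx) with hlt | hgt
  · exact ⟨y, hyF, x, hxF, hlt, hyF_nhds, hx⟩
  · exact ⟨x, hxF, y, hyF, hgt, hx, hyF_nhds⟩

lemma exists_separated_Icc_hausdorffMeasure_ne_zero {F : Set ℝ}
    (hpos : F ⊆ Ioi (0 : ℝ)) {τ : ℝ≥0} (hτ : (τ : ℝ≥0∞) < dimH F) :
    ∃ a b c d : ℝ, 0 < a ∧ a < b ∧ b < c ∧ c < d ∧ μH[(τ : ℝ)] (F ∩ Icc a b) ≠ 0 ∧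
      μH[(τ : ℝ)] (F ∩ Icc c d) ≠ 0 := by
  obtain ⟨v, hvF, w, -, hvw, hv, hw⟩ := exists_lt_forall_nhdsWithin_lt_dimH hτ
  have hv0 : 0 < v := hpos hvF
  obtain ⟨δ, hδ, hδmin⟩ := exists_between (show 0 < min v ((w - v) / 2) from
    lt_min hv0 (by linarith))
  obtain ⟨hδv, hδvw⟩ := lt_min_iff.1 hδmin
  exact ⟨v - δ, v + δ, w - δ, w + δ, by linarith, by linarith, by linarith, by linarith,
    hausdorffMeasure_inter_Icc_ne_zero hδ hv, hausdorffMeasure_inter_Icc_ne_zero hδ hw⟩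

lemma abs_log_le_of_mem_Icc {a d x : ℝ} (ha : 0 < a) (hx : x ∈ Icc a d) :
    |Real.log x| ≤ |Real.log a| + |Real.log d| := by
  have hax := Real.log_le_log ha hx.1
  have hxd := Real.log_le_log (ha.trans_le hx.1) hx.2
  rw [abs_le]
  constructor
  · linarith [neg_abs_le (Real.log a), abs_nonneg (Real.log d)]
  · linarith [le_abs_self (Real.log d), abs_nonneg (Real.log a)]

lemma abs_log_mul_le {x p M Λ : ℝ} (hp : 0 ≤ p) (hpM : p ≤ M) (hΛ : |Real.log x| ≤ Λ) :
    |Real.log x * p| ≤ M * Λ := by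
  rw [abs_mul, abs_of_nonneg hp, mul_comm M]
  exact mul_le_mul hΛ hpM hp ((abs_nonneg _).trans hΛ)

lemma rpow_le_exp {x p M Λ : ℝ} (hx : 0 < x) (hp : 0 ≤ p) (hpM : p ≤ M)
    (hΛ : |Real.log x| ≤ Λ) : x ^ p ≤ Real.exp (M * Λ) := by
  rw [Real.rpow_def_of_pos hx, Real.exp_le_exp]
  exact (abs_le.1 (abs_log_mul_le hp hpM hΛ)).2

lemma exp_neg_le_rpow {x p M Λ : ℝ} (hx : 0 < x) (hp : 0 ≤ p) (hpM : p ≤ M)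
    (hΛ : |Real.log x| ≤ Λ) : Real.exp (-(M * Λ)) ≤ x ^ p := by
  rw [Real.rpow_def_of_pos hx, Real.exp_le_exp]
  exact (abs_le.1 (abs_log_mul_le hp hpM hΛ)).1

lemma hasDerivAt_rpow_mul_log {x : ℝ} (hx : 0 < x) (p : ℝ) :
    HasDerivAt (fun z => z ^ p * Real.log z) ((1 + p * Real.log x) * x ^ p / x) x := by
  refine ((Real.hasDerivAt_rpow_const (p := p) (Or.inl hx.ne')).mul
    (Real.hasDerivAt_log hx.ne')).congr_deriv ?_
  rw [Real.rpow_sub_one hx.ne']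
  field_simp
  ring

lemma mul_abs_sub_le_abs_rpow_mul_log_sub {a b p c Λ M : ℝ} (ha : 0 < a) (hp : 0 ≤ p)
    (hpM : p ≤ M) (hbM : b ≤ M) (hΛ : ∀ x ∈ Icc a b, |Real.log x| ≤ Λ)
    (hder : ∀ x ∈ Icc a b, c ≤ |1 + p * Real.log x|) {x y : ℝ} (hx : x ∈ Icc a b)
    (hy : y ∈ Icc a b) :
    c * Real.exp (-(M * Λ)) / M * |x - y| ≤ |x ^ p * Real.log x - y ^ p * Real.log y| := by
  wlog hxy : y < x generalizing x y
  · rcases (not_lt.1 hxy).eq_or_lt with rfl | hlt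
    · simp
    · rw [abs_sub_comm x, abs_sub_comm (x ^ p * _)]
      exact this hy hx hlt
  have hy0 : 0 < y := ha.trans_le hy.1
  obtain ⟨ξ, ⟨hyξ, hξx⟩, hslope⟩ := exists_hasDerivAt_eq_slope (fun z => z ^ p * Real.log z) _ hxy
    (fun z hz => (hasDerivAt_rpow_mul_log
      (hy0.trans_le hz.1) p).continuousAt.continuousWithinAt)
    (fun z hz => hasDerivAt_rpow_mul_log (hy0.trans hz.1) p)
  have hξ0 : 0 < ξ := hy0.trans hyξ
  have hξab : ξ ∈ Icc a b := ⟨hy.1.trans hyξ.le, hξx.le.trans hx.2⟩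
  rw [eq_div_iff (by linarith)] at hslope
  rw [← hslope, abs_mul, abs_div, abs_mul, abs_of_pos hξ0,
    abs_of_pos (Real.rpow_pos_of_pos hξ0 p)]
  refine mul_le_mul_of_nonneg_right ?_ (abs_nonneg _)
  exact div_le_div₀ (by positivity) (mul_le_mul (hder ξ hξab)
    (exp_neg_le_rpow hξ0 hp hpM (hΛ ξ hξab)) (by positivity) (abs_nonneg _))
    hξ0 (hξab.2.trans hbM)

-- `1 + p * L` vanishes for at most one `L`; if it is small at `L₁` and at `L₂`, then so is
-- `p * (L₂ - L₁)`, hence also `p`, and the two values are close to `1`.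
lemma forall_le_abs_one_add_mul_or {l₁ l₂ Λ p c : ℝ} (hl : l₁ < l₂)
    (hp : 0 ≤ p) (hc : c * (1 + 2 * Λ / (l₂ - l₁)) ≤ 1) {S₁ S₂ : Set ℝ}
    (hS₁ : ∀ L ∈ S₁, |L| ≤ Λ ∧ L ≤ l₁) (hS₂ : ∀ L ∈ S₂, l₂ ≤ L) :
    (∀ L ∈ S₁, c ≤ |1 + p * L|) ∨ (∀ L ∈ S₂, c ≤ |1 + p * L|) := by
  by_contra! hsmall
  obtain ⟨⟨L₁, hL₁, hsmall₁⟩, L₂, hL₂, hsmall₂⟩ := hsmall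
  obtain ⟨hL₁Λ, hL₁l⟩ := hS₁ L₁ hL₁
  have hgap : 0 < l₂ - l₁ := sub_pos.2 hl
  have hΛ : 0 ≤ Λ := (abs_nonneg _).trans hL₁Λ
  have hp_gap : p * (l₂ - l₁) ≤ 2 * c := by
    have : p * (l₂ - l₁) ≤ p * (L₂ - L₁) :=
      mul_le_mul_of_nonneg_left (by linarith [hS₂ L₂ hL₂]) hp
    linarith [(abs_lt.1 hsmall₁).1, (abs_lt.1 hsmall₂).2]
  have hpΛ : p * Λ ≤ 2 * c / (l₂ - l₁) * Λ :=
    mul_le_mul_of_nonneg_right ((le_div_iff₀ hgap).2 hp_gap) hΛ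
  have hpL₁ : -(p * Λ) ≤ p * L₁ := by
    rw [← mul_neg]
    exact mul_le_mul_of_nonneg_left (abs_le.1 hL₁Λ).1 hp
  have : c * (1 + 2 * Λ / (l₂ - l₁)) = c + 2 * c / (l₂ - l₁) * Λ := by ring
  linarith [(abs_lt.1 hsmall₁).2]

lemma exists_forall_dyadicContentGE_image_rpow_mul_log {G : Set ℝ} {a b Λ M c τ : ℝ} (ha : 0 < a)
    (hM : 0 < M) (hbM : b ≤ M) (hGab : G ⊆ Icc a b) (hΛ : ∀ x ∈ Icc a b, |Real.log x| ≤ Λ)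
    (hc : 0 < c) (hτ : 0 < τ) (hG : μH[τ] G ≠ 0) :
    ∃ h : ℝ, 0 < h ∧ ∀ p : ℝ, 0 ≤ p → p ≤ M → (∀ x ∈ Icc a b, c ≤ |1 + p * Real.log x|) →
      DyadicContentGE ((fun x => x ^ p * Real.log x) '' G) τ h := by
  obtain ⟨h, hh, hcontent⟩ := exists_dyadicContentGE_image (κ := c * Real.exp (-(M * Λ)) / M)
    hτ (by positivity) hG
  exact ⟨h, hh, fun p hp hpM hder => hcontent _ fun x hx y hy =>
    mul_abs_sub_le_abs_rpow_mul_log_sub ha hp hpM hbM hΛ hder (hGab hx) (hGab hy)⟩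

lemma DyadicContentGE.mono {S : Set ℝ} {τ h h' : ℝ} (hS : DyadicContentGE S τ h) (hh : h' ≤ h) :
    DyadicContentGE S τ h' := fun I hI => hh.trans (hS I hI)

lemma exists_dyadicContentGE_image_rpow_mul_log {F : Set ℝ} (hpos : F ⊆ Ioi (0 : ℝ)) (M : ℝ)
    (hH : 0 < dimH F) :
    ∃ τ h Λ : ℝ, 0 < τ ∧ 0 < h ∧ ∀ p : ℝ, 0 ≤ p → p ≤ M → ∃ G ⊆ F,
      (∀ x ∈ G, |Real.log x| ≤ Λ) ∧ DyadicContentGE ((fun x => x ^ p * Real.log x) '' G) τ h := by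
  obtain ⟨τ, hτ0, hτ⟩ := ENNReal.lt_iff_exists_nnreal_btwn.1 hH
  have hτ0 : 0 < (τ : ℝ) := by exact_mod_cast hτ0
  obtain ⟨a, b, c, d, ha, hab, hbc, hcd, hμ₁, hμ₂⟩ :=
    exists_separated_Icc_hausdorffMeasure_ne_zero hpos hτ
  have hl : Real.log b < Real.log c := Real.log_lt_log (ha.trans hab) hbc
  have : 0 < Real.log c - Real.log b := sub_pos.2 hl
  set Λ : ℝ := |Real.log a| + |Real.log d|
  set ρ : ℝ := 1 / (1 + 2 * Λ / (Real.log c - Real.log b))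
  have hρ0 : 0 < ρ := by positivity
  have hlog : ∀ x ∈ Icc a d, |Real.log x| ≤ Λ := fun x hx => abs_log_le_of_mem_Icc ha hx
  have hlog₁ : ∀ x ∈ Icc a b, |Real.log x| ≤ Λ := fun x hx =>
    hlog x ⟨hx.1, by linarith [hx.2]⟩
  have hlog₂ : ∀ x ∈ Icc c d, |Real.log x| ≤ Λ := fun x hx =>
    hlog x ⟨by linarith [hx.1], hx.2⟩
  obtain ⟨h₁, hh₁, hcontent₁⟩ := exists_forall_dyadicContentGE_image_rpow_mul_log
    (M := max M d) ha (lt_max_of_lt_right (by linarith)) (le_max_of_le_right (by linarith))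
    inter_subset_right hlog₁ hρ0 hτ0 hμ₁
  obtain ⟨h₂, hh₂, hcontent₂⟩ := exists_forall_dyadicContentGE_image_rpow_mul_log
    (M := max M d) (by linarith) (lt_max_of_lt_right (by linarith)) (le_max_right M d)
    inter_subset_right hlog₂ hρ0 hτ0 hμ₂
  refine ⟨τ, min h₁ h₂, Λ, hτ0, lt_min hh₁ hh₂, fun p hp hpM => ?_⟩
  have hder := forall_le_abs_one_add_mul_or hl hp (one_div_mul_cancel (by positivity)).le
    (S₁ := Real.log '' Icc a b) (S₂ := Real.log '' Icc c d)
    (forall_mem_image.2 fun x hx => ⟨hlog₁ x hx, Real.log_le_log (ha.trans_le hx.1) hx.2⟩)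
    (forall_mem_image.2 fun x hx => Real.log_le_log (by linarith) hx.1)
  rw [forall_mem_image, forall_mem_image] at hder
  rcases hder with hder₁ | hder₂
  · exact ⟨F ∩ Icc a b, inter_subset_left, fun x hx => hlog₁ x hx.2,
      (hcontent₁ p hp (le_max_of_le_left hpM) hder₁).mono (min_le_left _ _)⟩
  · exact ⟨F ∩ Icc c d, inter_subset_left, fun x hx => hlog₂ x hx.2,
      (hcontent₂ p hp (le_max_of_le_left hpM) hder₂).mono (min_le_right _ _)⟩

end Slopes

section Conclusion

lemma mul_abs_sub_le_and_le_of_abs_sub_le {x y x' y' c ρ r R : ℝ} (hρ : 0 < ρ)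
    (hx : |x' - c - ρ * x| ≤ ρ * (r / 4)) (hy : |y' - c - ρ * y| ≤ ρ * (r / 4))
    (hr : r ≤ |x - y|) (hR : |x - y| ≤ R) :
    ρ * r / 2 ≤ |x' - y'| ∧ |x' - y'| ≤ 2 * ρ * R := by
  have herror : |x' - y' - ρ * (x - y)| ≤ ρ * r / 2 := by
    calc |x' - y' - ρ * (x - y)| = |(x' - c - ρ * x) - (y' - c - ρ * y)| := by congr 1; ring
      _ ≤ ρ * r / 2 := (abs_sub _ _).trans (by linarith)
  have hscale : |ρ * (x - y)| = ρ * |x - y| := by rw [abs_mul, abs_of_pos hρ]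
  have hlow : ρ * r ≤ ρ * |x - y| := mul_le_mul_of_nonneg_left hr hρ.le
  have hup : ρ * |x - y| ≤ ρ * R := mul_le_mul_of_nonneg_left hR hρ.le
  have : 0 ≤ ρ * R := mul_nonneg hρ.le ((abs_nonneg _).trans hR)
  constructor
  · have := abs_sub_abs_le_abs_sub (ρ * (x - y)) (x' - y')
    rw [abs_sub_comm (ρ * (x - y))] at this
    linarith
  · have := abs_sub_abs_le_abs_sub (x' - y') (ρ * (x - y))
    linarith

lemma AssouadCover.packingBound {ι : Type*} {E : Set ℝ} {u C : ℝ} (hE : AssouadCover E u C)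
    (hC : 0 ≤ C) {v w : ι → ℝ} (hw : ∀ q, w q ∈ E) {ρ r₀ c : ℝ} (hρ : 0 < ρ) (hr₀ : 0 < r₀)
    (hclose : ∀ q, |w q - c - ρ * v q| ≤ ρ * (r₀ / 4)) :
    PackingBound v r₀ (C * 8 ^ u) u := by
  intro D hD r R hr hrR hsep hR
  have hr0 : 0 < r := hr₀.trans_le hr
  have hR0 : 0 < R := hr0.trans_le hrR
  rcases D.eq_empty_or_nonempty with rfl | hne
  · rw [Finset.card_empty, Nat.cast_zero]
    positivity
  choose q hq using fun x : D => hD x.2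
  have hclose' (x : D) : |w (q x) - c - ρ * x| ≤ ρ * (r / 4) := by
    rw [← hq x]
    exact (hclose (q x)).trans (by gcongr)
  have hlow (x y : D) (hxy : x ≠ y) : ρ * r / 4 < |w (q x) - w (q y)| := by
    have := (mul_abs_sub_le_and_le_of_abs_sub_le hρ (hclose' x) (hclose' y)
      (hsep x x.2 y y.2 (Subtype.coe_injective.ne hxy)) (hR x x.2 y y.2)).1
    have : 0 < ρ * r := by positivity
    linarith
  have hup (x y : D) : |w (q x) - w (q y)| ≤ 2 * ρ * R := by
    rcases eq_or_ne x y with rfl | hxy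
    · rw [sub_self, abs_zero]
      positivity
    · exact (mul_abs_sub_le_and_le_of_abs_sub_le hρ (hclose' x) (hclose' y)
        (hsep x x.2 y y.2 (Subtype.coe_injective.ne hxy)) (hR x x.2 y y.2)).2
  have hinj : Function.Injective fun x => w (q x) := fun x y hxy => by
    by_contra hne
    have := hlow x y hne
    rw [sub_eq_zero.2 hxy, abs_zero] at this
    exact this.not_ge (by positivity)
  have hratio : 8 * (R / r) = 2 * ρ * R / (ρ * r / 4) := by
    field_simp
    ring
  rw [mul_assoc, ← Real.mul_rpow (by norm_num) (by positivity), hratio, ← Finset.card_attach,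
    ← Finset.card_image_of_injective _ hinj]
  have : ρ * r ≤ ρ * R := by gcongr
  have : 0 < ρ * r := by positivity
  refine hE.card_le ?_ (hne.attach.image _) (by positivity) (by linarith) ?_ ?_ <;>
    simp only [Finset.forall_mem_image]
  · exact fun x _ => hw (q x)
  · exact fun x _ y _ hxy => hlow x y fun h => hxy (by rw [h])
  · exact fun x _ y _ => hup x y

lemma abs_rpow_add_sub_le {x p M Λ ρ b : ℝ} (hx : 0 < x) (hp : 0 ≤ p) (hpM : p ≤ M)
    (hΛ : |Real.log x| ≤ Λ) (hρ : 0 < ρ) (hρΛ : ρ * Λ ≤ 1) (hb : b ∈ Ico 0 1) :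
    |x ^ (p + ρ * b) - x ^ p - ρ * (x ^ p * Real.log x * b)| ≤
      ρ * (ρ * (Real.exp (M * Λ) * Λ ^ 2)) := by
  have hfactor : x ^ (p + ρ * b) - x ^ p - ρ * (x ^ p * Real.log x * b) =
      x ^ p * (Real.exp (Real.log x * (ρ * b)) - 1 - Real.log x * (ρ * b)) := by
    rw [Real.rpow_add hx, Real.rpow_def_of_pos hx (ρ * b)]
    ring
  have hlog : |Real.log x * (ρ * b)| ≤ ρ * Λ :=
    abs_log_mul_le (mul_nonneg hρ.le hb.1) (mul_le_of_le_one_right hρ.le hb.2.le) hΛ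
  have hexp : |Real.exp (Real.log x * (ρ * b)) - 1 - Real.log x * (ρ * b)| ≤ (ρ * Λ) ^ 2 :=
    (Real.abs_exp_sub_one_sub_id_le (hlog.trans hρΛ)).trans <|
      sq_le_sq.2 (hlog.trans (le_abs_self _))
  calc _ = x ^ p * |Real.exp (Real.log x * (ρ * b)) - 1 - Real.log x * (ρ * b)| := by
        rw [hfactor, abs_mul, abs_of_pos (Real.rpow_pos_of_pos hx p)]
    _ ≤ Real.exp (M * Λ) * (ρ * Λ) ^ 2 :=
        mul_le_mul (rpow_le_exp hx hp hpM hΛ) hexp (abs_nonneg _) (Real.exp_nonneg _)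
    _ = _ := by ring

lemma dyad_two_pow_mul_sub (ℓ n : ℕ) (m : ℤ) (y : ℝ) :
    dyad n (2 ^ ℓ * y - m) = dyad (ℓ + n) y - 2 ^ n * m := by
  unfold dyad
  have hscale : (2 : ℝ) ^ n * (2 ^ ℓ * y - m) = 2 ^ (ℓ + n) * y - ((2 ^ n * m : ℤ) : ℝ) := by
    push_cast
    ring
  rw [hscale, Int.floor_sub_intCast]

lemma exists_rescaled_finset_of_not_branchingLE {F : Set ℝ} {ℓ n : ℕ} {q : ℝ} (hq : 0 ≤ q)
    (hF : ¬ BranchingLE F ℓ n q) :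
    ∃ (m : ℤ) (A : Finset ℝ), A.Nonempty ∧ (∀ a ∈ A, a ∈ Ico 0 1) ∧ Set.InjOn (dyad n) A ∧
      q ≤ A.card ∧ ∀ a ∈ A, (m + a) / 2 ^ ℓ ∈ F := by
  classical
  unfold BranchingLE at hF
  push Not at hF
  obtain ⟨m, Z, hZ, hcard⟩ := hF
  choose y hyF hyz hym using fun z : Z => hZ z z.2
  have hdyad (z : Z) : dyad n (2 ^ ℓ * y z - m) = z - 2 ^ n * m := by
    rw [dyad_two_pow_mul_sub, hyz]
  have hdyad_inj (z z' : Z) (h : dyad n (2 ^ ℓ * y z - m) = dyad n (2 ^ ℓ * y z' - m)) :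
      z = z' := by
    rw [hdyad, hdyad] at h
    exact Subtype.ext (by linarith)
  have hcardA : (Finset.univ.image fun z : Z => 2 ^ ℓ * y z - m).card = Z.card := by
    rw [Finset.card_image_of_injective _ fun z z' h => hdyad_inj z z' (congrArg (dyad n) h),
      Finset.card_univ, Fintype.card_coe]
  refine ⟨m, Finset.univ.image fun z : Z => 2 ^ ℓ * y z - m, ?_, ?_, ?_, ?_, ?_⟩
  · rw [← Finset.card_pos, hcardA]
    exact_mod_cast hq.trans_lt hcard
  · simp only [Finset.forall_mem_image]
    intro z _
    have hfloor : ⌊2 ^ ℓ * y z⌋ = m := hym z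
    rw [Int.floor_eq_iff] at hfloor
    exact ⟨by linarith, by linarith⟩
  · rw [Finset.coe_image]
    rintro _ ⟨z, _, rfl⟩ _ ⟨z', _, rfl⟩ h
    rw [hdyad_inj z z' h]
  · rw [hcardA]
    exact hcard.le
  · simp only [Finset.forall_mem_image]
    intro z _
    rw [add_sub_cancel, mul_div_cancel_left₀ _ (by positivity)]
    exact hyF z

lemma exists_rescaled_finset {F : Set ℝ} (hpos : F ⊆ Ioi (0 : ℝ)) {M : ℕ} (hM : ∀ x ∈ F, x ≤ M)
    {s : ℝ} (hs : 0 ≤ s) (hsF : s < assouadDim F) {n : ℕ} (hn : 1 ≤ n) (ℓ₀ : ℕ) :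
    ∃ ℓ ≥ ℓ₀, ∃ (p : ℝ) (A : Finset ℝ), 0 ≤ p ∧ p ≤ M ∧ (∀ a ∈ A, a ∈ Ico 0 1) ∧
      Set.InjOn (dyad n) A ∧ (2 : ℝ) ^ (s * n) ≤ A.card ∧ ∀ a ∈ A, p + 1 / 2 ^ ℓ * a ∈ F := by
  obtain ⟨ℓ, hℓ, hbranch⟩ := exists_not_branchingLE_of_lt_assouadDim
    (fun x hx => (abs_of_pos (hpos hx)).trans_le (hM x hx)) hs hsF hn ℓ₀
  obtain ⟨m, A, ⟨a, ha⟩, hA, hinj, hcard, hAF⟩ :=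
    exists_rescaled_finset_of_not_branchingLE (by positivity) hbranch
  have h2ℓ : (0 : ℝ) < 2 ^ ℓ := by positivity
  have hm : 0 ≤ m := by
    have : 0 < m + a := (div_pos_iff_of_pos_right h2ℓ).1 (hpos (hAF a ha))
    have : (-1 : ℝ) < m := by linarith [(hA a ha).2]
    have : -1 < m := by exact_mod_cast this
    omega
  refine ⟨ℓ, hℓ, m / 2 ^ ℓ, A, by positivity, ?_, hA, hinj, hcard, fun a ha => ?_⟩
  · exact (div_le_div_of_nonneg_right (le_add_of_nonneg_right (hA a ha).1) h2ℓ.le).trans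
      (hM _ (hAF a ha))
  · rw [one_div_mul_eq_div, ← add_div]
    exact hAF a ha

lemma exists_forall_ge_one_div_two_pow_mul_le (a b : ℝ) {ε δ : ℝ} (hε : 0 < ε) (hδ : 0 < δ) :
    ∃ ℓ₀ : ℕ, ∀ ℓ ≥ ℓ₀, 1 / 2 ^ ℓ * a ≤ ε ∧ 1 / 2 ^ ℓ * b ≤ δ := by
  obtain ⟨ℓ₀, hℓ₀⟩ := pow_unbounded_of_one_lt (max (a / ε) (b / δ)) (one_lt_two (α := ℝ))
  refine ⟨ℓ₀, fun ℓ hℓ => ?_⟩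
  have hpow : max (a / ε) (b / δ) ≤ 2 ^ ℓ := hℓ₀.le.trans (pow_le_pow_right₀ one_le_two hℓ)
  rw [max_le_iff, div_le_iff₀ hε, div_le_iff₀ hδ] at hpow
  constructor <;> rw [one_div_mul_eq_div, div_le_iff₀' (by positivity)]
  exacts [hpow.1, hpow.2]

/-- The set `F ^ F + F`. -/
def expSum (F : Set ℝ) : Set ℝ := {w : ℝ | ∃ x ∈ F, ∃ y ∈ F, ∃ z ∈ F, w = x ^ y + z}

lemma AssouadCover.packingBound_of_expSum {F : Set ℝ} {u C : ℝ} (hE : AssouadCover (expSum F) u C)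
    (hC : 0 ≤ C) {A : Finset ℝ} (hA : ∀ a ∈ A, a ∈ Ico 0 1) {p ρ M Λ r₀ x : ℝ} (hp : 0 ≤ p)
    (hpM : p ≤ M) (hρ : 0 < ρ) (hAF : ∀ a ∈ A, p + ρ * a ∈ F) (hxF : x ∈ F) (hx : 0 < x)
    (hΛ : |Real.log x| ≤ Λ) (hρΛ : ρ * Λ ≤ 1) (hr₀ : 0 < r₀)
    (hρr₀ : ρ * (Real.exp (M * Λ) * Λ ^ 2) ≤ r₀ / 4) :
    PackingBound (fun q : A × A => (q.1 : ℝ) + x ^ p * Real.log x * q.2) r₀ (C * 8 ^ u) u := by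
  refine hE.packingBound hC
    (w := fun q : A × A => x ^ (p + ρ * (q.2 : ℝ)) + (p + ρ * (q.1 : ℝ))) (c := x ^ p + p)
    (fun q => ⟨x, hxF, _, hAF _ q.2.2, _, hAF _ q.1.2, rfl⟩) hρ hr₀ fun q => ?_
  calc _ = |x ^ (p + ρ * (q.2 : ℝ)) - x ^ p - ρ * (x ^ p * Real.log x * q.2)| := by
        congr 1
        ring
    _ ≤ ρ * (ρ * (Real.exp (M * Λ) * Λ ^ 2)) :=
        abs_rpow_add_sub_le hx hp hpM hΛ hρ hρΛ (hA _ q.2.2)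
    _ ≤ ρ * (r₀ / 4) := by gcongr

lemma abs_rpow_mul_log_le {x p M Λ : ℝ} (hx : 0 < x) (hp : 0 ≤ p) (hpM : p ≤ M)
    (hΛ : |Real.log x| ≤ Λ) : |x ^ p * Real.log x| ≤ Real.exp (M * Λ) * Λ := by
  rw [abs_mul, abs_of_pos (Real.rpow_pos_of_pos hx p)]
  exact mul_le_mul (rpow_le_exp hx hp hpM hΛ) hΛ (abs_nonneg _) (Real.exp_nonneg _)

lemma not_assouadCover_expSum {F : Set ℝ} (hpos : F ⊆ Ioi (0 : ℝ)) {M : ℕ}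
    (hM : ∀ x ∈ F, x ≤ M) (hH : 0 < dimH F) {u C : ℝ} (hu0 : 0 ≤ u) (hC : 0 < C)
    (hu1 : u < 1) (hu2 : u < 2 * assouadDim F) : ¬ AssouadCover (expSum F) u C := by
  intro hcover
  obtain ⟨s, hus, hsF⟩ := exists_between (show u / 2 < assouadDim F by linarith)
  obtain ⟨τ, h, Λ, hτ, hh, hslopes⟩ := exists_dyadicContentGE_image_rpow_mul_log hpos M hH
  obtain ⟨B, hB⟩ := exists_nat_ge (Real.exp (M * Λ) * Λ)
  obtain ⟨n, N, hn, hexpand⟩ := exists_not_packingBound (s := s) (C := C * 8 ^ u) hu1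
    (by linarith) (by positivity) hτ hh B
  obtain ⟨ℓ₀, hℓ₀⟩ := exists_forall_ge_one_div_two_pow_mul_le Λ (Real.exp (M * Λ) * Λ ^ 2)
    one_pos (show (0 : ℝ) < 1 / 2 ^ N / 4 by positivity)
  obtain ⟨ℓ, hℓ, p, A, hp, hpM, hA, hinj, hcard, hAF⟩ :=
    exists_rescaled_finset hpos hM (by linarith) hsF hn ℓ₀
  obtain ⟨G, hGF, hGΛ, hcontent⟩ := hslopes p hp hpM
  obtain ⟨_, ⟨x, hx, rfl⟩, hnot⟩ := hexpand A _ hA hinj hcard (forall_mem_image.2 fun x hx =>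
    (abs_rpow_mul_log_le (hpos (hGF hx)) hp hpM (hGΛ x hx)).trans hB) hcontent
  exact hnot <| hcover.packingBound_of_expSum hC.le hA hp hpM (by positivity) hAF (hGF hx)
    (hpos (hGF hx)) (hGΛ x hx) (hℓ₀ ℓ hℓ).1 (by positivity) (hℓ₀ ℓ hℓ).2

end Conclusion

/-- **Theorem 3.10** (sum-product, second part): for non-empty bounded `F ⊆ (0,∞)` with
`dim_H F > 0`, `dim_A (F^F + F) ≥ min{2 dim_A F, 1}`. -/
theorem assouad_exp_product (F : Set ℝ) (hne : F.Nonempty) (hbd : Bornology.IsBounded F)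
    (hpos : F ⊆ Set.Ioi (0 : ℝ)) (hH : 0 < dimH F) :
    min (2 * assouadDim F) 1 ≤
      assouadDim {w : ℝ | ∃ x ∈ F, ∃ y ∈ F, ∃ z ∈ F, w = x ^ y + z} := by
  obtain ⟨R, hR⟩ := hbd.exists_norm_le
  obtain ⟨M, hM⟩ := exists_nat_ge R
  rw [assouadDim_eq {w : ℝ | ∃ x ∈ F, ∃ y ∈ F, ∃ z ∈ F, w = x ^ y + z}]
  refine le_csInf ⟨1, zero_le_one, 4, by norm_num, assouadCover_one _⟩ ?_
  rintro u ⟨hu0, C, hC, hcover⟩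
  by_contra! hlt
  obtain ⟨hu2, hu1⟩ := lt_min_iff.1 hlt
  exact not_assouadCover_expSum hpos
    (fun x hx => ((le_abs_self x).trans (hR x hx)).trans hM) hH hu0 hC hu1 hu2 hcover

end
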